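/- arXiv:2605.17136 — 2 statements merged into one kernel-verified Lean document; each statement's English description precedes it below -/
import Mathlib

section
/- Let m ≥ 3 and let μ be a probability distribution on {0,1}^{E_m} supported exactly on Equiv_m (positive on every element of Equiv_m, zero elsewhere) which is invariant under the action of permutations of [m] on pairs. Let q = Pr_{x ∼ μ}[x_{{i,j}} = 1] (by symmetry this is the same for every pair {i,j}), and let ν be the product distribution on {0,1}^p in which each coordinate independently equals 1 with probability q. Then there exists ε₀ > 0 (depending on m and μ) such that for every ε with 0 < ε < ε₀ there exists δ > 0 such that for every p the following holds: if (f_{{i,j}})_{i<j}, with f_{{i,j}} : {0,1}^p → {0,1}, satisfy Pr_{x^(1),…,x^(p) i.i.d. ∼ μ}[the vector whose {i,j}-coordinate is f_{{i,j}}(x^(1)_{{i,j}},…,x^(p)_{{i,j}}) belongs to Equiv_m] ≥ 1 − δ, and moreover Pr_{x ∼ ν}[f_{{i,j}}(x) = 0] < 1 − ε for all i < j, then there exists a set S ⊆ [p] such that for all i < j, Pr_{x ∼ ν}[f_{{i,j}}(x) = ⋀_{s ∈ S} x_s] ≥ 1 − ε. -/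
/-- The index set `E_m` of unordered pairs of distinct elements of `[m]`, encoded as
ordered pairs `(i,j)` with `i < j`. -/
abbrev PairIdx (m : ℕ) := {q : Fin m × Fin m // q.1 < q.2}

/-- Look up the coordinate of `x` at the unordered pair `{i,j}` (junk value `false`
if `i = j`). -/
def pget {m : ℕ} (x : PairIdx m → Bool) (i j : Fin m) : Bool :=
  if h : i < j then x ⟨(i, j), h⟩ else if h' : j < i then x ⟨(j, i), h'⟩ else false

/-- The predicate `Equiv_m`: the vector encodes a relation closed under transitivity. -/
def IsEquivVec {m : ℕ} (x : PairIdx m → Bool) : Prop :=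
  ∀ i j k : Fin m, i ≠ j → j ≠ k → i ≠ k →
    pget x i j = true → pget x j k = true → pget x i k = true

open scoped Classical in
/-- Probability of an event for `p` i.i.d. samples from the distribution `μ`
(given by its probability mass function) on a finite type. -/
noncomputable def prodPr {α : Type*} [Fintype α] (μ : α → ℝ) (p : ℕ)
    (P : (Fin p → α) → Prop) : ℝ :=
  ∑ x : Fin p → α, if P x then ∏ k, μ (x k) else 0

open scoped Classical in
/-- Probability of an event under the product distribution on `{0,1}^p` in which each
coordinate is independently `1` with probability `q`. -/
noncomputable def nuPr (q : ℝ) (p : ℕ) (P : (Fin p → Bool) → Prop) : ℝ :=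
  ∑ y : Fin p → Bool, if P y then ∏ k, (if y k = true then q else 1 - q) else 0


noncomputable def Ex {Ω : Type} [Fintype Ω] {n : ℕ} (w : Fin n → Ω → ℝ)
    (F : (Fin n → Ω) → ℝ) : ℝ :=
  ∑ x : Fin n → Ω, (∏ k, w k (x k)) * F x

section ExBasics
variable {Ω : Type} [Fintype Ω] {n : ℕ}

theorem Ex_zero (w : Fin 0 → Ω → ℝ) (F : (Fin 0 → Ω) → ℝ) : Ex w F = F Fin.elim0 := by
  unfold Ex
  simp
  congr 1

theorem Ex_succ (w : Fin (n+1) → Ω → ℝ) (F : (Fin (n+1) → Ω) → ℝ) :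
    Ex w F = ∑ a, w 0 a * Ex (fun k => w k.succ) (fun x => F (Fin.cons a x)) := by
  unfold Ex
  rw [← (Fin.consEquiv (fun _ : Fin (n+1) => Ω)).sum_comp, Fintype.sum_prod_type]
  refine Finset.sum_congr rfl fun a _ => ?_
  rw [Finset.mul_sum]
  refine Finset.sum_congr rfl fun x _ => ?_
  simp [Fin.consEquiv, Fin.prod_univ_succ, mul_assoc]

theorem Ex_insertNth (k : Fin (n+1)) (w : Fin (n+1) → Ω → ℝ) (F : (Fin (n+1) → Ω) → ℝ) :
    Ex w F = ∑ a, w k a * Ex (fun j => w (k.succAbove j))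
      (fun x => F (k.insertNth a x)) := by
  unfold Ex
  rw [← (Fin.insertNthEquiv (fun _ : Fin (n+1) => Ω) k).sum_comp, Fintype.sum_prod_type]
  refine Finset.sum_congr rfl fun a _ => ?_
  rw [Finset.mul_sum]
  refine Finset.sum_congr rfl fun x _ => ?_
  simp [Fin.insertNthEquiv, Fin.prod_univ_succAbove _ k, mul_assoc]

theorem Ex_update [DecidableEq Ω] (w : Fin n → Ω → ℝ) (k : Fin n) (hk : ∑ a, w k a = 1) (l : Ω → ℝ)
    (F : (Fin n → Ω) → ℝ) :
    Ex (Function.update w k l) F = ∑ a, l a * Ex w (fun x => F (Function.update x k a)) := by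
  cases n with
  | zero => exact k.elim0
  | succ n =>
    rw [Ex_insertNth k]
    refine Finset.sum_congr rfl fun a _ => ?_
    rw [Ex_insertNth k w]
    simp only [Function.update_self]
    congr 1
    simp only [Fin.update_insertNth]
    rw [← Finset.sum_mul, hk, one_mul]
    congr 1
    funext j
    simp

theorem Ex_add (w : Fin n → Ω → ℝ) (F G : (Fin n → Ω) → ℝ) :
    Ex w (fun x => F x + G x) = Ex w F + Ex w G := by
  simp [Ex, mul_add, Finset.sum_add_distrib]

theorem Ex_sub (w : Fin n → Ω → ℝ) (F G : (Fin n → Ω) → ℝ) :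
    Ex w (fun x => F x - G x) = Ex w F - Ex w G := by
  simp [Ex, mul_sub, Finset.sum_sub_distrib]

theorem Ex_smul (w : Fin n → Ω → ℝ) (c : ℝ) (F : (Fin n → Ω) → ℝ) :
    Ex w (fun x => c * F x) = c * Ex w F := by
  simp only [Ex, Finset.mul_sum]
  refine Finset.sum_congr rfl fun x _ => by ring

theorem Ex_sum {ι : Type*} (s : Finset ι) (w : Fin n → Ω → ℝ) (F : ι → (Fin n → Ω) → ℝ) :
    Ex w (fun x => ∑ i ∈ s, F i x) = ∑ i ∈ s, Ex w (F i) := by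
  simp only [Ex, Finset.mul_sum]
  rw [Finset.sum_comm]

theorem Ex_const (w : Fin n → Ω → ℝ) (h1 : ∀ k, ∑ a, w k a = 1) (c : ℝ) :
    Ex w (fun _ => c) = c := by
  induction n with
  | zero => rw [Ex_zero]
  | succ n ih =>
    rw [Ex_succ]
    simp only [ih (fun k => w k.succ) (fun k => h1 _)]
    rw [← Finset.sum_mul, h1, one_mul]

theorem Ex_mono (w : Fin n → Ω → ℝ) (h0 : ∀ k a, 0 ≤ w k a) {F G : (Fin n → Ω) → ℝ}
    (h : ∀ x, F x ≤ G x) : Ex w F ≤ Ex w G := by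
  unfold Ex
  refine Finset.sum_le_sum fun x _ => ?_
  exact mul_le_mul_of_nonneg_left (h x) (Finset.prod_nonneg fun k _ => h0 _ _)

theorem Ex_nonneg (w : Fin n → Ω → ℝ) (h0 : ∀ k a, 0 ≤ w k a) {F : (Fin n → Ω) → ℝ}
    (h : ∀ x, 0 ≤ F x) : 0 ≤ Ex w F := by
  unfold Ex
  exact Finset.sum_nonneg fun x _ => mul_nonneg (Finset.prod_nonneg fun k _ => h0 _ _) (h x)

theorem Ex_le_one (w : Fin n → Ω → ℝ) (h0 : ∀ k a, 0 ≤ w k a) (h1 : ∀ k, ∑ a, w k a = 1)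
    {F : (Fin n → Ω) → ℝ} (h : ∀ x, F x ≤ 1) : Ex w F ≤ 1 := by
  calc _ ≤ Ex w (fun _ => (1:ℝ)) := Ex_mono w h0 h
    _ = 1 := Ex_const w h1 1

theorem Ex_compl (w : Fin n → Ω → ℝ) (h1 : ∀ k, ∑ a, w k a = 1) (F : (Fin n → Ω) → ℝ) :
    Ex w (fun x => 1 - F x) = 1 - Ex w F := by
  rw [Ex_sub, Ex_const w h1]

theorem Ex_abs_le (w : Fin n → Ω → ℝ) (h0 : ∀ k a, 0 ≤ w k a) (F : (Fin n → Ω) → ℝ) :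
    |Ex w F| ≤ Ex w (fun x => |F x|) := by
  unfold Ex
  refine (Finset.abs_sum_le_sum_abs _ _).trans (Finset.sum_le_sum fun x _ => ?_)
  rw [abs_mul, abs_of_nonneg (Finset.prod_nonneg fun k _ => h0 _ _)]

theorem Ex_cs (w : Fin n → Ω → ℝ) (h0 : ∀ k a, 0 ≤ w k a) (F G : (Fin n → Ω) → ℝ) :
    (Ex w (fun x => F x * G x))^2 ≤ Ex w (fun x => F x ^ 2) * Ex w (fun x => G x ^2) := by
  unfold Ex
  have hp : ∀ x : Fin n → Ω, 0 ≤ ∏ k, w k (x k) := fun x => Finset.prod_nonneg fun k _ => h0 _ _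
  refine Finset.sum_sq_le_sum_mul_sum_of_sq_le_mul _ (fun x _ => ?_) (fun x _ => ?_) (fun x _ => ?_)
  · exact mul_nonneg (hp x) (sq_nonneg _)
  · exact mul_nonneg (hp x) (sq_nonneg _)
  · exact le_of_eq (by ring)

theorem Ex_push {Ω' : Type} [Fintype Ω'] [DecidableEq Ω'] (p : Ω → Ω') (w : Fin n → Ω → ℝ)
    (F : (Fin n → Ω') → ℝ) :
    Ex w (fun x => F (fun k => p (x k))) =
      Ex (fun k b => ∑ a, if p a = b then w k a else 0) F := by
  induction n with
  | zero => rw [Ex_zero, Ex_zero]; congr 1; funext x; exact x.elim0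
  | succ n ih =>
    rw [Ex_succ, Ex_succ]
    simp only [Finset.sum_mul]
    rw [Finset.sum_comm]
    refine Finset.sum_congr rfl fun a _ => ?_
    rw [Finset.sum_eq_single (p a)]
    · rw [if_pos rfl, ← ih (fun k => w k.succ) (fun x => F (Fin.cons (p a) x))]
      congr 2
      funext x
      congr 1
      funext k
      refine Fin.cases ?_ (fun j => ?_) k <;> simp
    · intro b _ hb
      rw [if_neg (Ne.symm hb), zero_mul]
    · simp

theorem Ex_piecewise [DecidableEq Ω] (J : Finset (Fin n)) (w1 w2 : Fin n → Ω → ℝ)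
    (h1 : ∀ k, ∑ a, w1 k a = 1) (h2 : ∀ k, ∑ a, w2 k a = 1) (F : (Fin n → Ω) → ℝ) :
    Ex (J.piecewise w1 w2) F = Ex w1 (fun u => Ex w2 (fun v => F (J.piecewise u v))) := by
  induction J using Finset.induction_on generalizing F with
  | empty =>
    simp only [Finset.piecewise_empty]
    rw [Ex_const w1 h1]
  | insert k J hk ih =>
    rw [Finset.piecewise_insert, Ex_update]
    · have : ∀ a, Ex (J.piecewise w1 w2) (fun x => F (Function.update x k a))
          = Ex w1 (fun u => Ex w2 (fun v => F (Function.update (J.piecewise u v) k a))) :=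
        fun a => ih _
      simp only [this]
      rw [show w1 = Function.update w1 k (w1 k) by simp, Ex_update _ _ (by simp [h1])]
      simp only [Function.update_eq_self]
      refine Finset.sum_congr rfl fun a _ => ?_
      congr 2
      funext u
      congr 1
      funext v
      congr 1
      rw [Finset.piecewise_insert]
      funext j
      by_cases hj : j = k
      · subst hj; simp
      · simp only [Function.update_of_ne hj, Finset.piecewise]
    · by_cases h : k ∈ J <;> simp [h, h1, h2]

theorem Ex_pattern [DecidableEq Ω] (J : Finset (Fin n)) (w : Fin n → Ω → ℝ)
    (h0 : ∀ k a, 0 ≤ w k a) (h1 : ∀ k, ∑ a, w k a = 1) (u : Fin n → Ω) (m : ℝ) (hm : 0 ≤ m)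
    (hu : ∀ k ∈ J, m ≤ w k (u k)) (F : (Fin n → Ω) → ℝ) (hF : ∀ x, 0 ≤ F x) :
    m ^ J.card * Ex w (fun v => F (J.piecewise u v)) ≤ Ex w F := by
  induction J using Finset.induction_on generalizing F with
  | empty => simp
  | insert k J hk ih =>
    rw [Finset.card_insert_of_notMem hk, pow_succ, mul_assoc]
    have e : ∀ v : Fin n → Ω, F ((insert k J).piecewise u v) =
        F (Function.update (J.piecewise u v) k (u k)) := fun v => by rw [Finset.piecewise_insert]
    simp only [e]
    have step : m * Ex w (fun v => F (Function.update v k (u k))) ≤ Ex w F := by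
      conv_rhs => rw [show w = Function.update w k (w k) by simp, Ex_update _ _ (h1 k)]
      have hh := Finset.single_le_sum (f := fun a => w k a * Ex w (fun x => F (Function.update x k a)))
        (s := Finset.univ) (fun a _ => mul_nonneg (h0 _ _) (Ex_nonneg w h0 fun x => hF _))
        (Finset.mem_univ (u k))
      refine le_trans ?_ hh
      exact mul_le_mul_of_nonneg_right (hu k (Finset.mem_insert_self _ _))
        (Ex_nonneg w h0 fun x => hF _)
    have := ih (fun j hj => hu j (Finset.mem_insert_of_mem hj))
      (fun x => F (Function.update x k (u k))) (fun x => hF _)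
    calc _ = m * (m ^ J.card * Ex w (fun v => F (Function.update (J.piecewise u v) k (u k)))) := by ring
      _ ≤ _ := le_trans (mul_le_mul_of_nonneg_left this hm) step

theorem Ex_exists_pos (w : Fin n → Ω → ℝ) (h0 : ∀ k a, 0 ≤ w k a) (F : (Fin n → Ω) → ℝ)
    (h : 0 < Ex w F) : ∃ x, (∀ k, 0 < w k (x k)) ∧ 0 < F x := by
  by_contra hc
  push Not at hc
  refine absurd h (not_lt.2 ?_)
  unfold Ex
  refine Finset.sum_nonpos fun x _ => ?_
  by_cases hx : ∀ k, 0 < w k (x k)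
  · exact mul_nonpos_of_nonneg_of_nonpos (Finset.prod_nonneg fun k _ => h0 _ _) (hc x hx)
  · push Not at hx
    obtain ⟨k, hk⟩ := hx
    rw [Finset.prod_eq_zero (Finset.mem_univ k) (le_antisymm hk (h0 _ _)), zero_mul]

end ExBasics

def Good (A : ℕ) (l : Bool × Bool × Bool → ℝ) : Prop :=
  ∀ a b c : Bool → ℝ, (∀ i, 0 ≤ a i) → (∀ i, 0 ≤ b i) → (∀ i, 0 ≤ c i) →
    ((∑ i, l i * a i.1) * (∑ i, l i * b i.2.1) * (∑ i, l i * c i.2.2)) ^ A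
      ≤ ∑ i, l i * (a i.1 * b i.2.1 * c i.2.2) ^ A

theorem cons_map {α β : Type} {n : ℕ} (p : α → β) (a : α) (x : Fin n → α) :
    (fun k => p ((Fin.cons a x : Fin (n+1) → α) k)) = (Fin.cons (p a) (fun k => p (x k)) : Fin (n+1) → β) := by
  funext k
  refine Fin.cases ?_ (fun j => ?_) k <;> simp

theorem good_tensor (A : ℕ) {n : ℕ} (w : Fin n → Bool × Bool × Bool → ℝ)
    (h0 : ∀ k a, 0 ≤ w k a) (hg : ∀ k, Good A (w k))
    (F G H : (Fin n → Bool) → ℝ) (hF : ∀ x, 0 ≤ F x) (hG : ∀ x, 0 ≤ G x) (hH : ∀ x, 0 ≤ H x) :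
    (Ex w (fun x => F (fun k => (x k).1)) * Ex w (fun x => G (fun k => (x k).2.1))
      * Ex w (fun x => H (fun k => (x k).2.2))) ^ A ≤
    Ex w (fun x => (F (fun k => (x k).1) * G (fun k => (x k).2.1) * H (fun k => (x k).2.2)) ^ A) := by
  induction n with
  | zero => simp only [Ex_zero]; exact le_of_eq (by congr)
  | succ n ih =>
    simp only [Ex_succ w]
    have e1 : ∀ (i : Bool × Bool × Bool) (x : Fin n → Bool × Bool × Bool),
      (fun k => ((Fin.cons i x : Fin (n+1) → Bool × Bool × Bool) k).1) = (Fin.cons i.1 (fun k => (x k).1) : Fin (n+1) → Bool) :=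
      fun i x => cons_map (fun z => z.1) i x
    have e2 : ∀ (i : Bool × Bool × Bool) (x : Fin n → Bool × Bool × Bool),
      (fun k => ((Fin.cons i x : Fin (n+1) → Bool × Bool × Bool) k).2.1) = (Fin.cons i.2.1 (fun k => (x k).2.1) : Fin (n+1) → Bool) :=
      fun i x => cons_map (fun z => z.2.1) i x
    have e3 : ∀ (i : Bool × Bool × Bool) (x : Fin n → Bool × Bool × Bool),
      (fun k => ((Fin.cons i x : Fin (n+1) → Bool × Bool × Bool) k).2.2) = (Fin.cons i.2.2 (fun k => (x k).2.2) : Fin (n+1) → Bool) :=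
      fun i x => cons_map (fun z => z.2.2) i x
    simp only [e1, e2, e3]
    have h := hg 0
      (fun j => Ex (fun k => w k.succ) (fun x => F (Fin.cons j (fun k => (x k).1))))
      (fun j => Ex (fun k => w k.succ) (fun x => G (Fin.cons j (fun k => (x k).2.1))))
      (fun j => Ex (fun k => w k.succ) (fun x => H (Fin.cons j (fun k => (x k).2.2))))
      (fun j => Ex_nonneg _ (fun k a => h0 _ _) fun x => hF _)
      (fun j => Ex_nonneg _ (fun k a => h0 _ _) fun x => hG _)
      (fun j => Ex_nonneg _ (fun k a => h0 _ _) fun x => hH _)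
    refine h.trans (Finset.sum_le_sum fun i _ => mul_le_mul_of_nonneg_left ?_ (h0 _ _))
    exact ih (fun k => w k.succ) (fun k a => h0 _ _) (fun k => hg _)
      (fun x => F (Fin.cons i.1 x)) (fun x => G (Fin.cons i.2.1 x)) (fun x => H (Fin.cons i.2.2 x))
      (fun x => hF _) (fun x => hG _) (fun x => hH _)

def bw (q : ℝ) : Bool → ℝ := fun b => if b then q else 1 - q

theorem pow_lower (A : ℕ) (hA : 2 ≤ A) (x : ℝ) (hx : 0 ≤ x) :
    1 + A * x + (A * (A - 1) / 2) * x ^ 2 ≤ (1 + x) ^ A := by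
  induction A, hA using Nat.le_induction with
  | base => norm_num; nlinarith
  | succ k hk ih =>
    rw [pow_succ]
    have h2 : (2:ℝ) ≤ k := by exact_mod_cast hk
    have := mul_le_mul_of_nonneg_right ih (by linarith : 0 ≤ 1 + x)
    refine le_trans ?_ this
    push_cast
    have : 0 ≤ x ^ 3 * (k * (k - 1) / 2 : ℝ) := by
      apply mul_nonneg (by positivity)
      have : 0 ≤ (k:ℝ) - 1 := by linarith
      positivity
    nlinarith

/-- single variable moment lower bound -/
theorem moment_lower_aux (A : ℕ) (hA : 2 ≤ A) (q c B : ℝ) (hq0 : 0 < q) (hq1 : 0 < 1 - q)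
    (hcq : c ≤ q) (hcq' : c ≤ 1 - q) (hB : B = A * (A - 1) / 2) (hB0 : 0 ≤ B)
    (d : ℝ) (ht : 0 ≤ 1 + (1-q) * d) (hf : 0 ≤ 1 + -q * d) :
    1 + B * c * (q * (1 - q) * d ^ 2) ≤ q * (1 + (1-q) * d) ^ A + (1-q) * (1 + -q * d) ^ A := by
  have bern : ∀ y : ℝ, 0 ≤ 1 + y → 1 + A * y ≤ (1 + y)^A := fun y hy =>
    one_add_mul_le_pow (by linarith) A
  have hpl : ∀ x : ℝ, 0 ≤ x → 1 + A * x + B * x ^ 2 ≤ (1 + x) ^ A := by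
    intro x hx; rw [hB]; exact pow_lower A hA x hx
  rcases le_total 0 d with h | h
  · have p1 := mul_le_mul_of_nonneg_left (hpl ((1-q)*d) (by positivity)) hq0.le
    have p2 := mul_le_mul_of_nonneg_left (bern _ hf) hq1.le
    have key : B * c * (q * (1-q) * d^2) ≤ B * (1-q) * (q * (1-q) * d^2) := by gcongr
    linarith
  · have p1 := mul_le_mul_of_nonneg_left (bern _ ht) hq0.le
    have p2 := mul_le_mul_of_nonneg_left (hpl (-q*d) (by nlinarith)) hq1.le
    have key : B * c * (q * (1-q) * d^2) ≤ B * q * (q * (1-q) * d^2) := by gcongr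
    linarith

theorem moment_lower (A : ℕ) (hA : 2 ≤ A) (q c B : ℝ) (hq0 : 0 < q) (hq1 : 0 < 1 - q)
    (hcq : c ≤ q) (hcq' : c ≤ 1 - q) (hB : B = A * (A - 1) / 2) (hB0 : 0 ≤ B)
    (a : Bool → ℝ) (ha : ∀ i, 0 ≤ a i) (h1 : q * a true + (1 - q) * a false = 1) :
    1 + B * c * (q * (a true - 1)^2 + (1-q) * (a false - 1)^2)
      ≤ q * a true ^ A + (1-q) * a false ^ A := by
  obtain ⟨d, hd⟩ : ∃ d, d = a true - a false := ⟨_, rfl⟩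
  have ht : a true = 1 + (1-q) * d := by rw [hd]; linarith
  have hf : a false = 1 + (- q * d) := by rw [hd]; linarith
  have hft := ha true
  have hff := ha false
  rw [ht] at hft
  rw [hf] at hff
  have := moment_lower_aux A hA q c B hq0 hq1 hcq hcq' hB hB0 d hft hff
  rw [ht, hf]
  refine le_trans (le_of_eq ?_) this
  ring

theorem marg_of (l : Bool × Bool × Bool → ℝ) (q : ℝ)
    (m1 : ∀ j, ∑ i : Bool × Bool × Bool, (if i.1 = j then l i else 0) = bw q j) (a : Bool → ℝ) :
    ∑ i, l i * a i.1 = q * a true + (1-q) * a false := by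
  have h1 := m1 true
  have h2 := m1 false
  simp [Fintype.sum_prod_type, bw] at h1 h2 ⊢
  linear_combination a true * h1 + a false * h2

theorem marg_of2 (l : Bool × Bool × Bool → ℝ) (q : ℝ)
    (m1 : ∀ j, ∑ i : Bool × Bool × Bool, (if i.2.1 = j then l i else 0) = bw q j) (a : Bool → ℝ) :
    ∑ i, l i * a i.2.1 = q * a true + (1-q) * a false := by
  have h1 := m1 true
  have h2 := m1 false
  simp [Fintype.sum_prod_type, bw] at h1 h2 ⊢
  linear_combination a true * h1 + a false * h2

theorem marg_of3 (l : Bool × Bool × Bool → ℝ) (q : ℝ)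
    (m1 : ∀ j, ∑ i : Bool × Bool × Bool, (if i.2.2 = j then l i else 0) = bw q j) (a : Bool → ℝ) :
    ∑ i, l i * a i.2.2 = q * a true + (1-q) * a false := by
  have h1 := m1 true
  have h2 := m1 false
  simp [Fintype.sum_prod_type, bw] at h1 h2 ⊢
  linear_combination a true * h1 + a false * h2

theorem good_prod (xa xb xd pa pb pd : ℝ) (xa0 : 0 ≤ xa) (xb0 : 0 ≤ xb) (xd0 : 0 ≤ xd)
    (la : 1 + xa ≤ pa) (lb : 1 + xb ≤ pb) (ld : 1 + xd ≤ pd) :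
    1 + (xa + xb + xd) ≤ pa * pb * pd := by
  have h1 : 1 + (xa + xb) ≤ pa * pb := by nlinarith
  nlinarith

theorem good_cross (M x y z : ℝ) (hz : 0 ≤ z) (hzM : z ≤ M) :
    (x-1)+(y-1)+(z-1) - (1+M)*((x-1)^2+(y-1)^2+(z-1)^2) ≤ x*y*z-1 := by
  have q1 : -(M/2*((x-1)^2+(y-1)^2)) ≤ (x-1)*(y-1)*z := by
    have h1 : 0 ≤ z * ((x-1)+(y-1))^2 := by positivity
    have h2 : z * ((x-1)^2+(y-1)^2) ≤ M * ((x-1)^2+(y-1)^2) := by gcongr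
    linarith
  have hM : 0 ≤ M := hz.trans hzM
  have q2 := sq_nonneg ((x-1)+(z-1))
  have q3 := sq_nonneg ((y-1)+(z-1))
  have q4 : 0 ≤ M * (x-1)^2 := by positivity
  have q5 : 0 ≤ M * (y-1)^2 := by positivity
  have q6 : 0 ≤ M * (z-1)^2 := by positivity
  have q7 := sq_nonneg (x-1)
  have q8 := sq_nonneg (y-1)
  linarith

theorem good_pt (A : ℕ) (M x y z l t : ℝ) (hx : 0 ≤ x) (hy : 0 ≤ y) (hz : 0 ≤ z) (hzM : z ≤ M)
    (hl : 0 ≤ l) (hw : t ≤ l) :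
    l * (1 + A * ((x - 1) + (y - 1) + (z - 1)
        - (1 + M) * ((x - 1)^2 + (y - 1)^2 + (z - 1)^2)))
        + t * ((x * y * z)^A - (1 + A * (x * y * z - 1)))
        ≤ l * (x * y * z)^A := by
  have hbern : 0 ≤ (x*y*z)^A - (1 + A * (x*y*z-1)) := by
    have h0 : 0 ≤ x*y*z := by positivity
    have := one_add_mul_le_pow (a := x*y*z - 1) (by linarith) A
    rw [add_sub_cancel] at this
    linarith
  have h1 := mul_le_mul_of_nonneg_right hw hbern
  have h2 : l * (1 + A * ((x-1)+(y-1)+(z-1) - (1+M)*((x-1)^2+(y-1)^2+(z-1)^2)))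
    ≤ l * (1 + A * (x*y*z-1)) := by
    apply mul_le_mul_of_nonneg_left _ hl
    have := mul_le_mul_of_nonneg_left (good_cross M x y z hz hzM) (Nat.cast_nonneg (α := ℝ) A)
    linarith
  linarith

theorem good_norm (l : Bool × Bool × Bool → ℝ) (q s c M B : ℝ) (A : ℕ) (hA : 2 ≤ A)
    (hq0 : 0 < q) (hq1 : 0 < 1 - q) (hs0 : 0 < s) (hs : ∀ i, s ≤ l i)
    (hc0 : 0 < c) (hcq : c ≤ q) (hcq' : c ≤ 1 - q) (hMc : M * c = 1)
    (hB : B = A * (A - 1) / 2) (hB0 : 0 ≤ B) (hAM : A * (1 + M) ≤ s * B * c)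
    (m1 : ∀ j, ∑ i : Bool × Bool × Bool, (if i.1 = j then l i else 0) = bw q j)
    (m2 : ∀ j, ∑ i : Bool × Bool × Bool, (if i.2.1 = j then l i else 0) = bw q j)
    (m3 : ∀ j, ∑ i : Bool × Bool × Bool, (if i.2.2 = j then l i else 0) = bw q j)
    (a b d : Bool → ℝ) (ha : ∀ i, 0 ≤ a i) (hb : ∀ i, 0 ≤ b i) (hd : ∀ i, 0 ≤ d i)
    (ea : q * a true + (1-q) * a false = 1) (eb : q * b true + (1-q) * b false = 1)
    (ed : q * d true + (1-q) * d false = 1) :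
    1 ≤ ∑ i, l i * (a i.1 * b i.2.1 * d i.2.2) ^ A := by
  have la := moment_lower A hA q c B hq0 hq1 hcq hcq' hB hB0 a ha ea
  have lb := moment_lower A hA q c B hq0 hq1 hcq hcq' hB hB0 b hb eb
  have ld := moment_lower A hA q c B hq0 hq1 hcq hcq' hB hB0 d hd ed
  have bd : ∀ i, d i ≤ M := by
    intro i
    have h1 := hd true
    have h2 := hd false
    have hk : d i * c ≤ 1 := by
      cases i
      · nlinarith [mul_nonneg hq0.le h1]
      · nlinarith [mul_nonneg hq1.le h2]
    rw [← hMc] at hk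
    exact le_of_mul_le_mul_right hk hc0
  have hb01 : ∀ r, 0 ≤ bw q r ∧ bw q r ≤ 1 := by
    intro r; cases r <;> simp [bw] <;> constructor <;> linarith
  have pt : ∀ i : Bool × Bool × Bool, l i * (1 + A * ((a i.1 - 1) + (b i.2.1 - 1) + (d i.2.2 - 1)
        - (1 + M) * ((a i.1 - 1)^2 + (b i.2.1 - 1)^2 + (d i.2.2 - 1)^2)))
        + s * (bw q i.1 * bw q i.2.1 * bw q i.2.2) * ((a i.1 * b i.2.1 * d i.2.2)^A
          - (1 + A * (a i.1 * b i.2.1 * d i.2.2 - 1)))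
        ≤ l i * (a i.1 * b i.2.1 * d i.2.2)^A := by
    rintro ⟨i, j, k⟩
    apply good_pt A M _ _ _ _ _ (ha i) (hb j) (hd k) (bd k) (hs0.le.trans (hs _))
    refine le_trans ?_ (hs (i,j,k))
    have h1 := mul_le_one₀ (hb01 i).2 (hb01 j).1 (hb01 j).2
    have h2 := mul_le_one₀ h1 (hb01 k).1 (hb01 k).2
    exact mul_le_of_le_one_right hs0.le h2
  have S := Finset.sum_le_sum (s := Finset.univ) (fun i _ => pt i)
  refine le_trans ?_ S
  have T1 : ∑ i, l i * (1 + A * ((a i.1 - 1) + (b i.2.1 - 1) + (d i.2.2 - 1)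
        - (1 + M) * ((a i.1 - 1)^2 + (b i.2.1 - 1)^2 + (d i.2.2 - 1)^2)))
        = 1 - A * (1+M) * ((q * (a true - 1)^2 + (1-q) * (a false - 1)^2)
          + (q * (b true - 1)^2 + (1-q) * (b false - 1)^2)
          + (q * (d true - 1)^2 + (1-q) * (d false - 1)^2)) := by
    have r1 := marg_of l q m1 (fun j => 1 + A * ((a j - 1) - (1+M) * (a j - 1)^2))
    have r2 := marg_of2 l q m2 (fun j => A * ((b j - 1) - (1+M) * (b j - 1)^2))
    have r3 := marg_of3 l q m3 (fun j => A * ((d j - 1) - (1+M) * (d j - 1)^2))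
    have : ∀ i : Bool × Bool × Bool, l i * (1 + A * ((a i.1 - 1) + (b i.2.1 - 1) + (d i.2.2 - 1)
        - (1 + M) * ((a i.1 - 1)^2 + (b i.2.1 - 1)^2 + (d i.2.2 - 1)^2))) =
        l i * (1 + A * ((a i.1 - 1) - (1+M) * (a i.1 - 1)^2)) + l i * (A * ((b i.2.1 - 1) - (1+M) * (b i.2.1 - 1)^2))
        + l i * (A * ((d i.2.2 - 1) - (1+M) * (d i.2.2 - 1)^2)) := fun i => by ring
    simp only [this, Finset.sum_add_distrib, r1, r2, r3]
    linear_combination A * ea + A * eb + A * ed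
  have T2 : ∑ i : Bool × Bool × Bool, s * (bw q i.1 * bw q i.2.1 * bw q i.2.2) * ((a i.1 * b i.2.1 * d i.2.2)^A
          - (1 + A * (a i.1 * b i.2.1 * d i.2.2 - 1)))
        = s * ((q * a true ^ A + (1-q) * a false ^ A) * (q * b true ^ A + (1-q) * b false ^ A)
          * (q * d true ^ A + (1-q) * d false ^ A) - 1) := by
    have : ∀ P : ℝ, s * (P - 1) = s * (P - (1 - A) * 1 * 1 * 1
         - A * ((q * a true + (1-q) * a false) * (q * b true + (1-q) * b false) * (q * d true + (1-q) * d false))) := by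
      intro P
      rw [ea, eb, ed]; ring
    rw [this]
    simp only [Fintype.sum_prod_type, Fintype.sum_bool, bw, mul_pow, if_true, Bool.false_eq_true, if_false]
    ring
  rw [Finset.sum_add_distrib, T1, T2]
  generalize q * a true ^ A + (1-q) * a false ^ A = pa at *
  generalize q * b true ^ A + (1-q) * b false ^ A = pb at *
  generalize q * d true ^ A + (1-q) * d false ^ A = pd at *
  have Va0 : 0 ≤ (q * (a true - 1)^2 + (1-q) * (a false - 1)^2) := by positivity
  have Vb0 : 0 ≤ (q * (b true - 1)^2 + (1-q) * (b false - 1)^2) := by positivity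
  have Vd0 : 0 ≤ (q * (d true - 1)^2 + (1-q) * (d false - 1)^2) := by positivity
  generalize (q * (a true - 1)^2 + (1-q) * (a false - 1)^2) = Va at *
  generalize (q * (b true - 1)^2 + (1-q) * (b false - 1)^2) = Vb at *
  generalize (q * (d true - 1)^2 + (1-q) * (d false - 1)^2) = Vd at *
  have P := good_prod _ _ _ pa pb pd (by positivity) (by positivity) (by positivity) la lb ld
  have P' := mul_le_mul_of_nonneg_left P hs0.le
  have Q := mul_le_mul_of_nonneg_right hAM (by positivity : 0 ≤ Va + Vb + Vd)
  linarith

theorem good_of_full (l : Bool × Bool × Bool → ℝ) (q : ℝ) (hq0 : 0 < q) (hq1 : q < 1)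
    (hl : ∀ i, 0 < l i)
    (m1 : ∀ j, ∑ i : Bool × Bool × Bool, (if i.1 = j then l i else 0) = bw q j)
    (m2 : ∀ j, ∑ i : Bool × Bool × Bool, (if i.2.1 = j then l i else 0) = bw q j)
    (m3 : ∀ j, ∑ i : Bool × Bool × Bool, (if i.2.2 = j then l i else 0) = bw q j) :
    ∃ A : ℕ, 1 ≤ A ∧ Good A l := by
  obtain ⟨s, hs0, hs⟩ : ∃ s : ℝ, 0 < s ∧ ∀ i, s ≤ l i := by
    obtain ⟨i, hi⟩ := Finite.exists_min l
    exact ⟨l i, hl i, hi⟩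
  have hq1' : 0 < 1 - q := by linarith
  obtain ⟨c, hc0, hcq, hcq'⟩ : ∃ c, 0 < c ∧ c ≤ q ∧ c ≤ 1 - q :=
    ⟨min q (1-q), lt_min hq0 hq1', min_le_left _ _, min_le_right _ _⟩
  obtain ⟨M, hMc⟩ : ∃ M : ℝ, M * c = 1 := ⟨1 / c, by field_simp⟩
  obtain ⟨A, hA⟩ := exists_nat_ge (max 2 (1 + 2 * (1 + M) / (s * c)))
  have hA2 : (2:ℝ) ≤ A := (le_max_left _ _).trans hA
  have hA2' : 2 ≤ A := by exact_mod_cast hA2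
  have hA3 : (1 + M) ≤ s * c * (A - 1) / 2 := by
    have := (le_max_right _ _).trans hA
    have : 2 * (1 + M) / (s * c) ≤ A - 1 := by linarith
    rw [div_le_iff₀ (by positivity)] at this
    linarith
  refine ⟨A, by omega, ?_⟩
  have hB0 : 0 ≤ (A * (A - 1) / 2 : ℝ) := by
    have : 0 ≤ (A:ℝ) - 1 := by linarith
    positivity
  have hAM : A * (1 + M) ≤ s * (A * (A - 1) / 2 : ℝ) * c := by
    have := mul_le_mul_of_nonneg_left hA3 (Nat.cast_nonneg (α := ℝ) A)
    linarith
  have norm := good_norm l q s c M _ A hA2' hq0 hq1' hs0 hs hc0 hcq hcq' hMc rfl hB0 hAM m1 m2 m3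
  intro a b d ha hb hd
  rw [marg_of l q m1, marg_of2 l q m2, marg_of3 l q m3]
  set ma := q * a true + (1-q) * a false with hma
  set mb := q * b true + (1-q) * b false with hmb
  set md := q * d true + (1-q) * d false with hmd
  have n0 : 0 ≤ ∑ i, l i * (a i.1 * b i.2.1 * d i.2.2) ^ A :=
    Finset.sum_nonneg fun i _ => mul_nonneg (hl i).le
      (pow_nonneg (mul_nonneg (mul_nonneg (ha _) (hb _)) (hd _)) _)
  have ma0 : 0 ≤ ma := add_nonneg (mul_nonneg hq0.le (ha _)) (mul_nonneg hq1'.le (ha _))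
  have mb0 : 0 ≤ mb := add_nonneg (mul_nonneg hq0.le (hb _)) (mul_nonneg hq1'.le (hb _))
  have md0 : 0 ≤ md := add_nonneg (mul_nonneg hq0.le (hd _)) (mul_nonneg hq1'.le (hd _))
  have hA0 : A ≠ 0 := by omega
  rcases ma0.eq_or_lt with h | ha'
  · rw [← h]; simpa [hA0] using n0
  rcases mb0.eq_or_lt with h | hb'
  · rw [← h]; simpa [hA0] using n0
  rcases md0.eq_or_lt with h | hd'
  · rw [← h]; simpa [hA0] using n0
  have N := norm (fun i => a i / ma) (fun i => b i / mb) (fun i => d i / md)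
    (fun i => div_nonneg (ha i) ma0) (fun i => div_nonneg (hb i) mb0) (fun i => div_nonneg (hd i) md0)
    (by field_simp; exact hma.symm) (by field_simp; exact hmb.symm) (by field_simp; exact hmd.symm)
  have e : ∑ i, l i * (a i.1 / ma * (b i.2.1 / mb) * (d i.2.2 / md)) ^ A =
     (∑ i, l i * (a i.1 * b i.2.1 * d i.2.2) ^ A) / (ma * mb * md)^A := by
    rw [Finset.sum_div]
    refine Finset.sum_congr rfl fun i _ => ?_
    rw [mul_div_assoc, ← div_pow]
    congr 2
    field_simp
  rw [e, le_div_iff₀ (by positivity), one_mul] at N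
  exact N

noncomputable def TK {Ω : Type} [Fintype Ω] {n : ℕ} (K : Ω → Ω → ℝ)
    (F : (Fin n → Ω) → ℝ) (x : Fin n → Ω) : ℝ := Ex (fun k => K (x k)) F

def kcomp {Ω : Type} [Fintype Ω] (K L : Ω → Ω → ℝ) : Ω → Ω → ℝ := fun a c => ∑ b, K a b * L b c

structure Rev {Ω : Type} [Fintype Ω] (ν : Ω → ℝ) (K : Ω → Ω → ℝ) : Prop where
  pos : ∀ a, 0 < ν a
  sum : ∑ a, ν a = 1
  knn : ∀ a b, 0 ≤ K a b
  row : ∀ a, ∑ b, K a b = 1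
  rev : ∀ a b, ν a * K a b = ν b * K b a

section SSEsec
variable {Ω : Type} [Fintype Ω] {n : ℕ}

theorem Rev.stat {ν : Ω → ℝ} {K : Ω → Ω → ℝ} (h : Rev ν K) (b : Ω) : ∑ a, ν a * K a b = ν b := by
  simp_rw [h.rev _ b]
  rw [← Finset.mul_sum, h.row, mul_one]

theorem Rev.comp {ν : Ω → ℝ} {K : Ω → Ω → ℝ} (h : Rev ν K) : Rev ν (kcomp K K) where
  pos := h.pos
  sum := h.sum
  knn a b := Finset.sum_nonneg fun c _ => mul_nonneg (h.knn _ _) (h.knn _ _)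
  row a := by
    unfold kcomp
    rw [Finset.sum_comm]
    simp_rw [← Finset.mul_sum, h.row, mul_one]
    exact h.row a
  rev a b := by
    unfold kcomp
    rw [Finset.mul_sum, Finset.mul_sum]
    refine Finset.sum_congr rfl fun c _ => ?_
    rw [← mul_assoc, h.rev, mul_comm (ν c), mul_assoc, h.rev]; ring

theorem TK_cons (K : Ω → Ω → ℝ) (F : (Fin (n+1) → Ω) → ℝ) (a : Ω) (x : Fin n → Ω) :
    TK K F (Fin.cons a x) = ∑ b, K a b * TK K (fun y => F (Fin.cons b y)) x := by
  unfold TK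
  rw [Ex_succ]
  simp

theorem TK_selfadj {ν : Ω → ℝ} {K : Ω → Ω → ℝ} (h : Rev ν K) (F G : (Fin n → Ω) → ℝ) :
    Ex (fun _ => ν) (fun x => F x * TK K G x) = Ex (fun _ => ν) (fun x => TK K F x * G x) := by
  unfold TK Ex
  simp only [Finset.mul_sum, Finset.sum_mul]
  rw [Finset.sum_comm]
  refine Finset.sum_congr rfl fun x _ => Finset.sum_congr rfl fun y _ => ?_
  have : (∏ k, ν (y k)) * (∏ k, K (y k) (x k)) = (∏ k, ν (x k)) * (∏ k, K (x k) (y k)) := by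
    rw [← Finset.prod_mul_distrib, ← Finset.prod_mul_distrib]
    exact Finset.prod_congr rfl fun k _ => h.rev _ _
  linear_combination F y * G x * this

theorem TK_comp (K L : Ω → Ω → ℝ) (F : (Fin n → Ω) → ℝ) (x : Fin n → Ω) :
    TK K (TK L F) x = TK (kcomp K L) F x := by
  induction n with
  | zero => simp [TK, Ex_zero]
  | succ n ih =>
    rw [← Fin.cons_self_tail x]
    generalize x 0 = a
    generalize Fin.tail x = y
    rw [TK_cons, TK_cons]
    have e : ∀ b, TK K (fun y => TK L F (Fin.cons b y)) y
        = ∑ c, L b c * TK (kcomp K L) (fun z => F (Fin.cons c z)) y := by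
      intro b
      simp only [TK_cons]
      rw [show TK K (fun y => ∑ c, L b c * TK L (fun z => F (Fin.cons c z)) y) y
        = ∑ c, L b c * TK K (TK L (fun z => F (Fin.cons c z))) y from ?_]
      · simp only [ih]
      · conv_lhs => unfold TK
        rw [Ex_sum]
        refine Finset.sum_congr rfl fun c _ => ?_
        rw [Ex_smul]; rfl
    simp only [e, kcomp, Finset.mul_sum, Finset.sum_mul]
    rw [Finset.sum_comm]
    refine Finset.sum_congr rfl fun b _ => Finset.sum_congr rfl fun c _ => by ring

/-- Jensen for powers -/
theorem jen (ν : Ω → ℝ) (h0 : ∀ a, 0 ≤ ν a) (h1 : ∑ a, ν a = 1) (g : Ω → ℝ) :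
    (∑ a, ν a * g a)^2 ≤ ∑ a, ν a * g a ^2 := by
  have := Finset.sum_sq_le_sum_mul_sum_of_sq_le_mul Finset.univ (r := fun a => ν a * g a)
    (f := ν) (g := fun a => ν a * g a ^2) (fun a _ => h0 a)
    (fun a _ => mul_nonneg (h0 a) (sq_nonneg _)) (fun a _ => le_of_eq (by ring))
  rwa [h1, one_mul] at this

theorem bon1 {ν : Ω → ℝ} {K : Ω → Ω → ℝ} (h : Rev ν K) (e : ℝ) (he : 0 ≤ e)
    (hK : ∀ a b, |K a b - ν b| ≤ e * ν b) (f : Ω → ℝ) (U : ℝ) (hU : U = ∑ b, ν b * f b) :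
    ∑ a, ν a * (∑ b, K a b * f b)^4 ≤ U^4 + 8*e^2*(∑ b, ν b * (U^2 * (f b - U)^2))
      + 3*e^4 * (∑ b, ν b * (f b - U)^4) := by
  have hnn : ∀ a, 0 ≤ ν a := fun a => (h.pos a).le
  set V : Ω → ℝ := fun a => ∑ b, (K a b - ν b) * (f b - U) with hV
  have e1 : ∀ a, ∑ b, K a b * f b = U + V a := by
    intro a
    have r := h.row a
    have s := h.sum
    simp only [hV, sub_mul, mul_sub, Finset.sum_sub_distrib, ← Finset.sum_mul, r, s]
    rw [← hU]; ring
  have meanV : ∑ a, ν a * V a = 0 := by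
    simp only [hV, Finset.mul_sum]
    rw [Finset.sum_comm]
    apply Finset.sum_eq_zero
    intro b _
    have : ∑ a, ν a * ((K a b - ν b) * (f b - U)) = (∑ a, ν a * K a b - (∑ a, ν a) * ν b) * (f b - U) := by
      rw [Finset.sum_mul, ← Finset.sum_sub_distrib, Finset.sum_mul]
      exact Finset.sum_congr rfl fun a _ => by ring
    rw [this, h.stat, h.sum]; ring
  have V2 : ∀ a, V a ^ 2 ≤ e^2 * ∑ b, ν b * (f b - U)^2 := by
    intro a
    have a1 : |V a| ≤ e * ∑ b, ν b * |f b - U| := by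
      rw [Finset.mul_sum]
      refine (Finset.abs_sum_le_sum_abs _ _).trans (Finset.sum_le_sum fun b _ => ?_)
      rw [abs_mul, ← mul_assoc]
      exact mul_le_mul_of_nonneg_right (hK a b) (abs_nonneg _)
    have a2 := pow_le_pow_left₀ (abs_nonneg _) a1 2
    rw [sq_abs, mul_pow] at a2
    refine a2.trans (mul_le_mul_of_nonneg_left ?_ (by positivity))
    have := jen ν hnn h.sum (fun b => |f b - U|)
    simpa only [sq_abs] using this
  have S0 : 0 ≤ ∑ b, ν b * (f b - U)^2 := Finset.sum_nonneg fun b _ => mul_nonneg (hnn b) (sq_nonneg _)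
  have V4 : ∀ a, V a ^ 4 ≤ e^4 * ∑ b, ν b * (f b - U)^4 := by
    intro a
    have a2 := pow_le_pow_left₀ (sq_nonneg _) (V2 a) 2
    have := jen ν hnn h.sum (fun b => (f b - U)^2)
    have e4 : ∀ z : ℝ, (z^2)^2 = z^4 := fun z => by ring
    simp only [e4] at this
    rw [e4, mul_pow, e4] at a2
    exact a2.trans (mul_le_mul_of_nonneg_left this (by positivity))
  have pt : ∀ a, ν a * (∑ b, K a b * f b)^4 ≤ ν a * U^4 + 4 * U^3 * (ν a * V a) +
      ν a * (8 * U^2 * (e^2 * ∑ b, ν b * (f b - U)^2) + 3 * (e^4 * ∑ b, ν b * (f b - U)^4)) := by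
    intro a
    rw [e1]
    have h1 : (U + V a)^4 ≤ U^4 + 4*U^3 * V a + 8*U^2*V a^2 + 3 * V a^4 := by
      nlinarith [mul_nonneg (sq_nonneg (V a)) (sq_nonneg (U - V a))]
    have h2 := mul_le_mul_of_nonneg_left (V2 a) (by positivity : 0 ≤ 8 * U^2)
    have h3 := V4 a
    have := mul_le_mul_of_nonneg_left (show (U + V a)^4 ≤ U^4 + 4*U^3*V a + (8 * U^2 * (e^2 * ∑ b, ν b * (f b - U)^2) + 3 * (e^4 * ∑ b, ν b * (f b - U)^4)) by linarith) (hnn a)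
    linarith
  refine (Finset.sum_le_sum fun a _ => pt a).trans (le_of_eq ?_)
  rw [Finset.sum_add_distrib, Finset.sum_add_distrib, ← Finset.sum_mul, ← Finset.mul_sum, ← Finset.sum_mul, meanV, h.sum]
  have : ∑ b, ν b * (U^2 * (f b - U)^2) = U^2 * ∑ b, ν b * (f b - U)^2 := by
    rw [Finset.mul_sum]; exact Finset.sum_congr rfl fun b _ => by ring
  rw [this]; ring

theorem bonami {ν : Ω → ℝ} {K : Ω → Ω → ℝ} (h : Rev ν K) (e r : ℝ) (he : 0 ≤ e)
    (hK : ∀ a b, |K a b - ν b| ≤ e * ν b) (he1 : 8*e^2 ≤ 2) (hr : ∀ a, r ≤ ν a) (hr0 : 0 < r)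
    (he2 : 3*e^4 ≤ r) (F : (Fin n → Ω) → ℝ) :
    Ex (fun _ => ν) (fun x => (TK K F x)^4) ≤ (Ex (fun _ => ν) (fun x => F x ^2))^2 := by
  have hnn : ∀ a, 0 ≤ ν a := fun a => (h.pos a).le
  induction n with
  | zero => simp only [TK, Ex_zero]; exact le_of_eq (by ring)
  | succ n ih =>
    set E : ((Fin n → Ω) → ℝ) → ℝ := Ex (fun _ => ν) with hE
    have Enn : ∀ {F : (Fin n → Ω) → ℝ}, (∀ x, 0 ≤ F x) → 0 ≤ E F := fun hF => Ex_nonneg _ (fun _ => hnn) hF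
    set G0 : (Fin n → Ω) → ℝ := fun y => ∑ b, ν b * F (Fin.cons b y) with hG0
    set W : Ω → (Fin n → Ω) → ℝ := fun b y => F (Fin.cons b y) - G0 y with hW
    have TG0 : ∀ x, TK K G0 x = ∑ b, ν b * TK K (fun y => F (Fin.cons b y)) x := by
      intro x
      unfold TK
      rw [hG0, Ex_sum]
      exact Finset.sum_congr rfl fun b _ => Ex_smul _ _ _
    have TW : ∀ b x, TK K (W b) x = TK K (fun y => F (Fin.cons b y)) x - TK K G0 x := by
      intro b x
      unfold TK
      rw [hW, Ex_sub]
    have L : Ex (fun _ => ν) (fun x => (TK K F x)^4) = E (fun x => ∑ a, ν a * (TK K F (Fin.cons a x))^4) := by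
      rw [Ex_succ, hE, Ex_sum]
      exact Finset.sum_congr rfl fun b _ => (Ex_smul _ _ _).symm
    have L2 : E (fun x => ∑ a, ν a * (TK K F (Fin.cons a x))^4) ≤
       E (fun x => TK K G0 x ^4 + 8*e^2*(∑ b, ν b * (TK K G0 x^2 * (TK K (W b) x)^2))
      + 3*e^4 * (∑ b, ν b * (TK K (W b) x)^4)) := by
      apply Ex_mono _ (fun _ => hnn)
      intro x
      have := bon1 h e he hK (fun b => TK K (fun y => F (Fin.cons b y)) x) (TK K G0 x) (TG0 x)
      simp only [TK_cons, TW]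
      exact this
    have L3 : E (fun x => TK K G0 x ^4 + 8*e^2*(∑ b, ν b * (TK K G0 x^2 * (TK K (W b) x)^2))
      + 3*e^4 * (∑ b, ν b * (TK K (W b) x)^4)) = E (fun x => TK K G0 x ^4)
        + 8*e^2 * (∑ b, ν b * E (fun x => TK K G0 x^2 * (TK K (W b) x)^2))
        + 3*e^4 * (∑ b, ν b * E (fun x => (TK K (W b) x)^4)) := by
      simp only [hE, Ex_add, Ex_smul, Ex_sum]
    have A0 : 0 ≤ E (fun x => G0 x ^2) := Enn fun x => sq_nonneg _
    have s0 : ∀ b, 0 ≤ E (fun x => W b x ^2) := fun b => Enn fun x => sq_nonneg _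
    have cross : ∀ b, E (fun x => TK K G0 x^2 * (TK K (W b) x)^2) ≤
        E (fun x => G0 x ^2) * E (fun x => W b x ^2) := by
      intro b
      apply le_of_sq_le_sq _ (mul_nonneg A0 (s0 b))
      refine (Ex_cs _ (fun _ => hnn) _ _).trans ?_
      have e4 : ∀ z : ℝ, (z^2)^2 = z^4 := fun z => by ring
      simp only [e4]
      rw [mul_pow]
      exact mul_le_mul (ih _) (ih _) (Enn fun x => by positivity) (by positivity)
    set A := E (fun x => G0 x ^2) with hA
    set S := ∑ b, ν b * E (fun x => W b x ^2) with hS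
    have S0 : 0 ≤ S := Finset.sum_nonneg fun b _ => mul_nonneg (hnn b) (s0 b)
    have c1 : ∑ b, ν b * E (fun x => TK K G0 x^2 * (TK K (W b) x)^2) ≤ A * S := by
      rw [hS, Finset.mul_sum]
      refine Finset.sum_le_sum fun b _ => ?_
      have := mul_le_mul_of_nonneg_left (cross b) (hnn b)
      linarith
    have c2 : r * (∑ b, ν b * E (fun x => (TK K (W b) x)^4)) ≤ S^2 := by
      rw [sq, Finset.mul_sum]
      conv_rhs => rw [hS, Finset.sum_mul]
      refine Finset.sum_le_sum fun b _ => ?_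
      have i1 := ih (W b)
      have i2 : r * E (fun x => W b x ^2) ≤ S := by
        refine le_trans (mul_le_mul_of_nonneg_right (hr b) (s0 b)) ?_
        exact Finset.single_le_sum (f := fun b => ν b * E (fun x => W b x ^2))
          (fun b _ => mul_nonneg (hnn b) (s0 b)) (Finset.mem_univ b)
      have i3 := mul_le_mul_of_nonneg_left i1 (mul_nonneg hr0.le (hnn b))
      have i4 := mul_le_mul_of_nonneg_left i2 (mul_nonneg (hnn b) (s0 b))
      change r * ν b * E (fun x => (TK K (W b) x)^4) ≤ r * ν b * (E (fun x => W b x ^2))^2 at i3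
      linarith
    have q0 : 0 ≤ ∑ b, ν b * E (fun x => (TK K (W b) x)^4) :=
      Finset.sum_nonneg fun b _ => mul_nonneg (hnn b) (Enn fun x => by positivity)
    have total : Ex (fun _ => ν) (fun x => F x ^2) = A + S := by
      have : Ex (fun _ => ν) (fun x => F x ^2) = E (fun x => G0 x ^2 + ∑ b, ν b * W b x ^2) := by
        rw [Ex_succ]
        have : ∀ x, G0 x ^2 + ∑ b, ν b * W b x ^2 = ∑ b, ν b * F (Fin.cons b x)^2 := by
          intro x
          have : ∀ b, ν b * W b x ^2 = ν b * F (Fin.cons b x)^2 - 2 * G0 x * (ν b * F (Fin.cons b x)) + ν b * G0 x ^2 := by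
            intro b; simp only [hW]; ring
          simp only [this, Finset.sum_add_distrib, Finset.sum_sub_distrib, ← Finset.mul_sum, ← Finset.sum_mul, h.sum]
          change G0 x ^2 + (_ - 2 * G0 x * G0 x + 1 * G0 x^2) = _
          ring
        simp only [this]
        rw [hE, Ex_sum]
        exact Finset.sum_congr rfl fun b _ => (Ex_smul _ _ _).symm
      rw [this, hA, hS]
      simp only [hE, Ex_add, Ex_smul, Ex_sum]
    rw [total, L]
    refine L2.trans ?_
    rw [L3]
    have i0 : E (fun x => TK K G0 x ^4) ≤ A^2 := ih G0
    have AS := mul_nonneg A0 S0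
    have j1 := mul_le_mul_of_nonneg_left c1 (by positivity : 0 ≤ 8*e^2)
    have j2 := mul_le_mul_of_nonneg_right he1 AS
    have j3 := mul_le_mul_of_nonneg_right he2 q0
    linarith

def SSE (ν : Ω → ℝ) (K : Ω → Ω → ℝ) : Prop :=
  ∀ ω : ℝ, 0 < ω → ∃ η : ℝ, 0 < η ∧ ∀ (n : ℕ) (G : (Fin n → Ω) → ℝ),
    (∀ x, G x = 0 ∨ G x = 1) → Ex (fun _ => ν) G ≤ η →
      Ex (fun _ => ν) (fun x => (TK K G x)^2) ≤ ω * Ex (fun _ => ν) G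

theorem SSE_base {ν : Ω → ℝ} {K : Ω → Ω → ℝ} (h : Rev ν K) (e r : ℝ) (he : 0 ≤ e)
    (hK : ∀ a b, |K a b - ν b| ≤ e * ν b) (he1 : 8*e^2 ≤ 2) (hr : ∀ a, r ≤ ν a) (hr0 : 0 < r)
    (he2 : 3*e^4 ≤ r) : SSE ν K := by
  have hnn : ∀ a, 0 ≤ ν a := fun a => (h.pos a).le
  intro ω hω
  refine ⟨ω^2, by positivity, fun n G hG hEG => ?_⟩
  have Gsq : ∀ x, G x ^2 = G x := fun x => by rcases hG x with h | h <;> rw [h] <;> norm_num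
  have G0 : ∀ x, 0 ≤ G x := fun x => by rcases hG x with h | h <;> rw [h] <;> norm_num
  have hg0 : 0 ≤ Ex (fun _ => ν) G := Ex_nonneg _ (fun _ => hnn) G0
  set H := TK K (TK K G) with hH
  have M1 : Ex (fun _ => ν) (fun x => (TK K G x)^2) = Ex (fun _ => ν) (fun x => G x * (G x * H x)) := by
    have := TK_selfadj h G (TK K G)
    simp only [sq]
    rw [← this]
    congr 1
    funext x
    rw [← mul_assoc, ← sq, Gsq]
  have M2 := Ex_cs (fun _ => ν) (fun _ => hnn) G (fun x => G x * H x)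
  have M3 := Ex_cs (fun _ => ν) (fun _ => hnn) G (fun x => H x ^2)
  have e3 : (fun x => (G x * H x)^2) = (fun x => G x * H x ^2) := by
    funext x; rw [mul_pow, Gsq]
  have e4 : (fun x => (H x^2)^2) = (fun x => H x^4) := by
    funext x; ring
  simp only [Gsq] at M2 M3
  rw [e3] at M2
  rw [e4] at M3
  have B := bonami h e r he hK he1 hr hr0 he2 (TK K G)
  rw [← M1] at M2
  set M := Ex (fun _ => ν) (fun x => (TK K G x)^2)
  set g := Ex (fun _ => ν) G
  set P := Ex (fun _ => ν) (fun x => G x * H x ^2)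
  have M0 : 0 ≤ M := Ex_nonneg _ (fun _ => hnn) fun x => sq_nonneg _
  have P0 : 0 ≤ P := Ex_nonneg _ (fun _ => hnn) fun x => mul_nonneg (G0 x) (sq_nonneg _)
  have : (M^2)^2 ≤ (g*P)^2 := pow_le_pow_left₀ (by positivity) M2 2
  have h5 : M^2 * M^2 ≤ g^3 * M^2 := by
    have a1 : P^2 ≤ g * M^2 := M3.trans (mul_le_mul_of_nonneg_left B hg0)
    have a2 := mul_le_mul_of_nonneg_left a1 (sq_nonneg g)
    nlinarith
  rcases M0.eq_or_lt with h0 | h0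
  · rw [← h0]; positivity
  have h6 : M^2 ≤ g^3 := le_of_mul_le_mul_right h5 (by positivity)
  apply le_of_sq_le_sq _ (by positivity)
  have := mul_le_mul_of_nonneg_left hEG (sq_nonneg g)
  nlinarith

theorem SSE_step {ν : Ω → ℝ} {K : Ω → Ω → ℝ} (h : Rev ν K) (hs : SSE ν (kcomp K K)) : SSE ν K := by
  have hnn : ∀ a, 0 ≤ ν a := fun a => (h.pos a).le
  intro ω hω
  obtain ⟨η, hη, H⟩ := hs (ω^2) (by positivity)
  refine ⟨η, hη, fun n G hG hEG => ?_⟩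
  have := H n G hG hEG
  have Gsq : ∀ x, G x ^2 = G x := fun x => by rcases hG x with h | h <;> rw [h] <;> norm_num
  have M1 : Ex (fun _ => ν) (fun x => (TK K G x)^2) = Ex (fun _ => ν) (fun x => G x * TK (kcomp K K) G x) := by
    have := TK_selfadj h G (TK K G)
    simp only [sq]
    rw [← this]
    simp only [TK_comp]
  rw [M1]
  have le : Ex (fun _ => ν) (fun x => G x * TK (kcomp K K) G x) ≤
     Ex (fun _ => ν) (fun x => (ω/2) * G x + (1/(2*ω)) * (TK (kcomp K K) G x)^2) := by
    apply Ex_mono _ (fun _ => hnn)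
    intro x
    have e : (ω/2) * G x + (1/(2*ω)) * (TK (kcomp K K) G x)^2 - G x * TK (kcomp K K) G x
      = (1/(2*ω)) * (ω * G x - TK (kcomp K K) G x)^2 := by
      have h3 := Gsq x
      field_simp
      linear_combination - ω^2 * h3
    have : 0 ≤ (1/(2*ω)) * (ω * G x - TK (kcomp K K) G x)^2 := by positivity
    linarith
  refine le.trans ?_
  rw [Ex_add, Ex_smul, Ex_smul]
  have := mul_le_mul_of_nonneg_left this (by positivity : 0 ≤ 1/(2*ω))
  have e : 1/(2*ω) * (ω^2 * Ex (fun _ => ν) G) = ω/2 * Ex (fun _ => ν) G := by field_simp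
  linarith

theorem comp_minor {ν : Ω → ℝ} {K : Ω → Ω → ℝ} (h : Rev ν K) (s : ℝ)
    (hK : ∀ a b, (1-s) * ν b ≤ K a b) (a c : Ω) : (1 - s^2) * ν c ≤ kcomp K K a c := by
  have e : kcomp K K a c = (1-s) * ν c + ∑ b, K a b * (K b c - (1-s) * ν c) := by
    simp only [kcomp, mul_sub, Finset.sum_sub_distrib, ← Finset.sum_mul, h.row]; ring
  have l : ∑ b, (1-s) * (ν b * (K b c - (1-s) * ν c)) ≤ ∑ b, K a b * (K b c - (1-s) * ν c) := by
    refine Finset.sum_le_sum fun b _ => ?_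
    have := mul_le_mul_of_nonneg_right (hK a b) (sub_nonneg.2 (hK b c))
    linarith
  have e2 : ∑ b, (1-s) * (ν b * (K b c - (1-s) * ν c)) = (1-s) * (ν c - (1-s) * ν c) := by
    rw [← Finset.mul_sum]
    simp only [mul_sub, Finset.sum_sub_distrib, ← Finset.sum_mul, h.stat, h.sum]; ring
  rw [e]; linarith

theorem SSE_iter (ν : Ω → ℝ) (r : ℝ) (hr : ∀ a, r ≤ ν a) (hr0 : 0 < r) (hr1 : r ≤ 1) (l : ℕ) :
    ∀ (K : Ω → Ω → ℝ) (s : ℝ), Rev ν K → 0 ≤ s → (∀ a b, (1-s) * ν b ≤ K a b) →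
      s^(2^l) ≤ r^2/4 → s ≤ 1 → SSE ν K := by
  induction l with
  | zero =>
    intro K s h hs0 hK hs hs1
    classical
    simp only [pow_zero, pow_one] at hs
    refine SSE_base h (r/4) r (by positivity) ?_ ?_ hr hr0 ?_
    · intro a b
      have hrb := hr b
      rw [abs_le]
      constructor
      · have := hK a b
        have h5 : s * ν b ≤ r / 4 * ν b := mul_le_mul_of_nonneg_right (by nlinarith) (h.pos b).le
        linarith
      · have h1 := h.row a
        have h2 := h.sum
        rw [← Finset.add_sum_erase _ _ (Finset.mem_univ b)] at h1 h2
        have h3 : (1-s) * ∑ x ∈ Finset.univ.erase b, ν x ≤ ∑ x ∈ Finset.univ.erase b, K a x := by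
          rw [Finset.mul_sum]
          exact Finset.sum_le_sum fun x _ => hK a x
        have h4 : ∑ x ∈ Finset.univ.erase b, ν x = 1 - ν b := by linarith
        rw [h4] at h3
        nlinarith [h.pos b]
    · nlinarith
    · have : r^4 ≤ r := by
        have := pow_le_pow_of_le_one hr0.le hr1 (show 1 ≤ 4 by norm_num)
        simpa using this
      nlinarith
  | succ l ih =>
    intro K s h hs0 hK hs hs1
    apply SSE_step h
    refine ih _ (s^2) h.comp (by positivity) (comp_minor h s hK) ?_ ?_
    · rw [← pow_mul, ← pow_succ']; exact hs
    · nlinarith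

theorem SSE_of_full [Nonempty Ω] {ν : Ω → ℝ} {K : Ω → Ω → ℝ} (h : Rev ν K) (hK : ∀ a b, 0 < K a b) :
    SSE ν K := by
  obtain ⟨a0, ha0⟩ := Finite.exists_min ν
  obtain ⟨⟨i, j⟩, hij⟩ := Finite.exists_min (fun p : Ω × Ω => K p.1 p.2)
  have ν1 : ∀ a, ν a ≤ 1 := fun a => by
    rw [← h.sum]; exact Finset.single_le_sum (fun b _ => (h.pos b).le) (Finset.mem_univ a)
  have K1 : K i j ≤ 1 := by
    rw [← h.row i]; exact Finset.single_le_sum (fun b _ => h.knn i b) (Finset.mem_univ j)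
  set t := K i j
  have ht : 0 < t := hK i j
  have r0 := h.pos a0
  obtain ⟨l, hl⟩ := exists_pow_lt_of_lt_one (show 0 < (ν a0)^2/4 by positivity) (show 1 - t < 1 by linarith)
  refine SSE_iter ν (ν a0) ha0 r0 (ν1 _) l K (1-t) h (by linarith) ?_ ?_ (by linarith)
  · intro a b
    have h1 : t ≤ K a b := hij (a,b)
    have h2 := ν1 b
    nlinarith
  · refine le_trans (pow_le_pow_of_le_one (by linarith) (by linarith) (Nat.lt_two_pow_self).le) hl.le

theorem SSE_pair {ν : Ω → ℝ} {K : Ω → Ω → ℝ} (h : Rev ν K) (hs : SSE ν K) :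
    ∀ ω : ℝ, 0 < ω → ∃ η : ℝ, 0 < η ∧ ∀ (n : ℕ) (F G : (Fin n → Ω) → ℝ),
    (∀ x, F x = 0 ∨ F x = 1) → (∀ x, G x = 0 ∨ G x = 1) → Ex (fun _ => ν) G ≤ η →
      Ex (fun _ => ν) (fun x => F x * TK K G x) ≤ ω * (Ex (fun _ => ν) F + Ex (fun _ => ν) G) := by
  have hnn : ∀ a, 0 ≤ ν a := fun a => (h.pos a).le
  intro ω hω
  obtain ⟨η, hη, H⟩ := hs (ω^2) (by positivity)
  refine ⟨η, hη, fun n F G hF hG hEG => ?_⟩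
  have := H n G hG hEG
  have Fsq : ∀ x, F x ^2 = F x := fun x => by rcases hF x with h | h <;> rw [h] <;> norm_num
  have F0 : ∀ x, 0 ≤ F x := fun x => by rcases hF x with h | h <;> rw [h] <;> norm_num
  have G0 : ∀ x, 0 ≤ G x := fun x => by rcases hG x with h | h <;> rw [h] <;> norm_num
  have le : Ex (fun _ => ν) (fun x => F x * TK K G x) ≤
     Ex (fun _ => ν) (fun x => ω * F x + (1/ω) * (TK K G x)^2) := by
    apply Ex_mono _ (fun _ => hnn)
    intro x
    have e : ω * F x + (1/ω) * (TK K G x)^2 - F x * TK K G x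
      = (1/(2*ω)) * ((ω * F x - TK K G x)^2 + ω^2 * F x ^2 + (TK K G x)^2) := by
      have h3 := Fsq x
      field_simp
      linear_combination - 2 * ω^2 * h3
    have : 0 ≤ (1/(2*ω)) * ((ω * F x - TK K G x)^2 + ω^2 * F x ^2 + (TK K G x)^2) := by positivity
    linarith
  refine le.trans ?_
  rw [Ex_add, Ex_smul, Ex_smul]
  have := mul_le_mul_of_nonneg_left this (by positivity : 0 ≤ 1/ω)
  have e : 1/ω * (ω^2 * Ex (fun _ => ν) G) = ω * Ex (fun _ => ν) G := by field_simp
  linarith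

end SSEsec

structure Par (a b c t θ : ℝ) : Prop where
  ha : 0 < a
  hb : 0 < b
  hc : 0 < c
  ht : 0 < t
  hθ : 0 < θ
  sum : a + 3 * b + c = 1
  ta : t ≤ a / 2
  tb : t ≤ b / 2
  θb : θ ≤ b / 2
  θc : θ ≤ c / 2

def mu3 (a b c : ℝ) : Bool × Bool × Bool → ℝ
  | (false, false, false) => a
  | (true, false, false) => b
  | (false, true, false) => b
  | (false, false, true) => b
  | (true, true, true) => c
  | _ => 0

def sg : Bool × Bool × Bool → ℝ
  | (false, false, false) => 1
  | (true, false, false) => -1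
  | (false, true, false) => -1
  | (false, false, true) => -1
  | (true, true, true) => -1
  | _ => 1

def law (a b c ϑ : ℝ) (i : Bool × Bool × Bool) : ℝ := mu3 a b c i + ϑ * sg i

noncomputable def hatl (a b c t ϑ : ℝ) : Option Bool × Option Bool × Option Bool → ℝ
  | (some x, some y, some z) => law (a - 3*t/2) (b - t/2) c ϑ (x, y, z)
  | (none, some false, some false) => t
  | (some false, none, some false) => t
  | (some false, some false, none) => t
  | _ => 0

noncomputable def nut (q t : ℝ) : Option Bool → ℝ
  | none => t
  | some true => q - t/2
  | some false => 1 - q - t/2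

noncomputable def NN : Option Bool → Bool → ℝ
  | none, _ => 1/2
  | some x, y => if x = y then 1 else 0

noncomputable def tld {n : ℕ} (f : (Fin n → Bool) → ℝ) (X : Fin n → Option Bool) : ℝ :=
  Ex (fun k => NN (X k)) f

noncomputable def slc {n : ℕ} (f : (Fin (n+1) → Bool) → ℝ) (s : Option Bool) : (Fin n → Bool) → ℝ :=
  fun y => ∑ b, NN s b * f (Fin.cons b y)

theorem tld_cons {n : ℕ} (f : (Fin (n+1) → Bool) → ℝ) (s : Option Bool) (X : Fin n → Option Bool) :
    tld f (Fin.cons s X) = tld (slc f s) X := by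
  unfold tld slc
  rw [Ex_succ, Ex_sum]
  simp only [Ex_smul]
  simp

theorem NN_nn (s : Option Bool) (b : Bool) : 0 ≤ NN s b := by
  rcases s with _ | x
  · simp [NN]
  · simp only [NN]; split_ifs <;> norm_num

theorem NN_sum (s : Option Bool) : ∑ b, NN s b = 1 := by
  rcases s with _ | _ | _ <;> simp [NN]

section
variable {n : ℕ}

theorem tld_sub (f g : (Fin n → Bool) → ℝ) (X : Fin n → Option Bool) :
    tld (fun x => f x - g x) X = tld f X - tld g X := Ex_sub _ _ _

theorem tld_compl (f : (Fin n → Bool) → ℝ) (X : Fin n → Option Bool) :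
    tld (fun x => 1 - f x) X = 1 - tld f X := Ex_compl _ (fun _ => NN_sum _) _

theorem tld_mem (f : (Fin n → Bool) → ℝ) (h : ∀ x, 0 ≤ f x ∧ f x ≤ 1) (X : Fin n → Option Bool) :
    0 ≤ tld f X ∧ tld f X ≤ 1 :=
  ⟨Ex_nonneg _ (fun _ => NN_nn _) fun x => (h x).1,
   Ex_le_one _ (fun _ => NN_nn _) (fun _ => NN_sum _) fun x => (h x).2⟩

theorem tld_sq (f : (Fin n → Bool) → ℝ) (X : Fin n → Option Bool) :
    (tld f X)^2 ≤ tld (fun x => f x ^2) X := by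
  have := Ex_cs (fun k => NN (X k)) (fun _ => NN_nn _) f (fun _ => 1)
  rw [Ex_const _ (fun _ => NN_sum _)] at this
  simpa [tld] using this
end

theorem bridge (a b c t : ℝ) {n : ℕ} (ϑ : Fin n → ℝ) (f g h : (Fin n → Bool) → ℝ) :
    Ex (fun k => hatl a b c t (ϑ k)) (fun x => tld f (fun k => (x k).1) * tld g (fun k => (x k).2.1)
      * tld h (fun k => (x k).2.2)) =
    Ex (fun k => law a b c (ϑ k)) (fun x => f (fun k => (x k).1) * g (fun k => (x k).2.1)
      * h (fun k => (x k).2.2)) := by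
  induction n with
  | zero =>
    simp only [Ex_zero, tld]
    have e : ∀ z : Fin 0 → Bool, (Fin.elim0 : Fin 0 → Bool) = z := fun z => by funext k; exact k.elim0
    exact congrArg₂ _ (congrArg₂ _ (congrArg f (e _)) (congrArg g (e _))) (congrArg h (e _))
  | succ n ih =>
    rw [Ex_succ, Ex_succ]
    have e1 : ∀ (i : Option Bool × Option Bool × Option Bool) (x : Fin n → _),
      (fun k => ((Fin.cons i x : Fin (n+1) → Option Bool × Option Bool × Option Bool) k).1) = (Fin.cons i.1 (fun k => (x k).1) : Fin (n+1) → Option Bool) :=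
      fun i x => cons_map (fun z => z.1) i x
    have e2 : ∀ (i : Option Bool × Option Bool × Option Bool) (x : Fin n → _),
      (fun k => ((Fin.cons i x : Fin (n+1) → Option Bool × Option Bool × Option Bool) k).2.1) = (Fin.cons i.2.1 (fun k => (x k).2.1) : Fin (n+1) → Option Bool) :=
      fun i x => cons_map (fun z => z.2.1) i x
    have e3 : ∀ (i : Option Bool × Option Bool × Option Bool) (x : Fin n → _),
      (fun k => ((Fin.cons i x : Fin (n+1) → Option Bool × Option Bool × Option Bool) k).2.2) = (Fin.cons i.2.2 (fun k => (x k).2.2) : Fin (n+1) → Option Bool) :=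
      fun i x => cons_map (fun z => z.2.2) i x
    have d1 : ∀ (i : Bool × Bool × Bool) (x : Fin n → Bool × Bool × Bool),
      (fun k => ((Fin.cons i x : Fin (n+1) → Bool × Bool × Bool) k).1) = (Fin.cons i.1 (fun k => (x k).1) : Fin (n+1) → Bool) :=
      fun i x => cons_map (fun z => z.1) i x
    have d2 : ∀ (i : Bool × Bool × Bool) (x : Fin n → Bool × Bool × Bool),
      (fun k => ((Fin.cons i x : Fin (n+1) → Bool × Bool × Bool) k).2.1) = (Fin.cons i.2.1 (fun k => (x k).2.1) : Fin (n+1) → Bool) :=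
      fun i x => cons_map (fun z => z.2.1) i x
    have d3 : ∀ (i : Bool × Bool × Bool) (x : Fin n → Bool × Bool × Bool),
      (fun k => ((Fin.cons i x : Fin (n+1) → Bool × Bool × Bool) k).2.2) = (Fin.cons i.2.2 (fun k => (x k).2.2) : Fin (n+1) → Bool) :=
      fun i x => cons_map (fun z => z.2.2) i x
    simp only [e1, e2, e3, d1, d2, d3, tld_cons]
    have I := fun s : Option Bool × Option Bool × Option Bool =>
      ih (fun k => ϑ k.succ) (slc f s.1) (slc g s.2.1) (slc h s.2.2)
    simp only [I]
    simp only [← Ex_smul, ← Ex_sum]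
    congr 1
    funext x
    simp only [slc, Fintype.sum_prod_type, Fintype.sum_option, Fintype.sum_bool, hatl, NN, law, mu3, sg,
      if_true, Bool.false_eq_true, if_false, Bool.true_eq_false]
    ring

theorem bridge1 (q t : ℝ) {n : ℕ} (f : (Fin n → Bool) → ℝ) :
    Ex (fun _ => nut q t) (tld f) = Ex (fun _ => bw q) f := by
  induction n with
  | zero =>
    simp only [Ex_zero, tld]
  | succ n ih =>
    rw [Ex_succ, Ex_succ]
    simp only [tld_cons]
    have I := fun s : Option Bool => ih (slc f s)
    have I' : ∀ s : Option Bool, Ex (fun _ : Fin n => nut q t) (fun x => tld (slc f s) x) = Ex (fun _ => bw q) (slc f s) := I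
    simp only [I']
    simp only [← Ex_smul, ← Ex_sum]
    congr 1
    funext x
    simp only [slc, Fintype.sum_option, Fintype.sum_bool, NN, bw, nut,
      if_true, Bool.false_eq_true, if_false, Bool.true_eq_false]
    ring

/-- Two-coordinate marginal as an operator form. -/
theorem pair_law {Ω Ω' : Type} [Fintype Ω] [Fintype Ω'] [DecidableEq Ω] {n : ℕ}
    (w : Fin n → Ω' → ℝ) (p1 p2 : Ω' → Ω) (ν : Ω → ℝ) (K : Ω → Ω → ℝ)
    (h : ∀ k a b, ∑ i, (if p1 i = a ∧ p2 i = b then w k i else 0) = ν a * K a b)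
    (F G : (Fin n → Ω) → ℝ) :
    Ex w (fun x => F (fun k => p1 (x k)) * G (fun k => p2 (x k))) =
      Ex (fun _ => ν) (fun x => F x * TK K G x) := by
  induction n with
  | zero =>
    simp only [Ex_zero, TK]
    congr 1
    · congr 1; funext x; exact x.elim0
    · congr 1; funext x; exact x.elim0
  | succ n ih =>
    rw [Ex_succ, Ex_succ]
    have d1 : ∀ (i : Ω') (x : Fin n → Ω'),
      (fun k => p1 ((Fin.cons i x : Fin (n+1) → Ω') k)) = (Fin.cons (p1 i) (fun k => p1 (x k)) : Fin (n+1) → Ω) :=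
      fun i x => cons_map p1 i x
    have d2 : ∀ (i : Ω') (x : Fin n → Ω'),
      (fun k => p2 ((Fin.cons i x : Fin (n+1) → Ω') k)) = (Fin.cons (p2 i) (fun k => p2 (x k)) : Fin (n+1) → Ω) :=
      fun i x => cons_map p2 i x
    simp only [d1, d2, TK_cons]
    have I : ∀ i, Ex (fun k => w k.succ) (fun x => F (Fin.cons (p1 i) (fun k => p1 (x k))) *
       G (Fin.cons (p2 i) (fun k => p2 (x k)))) = Ex (fun _ => ν) (fun x => F (Fin.cons (p1 i) x) * TK K (fun y => G (Fin.cons (p2 i) y)) x) :=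
      fun i => ih (fun k => w k.succ) (fun k => h _) (fun x => F (Fin.cons (p1 i) x)) (fun y => G (Fin.cons (p2 i) y))
    simp only [I]
    have R : ∀ a, ν a * Ex (fun _ : Fin n => ν) (fun x => F (Fin.cons a x) * ∑ b, K a b * TK K (fun y => G (Fin.cons b y)) x)
      = ∑ b, (ν a * K a b) * Ex (fun _ : Fin n => ν) (fun x => F (Fin.cons a x) * TK K (fun y => G (Fin.cons b y)) x) := by
      intro a
      have : ∀ x : Fin n → Ω, F (Fin.cons a x) * ∑ b, K a b * TK K (fun y => G (Fin.cons b y)) x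
        = ∑ b, K a b * (F (Fin.cons a x) * TK K (fun y => G (Fin.cons b y)) x) := by
        intro x; rw [Finset.mul_sum]; exact Finset.sum_congr rfl fun b _ => by ring
      simp only [this, Ex_sum, Ex_smul]
      rw [Finset.mul_sum]; exact Finset.sum_congr rfl fun b _ => by ring
    simp only [R, ← h 0]
    simp only [Finset.sum_mul]
    rw [show ∀ Q : Ω → Ω → Ω' → ℝ, ∑ a, ∑ b, ∑ i, Q a b i = ∑ i, ∑ a, ∑ b, Q a b i from ?_]
    · refine Finset.sum_congr rfl fun i _ => ?_
      rw [Finset.sum_eq_single (p1 i), Finset.sum_eq_single (p2 i)]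
      · simp
      · intro b _ hb; rw [if_neg (by tauto), zero_mul]
      · simp
      · intro a _ ha
        apply Finset.sum_eq_zero
        intro b _
        rw [if_neg (by tauto), zero_mul]
      · simp
    · intro Q
      rw [Finset.sum_comm (s := (Finset.univ : Finset Ω'))]
      exact Finset.sum_congr rfl fun a _ => Finset.sum_comm

theorem one_law {Ω Ω' : Type} [Fintype Ω] [Fintype Ω'] [DecidableEq Ω] {n : ℕ}
    (w : Fin n → Ω' → ℝ) (p1 : Ω' → Ω) (ν : Ω → ℝ)
    (h : ∀ k a, ∑ i, (if p1 i = a then w k i else 0) = ν a)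
    (F : (Fin n → Ω) → ℝ) :
    Ex w (fun x => F (fun k => p1 (x k))) = Ex (fun _ => ν) F := by
  rw [Ex_push p1 w F]
  congr 1
  funext k a
  exact h k a

noncomputable def KB (a b c : ℝ) : Bool → Bool → ℝ
  | true, true => c/(b+c)
  | true, false => b/(b+c)
  | false, true => b/(1-(b+c))
  | false, false => (a+b)/(1-(b+c))

noncomputable def KO (a b c t : ℝ) : Option Bool → Option Bool → ℝ
  | none, some false => 1
  | none, _ => 0
  | some true, none => 0
  | some true, some true => c/(b+c-t/2)
  | some true, some false => (b-t/2)/(b+c-t/2)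
  | some false, none => t/(1-(b+c)-t/2)
  | some false, some true => (b-t/2)/(1-(b+c)-t/2)
  | some false, some false => (a+b-t)/(1-(b+c)-t/2)

section
variable {a b c t θ : ℝ}

theorem Par.q0 (P : Par a b c t θ) : 0 < b + c := by have := P.hb; have := P.hc; linarith
theorem Par.q1 (P : Par a b c t θ) : 0 < 1 - (b + c) := by have := P.hb; have := P.ha; have := P.sum; linarith
theorem Par.d1 (P : Par a b c t θ) : 0 < b + c - t/2 := by have := P.hb; have := P.hc; have := P.tb; linarith
theorem Par.d0 (P : Par a b c t θ) : 0 < 1 - (b + c) - t/2 := by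
  have := P.hb; have := P.ha; have := P.sum; have := P.ta; linarith
theorem Par.e0 (P : Par a b c t θ) : 0 < b - t/2 := by have := P.hb; have := P.tb; linarith
theorem Par.e1 (P : Par a b c t θ) : 0 < a + b - t := by
  have := P.hb; have := P.ha; have := P.ta; linarith

theorem law_nn (P : Par a b c t θ) (ϑ : ℝ) (h0 : 0 ≤ ϑ) (h1 : ϑ ≤ θ) (i : Bool × Bool × Bool) :
    0 ≤ law a b c ϑ i := by
  have := P.ha; have := P.hb; have := P.hc; have := P.θb; have := P.θc
  rcases i with ⟨_|_, _|_, _|_⟩ <;> simp only [law, mu3, sg] <;> linarith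

theorem law_pos (P : Par a b c t θ) (i : Bool × Bool × Bool) : 0 < law a b c θ i := by
  have := P.ha; have := P.hb; have := P.hc; have := P.θb; have := P.θc; have := P.hθ
  rcases i with ⟨_|_, _|_, _|_⟩ <;> simp only [law, mu3, sg] <;> linarith

theorem hatl_nn (P : Par a b c t θ) (ϑ : ℝ) (h0 : 0 ≤ ϑ) (h1 : ϑ ≤ θ)
    (i : Option Bool × Option Bool × Option Bool) : 0 ≤ hatl a b c t ϑ i := by
  have := P.ha; have := P.hb; have := P.hc; have := P.θb; have := P.θc; have := P.ht
  have := P.ta; have := P.tb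
  rcases i with ⟨_|_|_, _|_|_, _|_|_⟩ <;> simp only [hatl, law, mu3, sg] <;> linarith

theorem law_sum (P : Par a b c t θ) (ϑ : ℝ) : ∑ i, law a b c ϑ i = 1 := by
  have := P.sum
  simp only [Fintype.sum_prod_type, Fintype.sum_bool, law, mu3, sg]; linarith

theorem hatl_sum (P : Par a b c t θ) (ϑ : ℝ) : ∑ i, hatl a b c t ϑ i = 1 := by
  have := P.sum
  simp only [Fintype.sum_prod_type, Fintype.sum_option, Fintype.sum_bool, hatl, law, mu3, sg]; linarith

theorem law_m1 (P : Par a b c t θ) (ϑ : ℝ) (x : Bool) :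
    ∑ i : Bool × Bool × Bool, (if i.1 = x then law a b c ϑ i else 0) = bw (b+c) x := by
  have := P.sum
  cases x <;> simp [Fintype.sum_prod_type, law, mu3, sg, bw] <;> linarith
theorem law_m2 (P : Par a b c t θ) (ϑ : ℝ) (x : Bool) :
    ∑ i : Bool × Bool × Bool, (if i.2.1 = x then law a b c ϑ i else 0) = bw (b+c) x := by
  have := P.sum
  cases x <;> simp [Fintype.sum_prod_type, law, mu3, sg, bw] <;> linarith
theorem law_m3 (P : Par a b c t θ) (ϑ : ℝ) (x : Bool) :
    ∑ i : Bool × Bool × Bool, (if i.2.2 = x then law a b c ϑ i else 0) = bw (b+c) x := by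
  have := P.sum
  cases x <;> simp [Fintype.sum_prod_type, law, mu3, sg, bw] <;> linarith

theorem bwKB (P : Par a b c t θ) (x y : Bool) : bw (b+c) x * KB a b c x y =
    if x then (if y then c else b) else (if y then b else a + b) := by
  have := P.q0.ne'; have := P.q1.ne'
  cases x <;> cases y <;> simp [bw, KB] <;> field_simp

theorem law_m12 (P : Par a b c t θ) (ϑ : ℝ) (x y : Bool) :
    ∑ i : Bool × Bool × Bool, (if i.1 = x ∧ i.2.1 = y then law a b c ϑ i else 0)
      = bw (b+c) x * KB a b c x y := by
  rw [bwKB P]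
  cases x <;> cases y <;> simp [Fintype.sum_prod_type, law, mu3, sg] <;> linarith
theorem law_m13 (P : Par a b c t θ) (ϑ : ℝ) (x y : Bool) :
    ∑ i : Bool × Bool × Bool, (if i.1 = x ∧ i.2.2 = y then law a b c ϑ i else 0)
      = bw (b+c) x * KB a b c x y := by
  rw [bwKB P]
  cases x <;> cases y <;> simp [Fintype.sum_prod_type, law, mu3, sg] <;> linarith
theorem law_m23 (P : Par a b c t θ) (ϑ : ℝ) (x y : Bool) :
    ∑ i : Bool × Bool × Bool, (if i.2.1 = x ∧ i.2.2 = y then law a b c ϑ i else 0)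
      = bw (b+c) x * KB a b c x y := by
  rw [bwKB P]
  cases x <;> cases y <;> simp [Fintype.sum_prod_type, law, mu3, sg] <;> linarith

theorem hat_m1 (P : Par a b c t θ) (ϑ : ℝ) (x : Option Bool) :
    ∑ i : Option Bool × Option Bool × Option Bool, (if i.1 = x then hatl a b c t ϑ i else 0) = nut (b+c) t x := by
  have := P.sum
  rcases x with _ | _ | _ <;> simp [Fintype.sum_prod_type, Fintype.sum_option, hatl, law, mu3, sg, nut] <;> linarith
theorem hat_m2 (P : Par a b c t θ) (ϑ : ℝ) (x : Option Bool) :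
    ∑ i : Option Bool × Option Bool × Option Bool, (if i.2.1 = x then hatl a b c t ϑ i else 0) = nut (b+c) t x := by
  have := P.sum
  rcases x with _ | _ | _ <;> simp [Fintype.sum_prod_type, Fintype.sum_option, hatl, law, mu3, sg, nut] <;> linarith
theorem hat_m3 (P : Par a b c t θ) (ϑ : ℝ) (x : Option Bool) :
    ∑ i : Option Bool × Option Bool × Option Bool, (if i.2.2 = x then hatl a b c t ϑ i else 0) = nut (b+c) t x := by
  have := P.sum
  rcases x with _ | _ | _ <;> simp [Fintype.sum_prod_type, Fintype.sum_option, hatl, law, mu3, sg, nut] <;> linarith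

theorem nutKO (P : Par a b c t θ) (x y : Option Bool) : nut (b+c) t x * KO a b c t x y =
    match x, y with
    | none, some false => t
    | none, _ => 0
    | some true, none => 0
    | some true, some true => c
    | some true, some false => b - t/2
    | some false, none => t
    | some false, some true => b - t/2
    | some false, some false => a + b - t := by
  have key : ∀ x d : ℝ, d ≠ 0 → d * (x / d) = x := fun x d h => by field_simp
  rcases x with _ | _ | _ <;> rcases y with _ | _ | _ <;> simp only [nut, KO] <;>
    first | exact key _ _ P.d0.ne' | exact key _ _ P.d1.ne' | ring

theorem hat_m12 (P : Par a b c t θ) (ϑ : ℝ) (x y : Option Bool) :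
    ∑ i : Option Bool × Option Bool × Option Bool, (if i.1 = x ∧ i.2.1 = y then hatl a b c t ϑ i else 0)
      = nut (b+c) t x * KO a b c t x y := by
  rw [nutKO P]
  rcases x with _ | _ | _ <;> rcases y with _ | _ | _ <;>
    simp [Fintype.sum_prod_type, Fintype.sum_option, hatl, law, mu3, sg] <;> linarith

theorem bw_pos (P : Par a b c t θ) (x : Bool) : 0 < bw (b+c) x := by
  have := P.q0; have := P.q1
  cases x <;> simp only [bw] <;> simp <;> linarith
theorem bw_sum (q : ℝ) : ∑ x, bw q x = 1 := by simp [bw]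

theorem KB_pos (P : Par a b c t θ) (x y : Bool) : 0 < KB a b c x y := by
  have := P.q0; have := P.q1; have := P.ha; have := P.hb; have := P.hc
  cases x <;> cases y <;> simp only [KB] <;> positivity

theorem rev_KB (P : Par a b c t θ) : Rev (bw (b+c)) (KB a b c) where
  pos := bw_pos P
  sum := bw_sum _
  knn x y := (KB_pos P x y).le
  row x := by
    have := P.q0.ne'; have h1 := P.q1.ne'; have := P.sum
    cases x <;> simp only [Fintype.sum_bool, KB] <;> field_simp <;> linarith
  rev x y := by
    rw [bwKB P, bwKB P]
    cases x <;> cases y <;> simp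

theorem SSE_KB (P : Par a b c t θ) : SSE (bw (b+c)) (KB a b c) := SSE_of_full (rev_KB P) (KB_pos P)

theorem nut_pos (P : Par a b c t θ) (x : Option Bool) : 0 < nut (b+c) t x := by
  have := P.d0; have := P.d1; have := P.ht
  rcases x with _ | _ | _ <;> simp only [nut] <;> linarith
theorem nut_sum (q t : ℝ) : ∑ x, nut q t x = 1 := by
  simp only [Fintype.sum_option, Fintype.sum_bool, nut]; ring

theorem rev_KO (P : Par a b c t θ) : Rev (nut (b+c) t) (KO a b c t) where
  pos := nut_pos P
  sum := nut_sum _ _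
  knn x y := by
    have := P.d0; have := P.d1; have := P.e0; have := P.e1; have := P.ht; have := P.hc
    rcases x with _ | _ | _ <;> rcases y with _ | _ | _ <;> simp only [KO] <;> positivity
  row x := by
    have := P.d0.ne'; have h1 := P.d1.ne'; have := P.sum
    rcases x with _ | _ | _ <;> simp only [Fintype.sum_option, Fintype.sum_bool, KO]
    · ring
    · rw [← add_div, ← add_div, div_eq_one_iff_eq P.d0.ne']; linarith
    · rw [zero_add, ← add_div, div_eq_one_iff_eq P.d1.ne']; linarith
  rev x y := by
    rw [nutKO P, nutKO P]
    rcases x with _ | _ | _ <;> rcases y with _ | _ | _ <;> simp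

theorem SSE_KO (P : Par a b c t θ) : SSE (nut (b+c) t) (KO a b c t) := by
  apply SSE_step (rev_KO P)
  apply SSE_of_full (rev_KO P).comp
  intro x y
  have hk := (rev_KO P).knn
  have h1 : 0 < KO a b c t x (some false) := by
    have := P.d0; have := P.d1; have := P.e0; have := P.e1; have := P.ht
    rcases x with _ | _ | _ <;> simp only [KO] <;> positivity
  have h2 : 0 < KO a b c t (some false) y := by
    have := P.d0; have := P.d1; have := P.e0; have := P.e1; have := P.ht
    rcases y with _ | _ | _ <;> simp only [KO] <;> positivity
  refine lt_of_lt_of_le (mul_pos h1 h2) ?_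
  exact Finset.single_le_sum (f := fun z => KO a b c t x z * KO a b c t z y)
    (fun z _ => mul_nonneg (hk _ _) (hk _ _)) (Finset.mem_univ (some false))

end

noncomputable def dk {n : ℕ} (f : (Fin n → Bool) → ℝ) (k : Fin n) (X : Fin n → Option Bool) : ℝ :=
  tld f (Function.update X k (some true)) - tld f (Function.update X k (some false))

noncomputable def Infl (q t : ℝ) {n : ℕ} (f : (Fin n → Bool) → ℝ) (k : Fin n) : ℝ :=
  Ex (fun _ => nut q t) (fun X => dk f k X ^ 2)

theorem dk_compl {n : ℕ} (f : (Fin n → Bool) → ℝ) (k : Fin n) (X : Fin n → Option Bool) :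
    dk (fun x => 1 - f x) k X = - dk f k X := by
  simp only [dk, tld_compl]; ring

theorem Infl_compl (q t : ℝ) {n : ℕ} (f : (Fin n → Bool) → ℝ) (k : Fin n) :
    Infl q t (fun x => 1 - f x) k = Infl q t f k := by
  simp only [Infl, dk_compl, neg_sq]

theorem dk_abs {n : ℕ} (f : (Fin n → Bool) → ℝ) (h : ∀ x, 0 ≤ f x ∧ f x ≤ 1) (k : Fin n)
    (X : Fin n → Option Bool) : |dk f k X| ≤ 1 := by
  have h1 := tld_mem f h (Function.update X k (some true))
  have h2 := tld_mem f h (Function.update X k (some false))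
  rw [dk, abs_le]; constructor <;> linarith [h1.1, h1.2, h2.1, h2.2]

section
variable {a b c t θ : ℝ}

theorem Infl_nn (P : Par a b c t θ) {n : ℕ} (f : (Fin n → Bool) → ℝ) (k : Fin n) :
    0 ≤ Infl (b+c) t f k := Ex_nonneg _ (fun _ x => (nut_pos P x).le) fun _ => sq_nonneg _

theorem tld_contr (P : Par a b c t θ) {n : ℕ} (f : (Fin n → Bool) → ℝ) :
    Ex (fun _ => nut (b+c) t) (fun X => tld f X ^2) ≤ Ex (fun _ => bw (b+c)) (fun x => f x ^2) := by
  rw [← bridge1 (b+c) t]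
  exact Ex_mono _ (fun _ x => (nut_pos P x).le) fun X => tld_sq f X

theorem inf_sum (P : Par a b c t θ) {n : ℕ} (f : (Fin n → Bool) → ℝ) :
    (t/4) * ∑ k, Infl (b+c) t f k ≤ Ex (fun _ => bw (b+c)) (fun x => f x ^2)
      - Ex (fun _ => nut (b+c) t) (fun X => tld f X ^2) := by
  induction n with
  | zero => simp [Ex_zero, tld]
  | succ n ih =>
    rw [Fin.sum_univ_succ]
    have I0 : Infl (b+c) t f 0 = Ex (fun _ => nut (b+c) t) (fun X => tld (fun x => slc f (some true) x - slc f (some false) x) X ^2) := by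
      unfold Infl
      rw [Ex_succ]
      simp only [dk, Fin.update_cons_zero, tld_cons, tld_sub]
      rw [← Finset.sum_mul, nut_sum, one_mul]
    have I1 : ∀ k : Fin n, Infl (b+c) t f k.succ = ∑ s, nut (b+c) t s * Infl (b+c) t (slc f s) k := by
      intro k
      unfold Infl
      rw [Ex_succ]
      simp only [dk, ← Fin.cons_update, tld_cons]
    simp only [I1]
    rw [Finset.sum_comm]
    simp only [← Finset.mul_sum]
    have A1 : (t/4) * ∑ s, nut (b+c) t s * ∑ k, Infl (b+c) t (slc f s) k ≤
        ∑ s, nut (b+c) t s * (Ex (fun _ => bw (b+c)) (fun x => slc f s x ^2)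
      - Ex (fun _ => nut (b+c) t) (fun X => tld (slc f s) X ^2)) := by
      rw [Finset.mul_sum]
      refine Finset.sum_le_sum fun s _ => ?_
      have := mul_le_mul_of_nonneg_left (ih (slc f s)) (nut_pos P s).le
      linarith
    have A2 := tld_contr P (fun x => slc f (some true) x - slc f (some false) x)
    rw [← I0] at A2
    have A3 : ∑ s, nut (b+c) t s * Ex (fun _ : Fin n => bw (b+c)) (fun x => slc f s x ^2)
        + (t/4) * Ex (fun _ => bw (b+c)) (fun x => (slc f (some true) x - slc f (some false) x)^2)
        = Ex (fun _ => bw (b+c)) (fun x => f x ^2) := by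
      rw [Ex_succ]
      simp only [← Ex_smul, ← Ex_sum, ← Ex_add]
      congr 1
      funext x
      simp only [slc, Fintype.sum_option, Fintype.sum_bool, NN, bw, nut,
        if_true, Bool.false_eq_true, if_false, Bool.true_eq_false]
      ring
    have A4 : ∑ s, nut (b+c) t s * Ex (fun _ : Fin n => nut (b+c) t) (fun X => tld (slc f s) X ^2)
       = Ex (fun _ => nut (b+c) t) (fun X => tld f X ^2) := by
      rw [Ex_succ]; simp only [tld_cons]
    simp only [mul_sub, Finset.sum_sub_distrib] at A1
    rw [A4] at A1
    have := mul_le_mul_of_nonneg_left A2 (by have := P.ht; positivity : 0 ≤ t/4)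
    linarith

theorem inf_sum_le (P : Par a b c t θ) {n : ℕ} (f : (Fin n → Bool) → ℝ) (h : ∀ x, 0 ≤ f x ∧ f x ≤ 1) :
    ∑ k, Infl (b+c) t f k ≤ 4 / t := by
  have h1 := inf_sum P f
  have h2 : Ex (fun _ => bw (b+c)) (fun x => f x ^2) ≤ 1 :=
    Ex_le_one _ (fun _ x => (bw_pos P x).le) (fun _ => bw_sum _) fun x => by
      have := h x; nlinarith
  have h3 : 0 ≤ Ex (fun _ => nut (b+c) t) (fun X => tld f X ^2) :=
    Ex_nonneg _ (fun _ x => (nut_pos P x).le) fun X => sq_nonneg _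
  have := P.ht
  rw [le_div_iff₀ this]
  linarith

theorem upd_map {α β : Type} {n : ℕ} (p : α → β) (x : Fin n → α) (k : Fin n) (s : α) :
    (fun j => p (Function.update x k s j)) = Function.update (fun j => p (x j)) k (p s) := by
  funext j
  by_cases h : j = k
  · subst h; simp
  · simp [h]

theorem lind_diff (a b c t : ℝ) (ψ : ℝ) {n : ℕ} (ϑ : Fin n → ℝ) (f g h : (Fin n → Bool) → ℝ) (k : Fin n)
    (hs : ∀ ϑ, ∑ i, hatl a b c t ϑ i = 1) :
    Ex (fun j => law a b c (Function.update ϑ k ψ j)) (fun x => f (fun k => (x k).1) * g (fun k => (x k).2.1)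
      * h (fun k => (x k).2.2)) - Ex (fun j => law a b c (Function.update ϑ k 0 j)) (fun x => f (fun k => (x k).1) * g (fun k => (x k).2.1)
      * h (fun k => (x k).2.2)) = - ψ * Ex (fun j => hatl a b c t (ϑ j))
        (fun x => dk f k (fun k => (x k).1) * dk g k (fun k => (x k).2.1) * dk h k (fun k => (x k).2.2)) := by
  rw [← bridge a b c t, ← bridge a b c t]
  have e : ∀ r, (fun j => hatl a b c t (Function.update ϑ k r j)) =
      Function.update (fun j => hatl a b c t (ϑ j)) k (hatl a b c t r) := by
    intro r
    exact upd_map (fun r => hatl a b c t r) ϑ k r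
  rw [e, e, Ex_update _ _ (hs _), Ex_update _ _ (hs _)]
  rw [← Finset.sum_sub_distrib]
  have u1 : ∀ (x : Fin n → Option Bool × Option Bool × Option Bool) s,
    (fun j => (Function.update x k s j).1) = Function.update (fun j => (x j).1) k s.1 :=
    fun x s => upd_map (fun z => z.1) x k s
  have u2 : ∀ (x : Fin n → Option Bool × Option Bool × Option Bool) s,
    (fun j => (Function.update x k s j).2.1) = Function.update (fun j => (x j).2.1) k s.2.1 :=
    fun x s => upd_map (fun z => z.2.1) x k s
  have u3 : ∀ (x : Fin n → Option Bool × Option Bool × Option Bool) s,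
    (fun j => (Function.update x k s j).2.2) = Function.update (fun j => (x j).2.2) k s.2.2 :=
    fun x s => upd_map (fun z => z.2.2) x k s
  simp only [u1, u2, u3, ← Ex_smul, ← Ex_sub, ← Ex_sum]
  congr 1
  funext x
  simp only [dk, Fintype.sum_prod_type, Fintype.sum_option, Fintype.sum_bool, hatl, law, mu3, sg]
  ring

theorem ind_bound (P : Par a b c t θ) {n : ℕ} (f : (Fin n → Bool) → ℝ) (k : Fin n) (τ : ℝ) (hτ : 0 < τ) :
    Ex (fun _ => nut (b+c) t) (fun X => if τ < |dk f k X| then (1:ℝ) else 0) ≤ Infl (b+c) t f k / τ^2 := by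
  rw [le_div_iff₀ (by positivity), mul_comm, ← Ex_smul]
  apply Ex_mono _ (fun _ x => (nut_pos P x).le)
  intro X
  split_ifs with h
  · rw [← sq_abs (dk f k X), mul_one]
    exact pow_le_pow_left₀ hτ.le h.le 2
  · rw [mul_zero]; positivity

theorem lind_step (P : Par a b c t θ) (ω η τ : ℝ) (hω : 0 < ω) (hτ : 0 < τ) (hη : 0 < η)
    {n : ℕ} (hS : ∀ F G : (Fin n → Option Bool) → ℝ,
    (∀ x, F x = 0 ∨ F x = 1) → (∀ x, G x = 0 ∨ G x = 1) → Ex (fun _ => nut (b+c) t) G ≤ η →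
      Ex (fun _ => nut (b+c) t) (fun x => F x * TK (KO a b c t) G x)
        ≤ ω * (Ex (fun _ => nut (b+c) t) F + Ex (fun _ => nut (b+c) t) G))
    (ϑ : Fin n → ℝ) (hϑ : ∀ k, 0 ≤ ϑ k ∧ ϑ k ≤ θ) (f g h : (Fin n → Bool) → ℝ)
    (hf : ∀ x, 0 ≤ f x ∧ f x ≤ 1) (hg : ∀ x, 0 ≤ g x ∧ g x ≤ 1) (hh : ∀ x, 0 ≤ h x ∧ h x ≤ 1)
    (k : Fin n) (hI : Infl (b+c) t g k ≤ η * τ^2) :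
    |Ex (fun j => law a b c (Function.update ϑ k θ j)) (fun x => f (fun k => (x k).1) * g (fun k => (x k).2.1)
      * h (fun k => (x k).2.2)) - Ex (fun j => law a b c (Function.update ϑ k 0 j)) (fun x => f (fun k => (x k).1) * g (fun k => (x k).2.1)
      * h (fun k => (x k).2.2))| ≤ θ * (τ + ω/τ^2) * (Infl (b+c) t f k + Infl (b+c) t g k + Infl (b+c) t h k) := by
  rw [lind_diff a b c t θ ϑ f g h k (hatl_sum P), abs_mul, abs_neg, abs_of_pos P.hθ, mul_assoc]
  refine mul_le_mul_of_nonneg_left ?_ P.hθ.le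
  set w : Fin n → Option Bool × Option Bool × Option Bool → ℝ := fun j => hatl a b c t (ϑ j) with hw
  have w0 : ∀ k i, 0 ≤ w k i := fun k i => hatl_nn P _ (hϑ k).1 (hϑ k).2 i
  set A : (Fin n → Option Bool) → ℝ := fun X => if τ < |dk f k X| then (1:ℝ) else 0 with hA
  set B : (Fin n → Option Bool) → ℝ := fun X => if τ < |dk g k X| then (1:ℝ) else 0 with hB
  have A01 : ∀ X, A X = 0 ∨ A X = 1 := fun X => by simp only [hA]; split_ifs <;> simp
  have B01 : ∀ X, B X = 0 ∨ B X = 1 := fun X => by simp only [hB]; split_ifs <;> simp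
  have Ab := ind_bound P f k τ hτ
  have Bb := ind_bound P g k τ hτ
  have Bη : Ex (fun _ => nut (b+c) t) B ≤ η := by
    refine Bb.trans ?_
    rw [div_le_iff₀ (by positivity)]; exact hI
  have hAB := hS A B A01 B01 Bη
  have pl := pair_law w (fun i => i.1) (fun i => i.2.1) (nut (b+c) t) (KO a b c t) (fun k => hat_m12 P (ϑ k)) A B
  rw [← pl] at hAB
  have E1 := one_law w (fun i => i.1) (nut (b+c) t) (fun k => hat_m1 P (ϑ k)) (fun X => dk f k X ^2)
  have E2 := one_law w (fun i => i.2.1) (nut (b+c) t) (fun k => hat_m2 P (ϑ k)) (fun X => dk g k X ^2)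
  have E3 := one_law w (fun i => i.2.2) (nut (b+c) t) (fun k => hat_m3 P (ϑ k)) (fun X => dk h k X ^2)
  have M : Ex w (fun x => |dk f k (fun k => (x k).1) * dk g k (fun k => (x k).2.1) * dk h k (fun k => (x k).2.2)|)
     ≤ Ex w (fun x => (τ/2) * (dk f k (fun k => (x k).1) ^2) + (τ/2) * (dk g k (fun k => (x k).2.1) ^2)
       + τ * (dk h k (fun k => (x k).2.2) ^2) + A (fun k => (x k).1) * B (fun k => (x k).2.1)) := by
    apply Ex_mono _ w0
    intro x
    have fa := dk_abs f hf k (fun k => (x k).1)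
    have ga := dk_abs g hg k (fun k => (x k).2.1)
    have ha := dk_abs h hh k (fun k => (x k).2.2)
    simp only [hA, hB]
    generalize dk f k (fun k => (x k).1) = u at *
    generalize dk g k (fun k => (x k).2.1) = v at *
    generalize dk h k (fun k => (x k).2.2) = z at *
    rw [abs_mul, abs_mul, ← sq_abs u, ← sq_abs v, ← sq_abs z]
    have hu := abs_nonneg u
    have hv := abs_nonneg v
    have hz := abs_nonneg z
    generalize |u| = u at *
    generalize |v| = v at *
    generalize |z| = z at *
    have q1 : 0 ≤ τ * (u - z)^2 := by positivity
    have q2 : 0 ≤ τ * (v - z)^2 := by positivity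
    have q3 : 0 ≤ τ * z^2 := by positivity
    have q4 : 0 ≤ τ * u^2 := by positivity
    have q5 : 0 ≤ τ * v^2 := by positivity
    by_cases h1 : τ < u
    · by_cases h2 : τ < v
      · simp only [h1, h2, if_true]
        have : u * v * z ≤ 1 := mul_le_one₀ (mul_le_one₀ fa hv ga) hz ha
        linarith
      · simp only [h2, if_false, mul_zero]
        have : u * v * z ≤ τ * u * z := by
          have : u * v ≤ τ * u := by nlinarith
          exact mul_le_mul_of_nonneg_right this hz
        nlinarith
    · simp only [h1, if_false, zero_mul]
      have : u * v * z ≤ τ * v * z := by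
        have : u * v ≤ τ * v := by nlinarith
        exact mul_le_mul_of_nonneg_right this hz
      nlinarith
  refine (Ex_abs_le w w0 _).trans (M.trans ?_)
  rw [Ex_add, Ex_add, Ex_add, Ex_smul, Ex_smul, Ex_smul, E1, E2, E3]
  change τ/2 * Infl (b+c) t f k + τ/2 * Infl (b+c) t g k + τ * Infl (b+c) t h k + _ ≤ _
  have F0 := Infl_nn P f k
  have G0 := Infl_nn P g k
  have H0 := Infl_nn P h k
  have h5 : ω * (Ex (fun _ => nut (b+c) t) A + Ex (fun _ => nut (b+c) t) B) ≤
      ω * (Infl (b+c) t f k/τ^2 + Infl (b+c) t g k/τ^2) := by gcongr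
  have h6 : 0 ≤ ω / τ^2 * Infl (b+c) t h k := by positivity
  have e : ω * (Infl (b+c) t f k/τ^2 + Infl (b+c) t g k/τ^2) = ω / τ^2 * (Infl (b+c) t f k + Infl (b+c) t g k) := by
    field_simp
  have h7 : 0 ≤ τ/2 * Infl (b+c) t f k := by positivity
  have h8 : 0 ≤ τ/2 * Infl (b+c) t g k := by positivity
  have hAB' : Ex w (fun x => A (fun k => (x k).1) * B (fun k => (x k).2.1)) ≤
    ω * (Ex (fun _ => nut (b+c) t) A + Ex (fun _ => nut (b+c) t) B) := hAB
  linarith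

theorem lind (P : Par a b c t θ) (η : ℝ) (hη : 0 < η) : ∃ η0 : ℝ, 0 < η0 ∧
    ∀ (n : ℕ) (f g h : (Fin n → Bool) → ℝ) (_ : ∀ x, 0 ≤ f x ∧ f x ≤ 1) (_ : ∀ x, 0 ≤ g x ∧ g x ≤ 1)
      (_ : ∀ x, 0 ≤ h x ∧ h x ≤ 1) (U : Finset (Fin n)), (∀ k ∈ U, Infl (b+c) t g k ≤ η0) →
    |Ex (fun j => law a b c (if j ∈ U then θ else 0)) (fun x => f (fun k => (x k).1) * g (fun k => (x k).2.1)
      * h (fun k => (x k).2.2)) - Ex (fun _ => law a b c 0) (fun x => f (fun k => (x k).1) * g (fun k => (x k).2.1)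
      * h (fun k => (x k).2.2))| ≤ η := by
  have hθ := P.hθ
  have ht := P.ht
  obtain ⟨τ, hτ, hτη⟩ : ∃ τ : ℝ, 0 < τ ∧ θ * (τ + τ) * (12/t) = η := by
    refine ⟨η * t / (24 * θ), by positivity, ?_⟩
    field_simp; ring
  obtain ⟨η1, hη1, H⟩ := SSE_pair (rev_KO P) (SSE_KO P) (τ^3) (by positivity)
  refine ⟨η1 * τ^2, by positivity, fun n f g h hf hg hh U hU => ?_⟩
  have key : ∀ U : Finset (Fin n), (∀ k ∈ U, Infl (b+c) t g k ≤ η1 * τ^2) →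
    |Ex (fun j => law a b c (if j ∈ U then θ else 0)) (fun x => f (fun k => (x k).1) * g (fun k => (x k).2.1)
      * h (fun k => (x k).2.2)) - Ex (fun _ => law a b c 0) (fun x => f (fun k => (x k).1) * g (fun k => (x k).2.1)
      * h (fun k => (x k).2.2))| ≤ θ * (τ + τ) * ∑ k ∈ U, (Infl (b+c) t f k + Infl (b+c) t g k + Infl (b+c) t h k) := by
    intro U
    induction U using Finset.induction_on with
    | empty => intro _; simp
    | insert k U hk ih =>
      intro hU
      have ih' := ih fun j hj => hU j (Finset.mem_insert_of_mem hj)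
      have st := lind_step P (τ^3) η1 τ (by positivity) hτ hη1 (H n) (fun j => if j ∈ U then θ else 0)
        (fun j => by split_ifs <;> constructor <;> linarith) f g h hf hg hh k (hU k (Finset.mem_insert_self _ _))
      have e1 : ∀ j, Function.update (fun j => if j ∈ U then θ else 0) k θ j = if j ∈ insert k U then θ else 0 := by
        intro j
        by_cases hj : j = k
        · subst hj; simp
        · simp [hj]
      have e2 : ∀ j, Function.update (fun j => if j ∈ U then θ else 0) k 0 j = if j ∈ U then θ else 0 := by
        intro j
        by_cases hj : j = k
        · subst hj; simp [hk]
        · simp [hj]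
      simp only [e1, e2] at st
      rw [Finset.sum_insert hk, mul_add]
      have e3 : τ^3/τ^2 = τ := by field_simp
      rw [e3] at st
      refine le_trans ?_ (add_le_add st ih')
      exact abs_sub_le _ _ _
  refine (key U hU).trans ?_
  rw [← hτη]
  refine mul_le_mul_of_nonneg_left ?_ (by positivity)
  have : ∑ k ∈ U, (Infl (b+c) t f k + Infl (b+c) t g k + Infl (b+c) t h k) ≤
    ∑ k, (Infl (b+c) t f k + Infl (b+c) t g k + Infl (b+c) t h k) :=
    Finset.sum_le_sum_of_subset_of_nonneg (Finset.subset_univ _) fun k _ _ =>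
      add_nonneg (add_nonneg (Infl_nn P _ _) (Infl_nn P _ _)) (Infl_nn P _ _)
  refine this.trans ?_
  rw [Finset.sum_add_distrib, Finset.sum_add_distrib]
  have := inf_sum_le P f hf
  have := inf_sum_le P g hg
  have := inf_sum_le P h hh
  have e : 12/t = 4/t+4/t+4/t := by ring
  linarith

end

def T3 {n : ℕ} (f g h : (Fin n → Bool) → ℝ) (x : Fin n → Bool × Bool × Bool) : ℝ :=
  f (fun k => (x k).1) * g (fun k => (x k).2.1) * h (fun k => (x k).2.2)

noncomputable def m1 (q : ℝ) {n : ℕ} (f : (Fin n → Bool) → ℝ) : ℝ := Ex (fun _ => bw q) f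

noncomputable def L3 (a b c ϑ : ℝ) {n : ℕ} (f g h : (Fin n → Bool) → ℝ) : ℝ :=
  Ex (fun _ => law a b c ϑ) (T3 f g h)

def ov {n : ℕ} (J : Finset (Fin n)) (α : Fin n → Bool) (f : (Fin n → Bool) → ℝ) : (Fin n → Bool) → ℝ :=
  fun v => f (J.piecewise α v)

def Ind {n : ℕ} (f : (Fin n → Bool) → ℝ) : Prop := ∀ x, f x = 0 ∨ f x = 1

noncomputable def Bad (a b c : ℝ) {n : ℕ} (f g h : (Fin n → Bool) → ℝ) : ℝ :=
  L3 a b c 0 f g (fun x => 1 - h x) + L3 a b c 0 f (fun x => 1 - g x) h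
    + L3 a b c 0 (fun x => 1 - f x) g h

section
variable {n : ℕ}

theorem Ind.nn {f : (Fin n → Bool) → ℝ} (h : Ind f) (x) : 0 ≤ f x := by
  rcases h x with h | h <;> rw [h]; norm_num
theorem Ind.le {f : (Fin n → Bool) → ℝ} (h : Ind f) (x) : f x ≤ 1 := by
  rcases h x with h | h <;> rw [h]; norm_num
theorem Ind.compl {f : (Fin n → Bool) → ℝ} (h : Ind f) : Ind (fun x => 1 - f x) := by
  intro x; rcases h x with h | h <;> simp [h]
theorem Ind.ov {f : (Fin n → Bool) → ℝ} (h : Ind f) (J : Finset (Fin n)) (α : Fin n → Bool) : Ind (ov J α f) :=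
  fun _ => h _
theorem Ind.one : Ind (fun _ : Fin n → Bool => (1:ℝ)) := fun _ => Or.inr rfl

theorem T3_def (f g h : (Fin n → Bool) → ℝ) : T3 f g h = fun x =>
    f (fun k => (x k).1) * g (fun k => (x k).2.1) * h (fun k => (x k).2.2) := rfl

theorem T3_ov (J : Finset (Fin n)) (u v : Fin n → Bool × Bool × Bool) (f g h : (Fin n → Bool) → ℝ) :
    T3 f g h (J.piecewise u v) = T3 (ov J (fun k => (u k).1) f) (ov J (fun k => (u k).2.1) g)
      (ov J (fun k => (u k).2.2) h) v := by
  have e : ∀ p : Bool × Bool × Bool → Bool, (fun k => p (J.piecewise u v k)) =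
      J.piecewise (fun k => p (u k)) (fun k => p (v k)) := by
    intro p; funext k
    by_cases hk : k ∈ J <;> simp [hk]
  unfold T3 ov
  rw [e (fun i => i.1), e (fun i => i.2.1), e (fun i => i.2.2)]

theorem T3_ind {f g h : (Fin n → Bool) → ℝ} (hf : Ind f) (hg : Ind g) (hh : Ind h) (x) :
    T3 f g h x = 0 ∨ T3 f g h x = 1 := by
  unfold T3
  rcases hf (fun k => (x k).1) with h1 | h1 <;> rcases hg (fun k => (x k).2.1) with h2 | h2 <;>
    rcases hh (fun k => (x k).2.2) with h3 | h3 <;> simp [h1, h2, h3]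

variable {a b c t θ : ℝ}

theorem law0 (a b c : ℝ) : law a b c 0 = mu3 a b c := by funext i; simp [law]

theorem m1_nn (P : Par a b c t θ) {f : (Fin n → Bool) → ℝ} (h : ∀ x, 0 ≤ f x) : 0 ≤ m1 (b+c) f :=
  Ex_nonneg _ (fun _ x => (bw_pos P x).le) h

theorem m1_mono (P : Par a b c t θ) {f g : (Fin n → Bool) → ℝ} (h : ∀ x, f x ≤ g x) : m1 (b+c) f ≤ m1 (b+c) g :=
  Ex_mono _ (fun _ x => (bw_pos P x).le) h

theorem m1_le (P : Par a b c t θ) {f : (Fin n → Bool) → ℝ} (h : ∀ x, f x ≤ 1) : m1 (b+c) f ≤ 1 :=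
  Ex_le_one _ (fun _ x => (bw_pos P x).le) (fun _ => bw_sum _) h

theorem m1_compl (q : ℝ) (f : (Fin n → Bool) → ℝ) : m1 q (fun x => 1 - f x) = 1 - m1 q f :=
  Ex_compl _ (fun _ => bw_sum _) f

theorem l_m1 (P : Par a b c t θ) (ϑ : Fin n → ℝ) (f : (Fin n → Bool) → ℝ) :
    Ex (fun k => law a b c (ϑ k)) (fun x => f (fun k => (x k).1)) = m1 (b+c) f :=
  one_law _ (fun i : Bool × Bool × Bool => i.1) (bw (b+c)) (fun k x => law_m1 P _ x) f
theorem l_m2 (P : Par a b c t θ) (ϑ : Fin n → ℝ) (f : (Fin n → Bool) → ℝ) :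
    Ex (fun k => law a b c (ϑ k)) (fun x => f (fun k => (x k).2.1)) = m1 (b+c) f :=
  one_law _ (fun i : Bool × Bool × Bool => i.2.1) (bw (b+c)) (fun k x => law_m2 P _ x) f
theorem l_m3 (P : Par a b c t θ) (ϑ : Fin n → ℝ) (f : (Fin n → Bool) → ℝ) :
    Ex (fun k => law a b c (ϑ k)) (fun x => f (fun k => (x k).2.2)) = m1 (b+c) f :=
  one_law _ (fun i : Bool × Bool × Bool => i.2.2) (bw (b+c)) (fun k x => law_m3 P _ x) f

noncomputable def PK (a b c : ℝ) (f g : (Fin n → Bool) → ℝ) : ℝ :=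
  Ex (fun _ => bw (b+c)) (fun x => f x * TK (KB a b c) g x)

theorem l_m12 (P : Par a b c t θ) (ϑ : Fin n → ℝ) (f g : (Fin n → Bool) → ℝ) :
    Ex (fun k => law a b c (ϑ k)) (fun x => f (fun k => (x k).1) * g (fun k => (x k).2.1)) = PK a b c f g :=
  pair_law _ (fun i : Bool × Bool × Bool => i.1) (fun i : Bool × Bool × Bool => i.2.1) (bw (b+c)) _ (fun k x y => law_m12 P _ x y) f g
theorem l_m13 (P : Par a b c t θ) (ϑ : Fin n → ℝ) (f g : (Fin n → Bool) → ℝ) :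
    Ex (fun k => law a b c (ϑ k)) (fun x => f (fun k => (x k).1) * g (fun k => (x k).2.2)) = PK a b c f g :=
  pair_law _ (fun i : Bool × Bool × Bool => i.1) (fun i : Bool × Bool × Bool => i.2.2) (bw (b+c)) _ (fun k x y => law_m13 P _ x y) f g
theorem l_m23 (P : Par a b c t θ) (ϑ : Fin n → ℝ) (f g : (Fin n → Bool) → ℝ) :
    Ex (fun k => law a b c (ϑ k)) (fun x => f (fun k => (x k).2.1) * g (fun k => (x k).2.2)) = PK a b c f g :=
  pair_law _ (fun i : Bool × Bool × Bool => i.2.1) (fun i : Bool × Bool × Bool => i.2.2) (bw (b+c)) _ (fun k x y => law_m23 P _ x y) f g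

def RevA (a b c θ : ℝ) (A : ℕ) : Prop := 1 ≤ A ∧ ∀ (n : ℕ) (f g h : (Fin n → Bool) → ℝ), Ind f → Ind g → Ind h →
    (m1 (b+c) f * m1 (b+c) g * m1 (b+c) h) ^ A ≤ L3 a b c θ f g h

theorem revA (P : Par a b c t θ) : ∃ A : ℕ, RevA a b c θ A := by
  obtain ⟨A, hA, hG⟩ := good_of_full (law a b c θ) (b+c) P.q0 (by linarith [P.q1]) (law_pos P)
    (law_m1 P θ) (law_m2 P θ) (law_m3 P θ)
  refine ⟨A, hA, fun n f g h hf hg hh => ?_⟩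
  have := good_tensor A (fun _ : Fin n => law a b c θ) (fun _ i => (law_pos P i).le) (fun _ => hG) f g h
    hf.nn hg.nn hh.nn
  have e1 := l_m1 P (fun _ : Fin n => θ) f
  have e2 := l_m2 P (fun _ : Fin n => θ) g
  have e3 := l_m3 P (fun _ : Fin n => θ) h
  rw [e1, e2, e3] at this
  refine this.trans (le_of_eq ?_)
  unfold L3
  congr 1
  funext x
  rcases T3_ind hf hg hh x with h1 | h1 <;> unfold T3 at h1 ⊢ <;> rw [h1] <;> simp
  omega

theorem RevA.pair (P : Par a b c t θ) {A : ℕ} (hA : RevA a b c θ A) {f g : (Fin n → Bool) → ℝ} (hf : Ind f) (hg : Ind g) :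
    (m1 (b+c) f * m1 (b+c) g) ^ A ≤ PK a b c f g := by
  have := hA.2 n f g _ hf hg Ind.one
  have e : m1 (b+c) (fun _ : Fin n → Bool => (1:ℝ)) = 1 := Ex_const _ (fun _ => bw_sum _) 1
  rw [e, mul_one] at this
  refine this.trans (le_of_eq ?_)
  rw [← l_m12 P (fun _ => θ)]
  simp [L3, T3_def]

theorem pat (P : Par a b c t θ) (ε e1 : ℝ) (hε : 0 < ε) (he : 0 < e1) (he2 : e1 ≤ 1/2) :
    ∃ N : ℕ, ∃ δ0 : ℝ, 0 < δ0 ∧ ∀ (n : ℕ) (f g h : (Fin n → Bool) → ℝ), Ind f → Ind g → Ind h →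
      Bad a b c f g h ≤ δ0 → ε ≤ m1 (b+c) f → ε ≤ m1 (b+c) g →
      ∃ J : Finset (Fin n), J.card ≤ N ∧ ∃ u : Fin n → Bool × Bool × Bool, (∀ k, 0 < mu3 a b c (u k)) ∧
        1 - e1 ≤ m1 (b+c) (ov J (fun k => (u k).1) f) ∧
        1 - e1 ≤ m1 (b+c) (ov J (fun k => (u k).2.1) g) ∧
        1 - e1 ≤ m1 (b+c) (ov J (fun k => (u k).2.2) h) := by
  obtain ⟨A, hA⟩ := revA P
  set c0 : ℝ := min 1 ((ε * ε) ^ A) with hc0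
  have c0p : 0 < c0 := lt_min one_pos (by positivity)
  have c01 : c0 ≤ 1 := min_le_left _ _
  set D : ℝ := (c0/4 * (c0/4) * e1) ^ A with hD
  have Dp : 0 < D := by positivity
  set η : ℝ := c0 * D / 8 with hη
  have ηp : 0 < η := by positivity
  obtain ⟨η0, h0p, hl⟩ := lind P η ηp
  refine ⟨⌊4 / (t * η0)⌋₊, η, ηp, fun n f g h hf hg hh hB hmf hmg => ?_⟩
  classical
  set J : Finset (Fin n) := Finset.univ.filter (fun k => η0 < Infl (b+c) t g k) with hJ
  have hJ2 : ∀ k ∈ Jᶜ, Infl (b+c) t g k ≤ η0 := by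
    intro k hk; simpa [hJ] using hk
  have b01 : ∀ {f : (Fin n → Bool) → ℝ}, Ind f → ∀ x, 0 ≤ f x ∧ f x ≤ 1 := fun h x => ⟨h.nn x, h.le x⟩
  refine ⟨J, ?_, ?_⟩
  · refine Nat.le_floor ?_
    have s1 := inf_sum_le P g (b01 hg)
    have s2 : ∑ k ∈ J, η0 ≤ ∑ k ∈ J, Infl (b+c) t g k :=
      Finset.sum_le_sum fun k hk => by simp [hJ] at hk; exact hk.le
    have s3 : ∑ k ∈ J, Infl (b+c) t g k ≤ ∑ k, Infl (b+c) t g k :=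
      Finset.sum_le_sum_of_subset_of_nonneg (Finset.subset_univ _) fun k _ _ => Infl_nn P _ _
    rw [Finset.sum_const, nsmul_eq_mul] at s2
    have ht := P.ht
    have s4 := s2.trans (s3.trans s1)
    rw [le_div_iff₀ ht] at s4
    rw [le_div_iff₀ (by positivity)]
    nlinarith
  have sum0 : ∀ _ : Fin n, ∑ i, law a b c 0 i = 1 := fun _ => law_sum P 0
  have sumθ : ∀ _ : Fin n, ∑ i, law a b c θ i = 1 := fun _ => law_sum P θ
  have ew : (fun j => law a b c (if j ∈ Jᶜ then θ else 0)) =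
      J.piecewise (fun _ => law a b c 0) (fun _ => law a b c θ) := by
    funext j
    by_cases hj : j ∈ J <;> simp [hj]
  -- iterated expectation
  have it : ∀ f g h : (Fin n → Bool) → ℝ, Ex (fun j => law a b c (if j ∈ Jᶜ then θ else 0)) (T3 f g h)
      = Ex (fun _ => law a b c 0) (fun u => L3 a b c θ (ov J (fun k => (u k).1) f) (ov J (fun k => (u k).2.1) g)
      (ov J (fun k => (u k).2.2) h)) := by
    intro f g h
    rw [ew, Ex_piecewise J _ _ sum0 sumθ]
    simp only [T3_ov]
    rfl
  have lb : ∀ f g' h : (Fin n → Bool) → ℝ, Ind f → Ind g' → Ind h → (∀ k, Infl (b+c) t g' k = Infl (b+c) t g k) →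
      Ex (fun _ => law a b c 0) (fun u => L3 a b c θ (ov J (fun k => (u k).1) f) (ov J (fun k => (u k).2.1) g')
      (ov J (fun k => (u k).2.2) h)) ≤ L3 a b c 0 f g' h + η := by
    intro f g' h hf hg' hh hi
    rw [← it]
    have := hl n f g' h (b01 hf) (b01 hg') (b01 hh) Jᶜ (fun k hk => by rw [hi]; exact hJ2 k hk)
    have := (abs_le.1 this).2
    unfold L3 T3
    linarith
  have B1 := lb f g _ hf hg hh.compl (fun _ => rfl)
  have B2 := lb f _ h hf hg.compl hh (fun k => Infl_compl _ _ _ _)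
  have B3 := lb _ g h hf.compl hg hh (fun _ => rfl)
  have W0 : c0 ≤ Ex (fun _ => law a b c 0) (fun u => L3 a b c θ (ov J (fun k => (u k).1) f) (ov J (fun k => (u k).2.1) g)
      (ov J (fun k => (u k).2.2) (fun _ => 1))) := by
    rw [← it]
    have e : T3 f g (fun _ => 1) = (fun x => f (fun k => (x k).1) * g (fun k => (x k).2.1)) := by
      funext x; simp [T3]
    rw [e, l_m12 P]
    refine le_trans ?_ (hA.pair P hf hg)
    refine (min_le_right _ _).trans ?_
    have := hε.le
    have := m1_nn P hf.nn
    gcongr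
  set W := fun u : Fin n → Bool × Bool × Bool => L3 a b c θ (ov J (fun k => (u k).1) f) (ov J (fun k => (u k).2.1) g)
      (ov J (fun k => (u k).2.2) (fun _ => 1)) with hW
  set Q1 := fun u : Fin n → Bool × Bool × Bool => L3 a b c θ (ov J (fun k => (u k).1) f) (ov J (fun k => (u k).2.1) g)
      (ov J (fun k => (u k).2.2) (fun x => 1 - h x)) with hQ1
  set Q2 := fun u : Fin n → Bool × Bool × Bool => L3 a b c θ (ov J (fun k => (u k).1) f) (ov J (fun k => (u k).2.1) (fun x => 1 - g x))
      (ov J (fun k => (u k).2.2) h) with hQ2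
  set Q3 := fun u : Fin n → Bool × Bool × Bool => L3 a b c θ (ov J (fun k => (u k).1) (fun x => 1 - f x)) (ov J (fun k => (u k).2.1) g)
      (ov J (fun k => (u k).2.2) h) with hQ3
  have pos : 0 < Ex (fun _ => law a b c 0) (fun u => W u - (1/D * (Q1 u + Q2 u + Q3 u) + c0/4)) := by
    rw [Ex_sub, Ex_add, Ex_smul, Ex_add, Ex_add, Ex_const _ sum0]
    have hb : Ex (fun _ => law a b c 0) Q1 + Ex (fun _ => law a b c 0) Q2 + Ex (fun _ => law a b c 0) Q3 ≤ 4 * η := by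
      unfold Bad at hB
      linarith
    have : 1/D * (Ex (fun _ => law a b c 0) Q1 + Ex (fun _ => law a b c 0) Q2 + Ex (fun _ => law a b c 0) Q3) ≤ 1/D * (4*η) :=
      mul_le_mul_of_nonneg_left hb (by positivity)
    have e : 1/D * (4*η) = c0/2 := by rw [hη]; field_simp; norm_num
    linarith
  obtain ⟨u, hu, hpos⟩ := Ex_exists_pos _ (fun _ i => law_nn P 0 le_rfl P.hθ.le i) _ pos
  rw [law0] at hu
  refine ⟨u, hu, ?_⟩
  set f' := ov J (fun k => (u k).1) f with hf'
  set g' := ov J (fun k => (u k).2.1) g with hg'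
  set h' := ov J (fun k => (u k).2.2) h with hh'
  have If : Ind f' := hf.ov _ _
  have Ig : Ind g' := hg.ov _ _
  have Ih : Ind h' := hh.ov _ _
  have nnL : ∀ f g h : (Fin n → Bool) → ℝ, Ind f → Ind g → Ind h → 0 ≤ L3 a b c θ f g h := fun f g h hf hg hh =>
    Ex_nonneg _ (fun _ i => (law_pos P i).le) fun x => by
      rcases T3_ind hf hg hh x with h | h <;> rw [h]; norm_num
  have n1 : 0 ≤ Q1 u := nnL _ _ _ If Ig Ih.compl
  have n2 : 0 ≤ Q2 u := nnL _ _ _ If Ig.compl Ih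
  have n3 : 0 ≤ Q3 u := nnL _ _ _ If.compl Ig Ih
  have eW : W u = Ex (fun _ => law a b c θ) (fun x => f' (fun k => (x k).1) * g' (fun k => (x k).2.1)) := by
    simp only [hW, L3, T3_def, ov, mul_one, hf', hg']
  have Wf : W u ≤ m1 (b+c) f' := by
    rw [eW, ← l_m1 P (fun _ => θ)]
    exact Ex_mono _ (fun _ i => (law_pos P i).le) fun x =>
      mul_le_of_le_one_right (If.nn _) (Ig.le _)
  have Wg : W u ≤ m1 (b+c) g' := by
    rw [eW, ← l_m2 P (fun _ => θ)]
    exact Ex_mono _ (fun _ i => (law_pos P i).le) fun x =>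
      mul_le_of_le_one_left (Ig.nn _) (If.le _)
  have Wl : W u ≤ 1 := Wf.trans (m1_le P If.le)
  have r1 : (m1 (b+c) f' * m1 (b+c) g' * m1 (b+c) (fun x => 1 - h' x)) ^ A ≤ Q1 u := hA.2 n _ _ _ If Ig Ih.compl
  have r2 : (m1 (b+c) f' * m1 (b+c) (fun x => 1 - g' x) * m1 (b+c) h') ^ A ≤ Q2 u := hA.2 n _ _ _ If Ig.compl Ih
  have r3 : (m1 (b+c) (fun x => 1 - f' x) * m1 (b+c) g' * m1 (b+c) h') ^ A ≤ Q3 u := hA.2 n _ _ _ If.compl Ig Ih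
  have sb : Q1 u + Q2 u + Q3 u < D := by
    have : 1/D * (Q1 u + Q2 u + Q3 u) < 1 := by linarith
    rw [div_mul_eq_mul_div, one_mul, div_lt_one Dp] at this
    exact this
  have Wc : c0/4 ≤ W u := by
    have : 0 ≤ 1/D * (Q1 u + Q2 u + Q3 u) := by positivity
    linarith
  have Xc := Wc.trans Wf
  have Yc := Wc.trans Wg
  rw [m1_compl] at r1 r2 r3
  have key : ∀ x y z s : ℝ, c0/4 ≤ x → c0/4 ≤ y → (x*y*z)^A ≤ s → s < D → z ≤ e1 := by
    intro x y z s hx hy h1 h2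
    by_contra hc
    push Not at hc
    have hx0 : 0 ≤ x := by linarith
    have hy0 : 0 ≤ y := by linarith
    have hxy := mul_nonneg hx0 hy0
    have : D ≤ (x*y*z)^A := by
      rw [hD]; gcongr
    linarith
  have Zc : 1 - m1 (b+c) h' ≤ e1 := key _ _ _ _ Xc Yc r1 (by linarith)
  have Zc' : c0/4 ≤ m1 (b+c) h' := by linarith
  have Yc2 : 1 - m1 (b+c) g' ≤ e1 := key _ _ _ _ Xc Zc' (by rwa [mul_right_comm]) (show Q2 u < D by linarith)
  have Xc2 : 1 - m1 (b+c) f' ≤ e1 := key _ _ _ (Q3 u) Yc Zc' (by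
    rwa [mul_comm, ← mul_assoc]) (by linarith)
  exact ⟨by linarith, by linarith, by linarith⟩

end

def bandv {n : ℕ} (x y : Fin n → Bool) : Fin n → Bool := fun k => x k && y k

def wt {n : ℕ} (x : Fin n → Bool) : ℕ := (Finset.univ.filter (fun k => x k = true)).card

def spt (i : Bool × Bool × Bool) : Prop :=
  (i.1 = true → i.2.1 = true → i.2.2 = true) ∧ (i.1 = true → i.2.2 = true → i.2.1 = true) ∧
    (i.2.1 = true → i.2.2 = true → i.1 = true)

section
variable {n : ℕ}

theorem wt_le (x y : Fin n → Bool) : wt (bandv x y) ≤ wt x := by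
  apply Finset.card_le_card
  intro k; simp [bandv]; tauto

theorem bandv_comm (x y : Fin n → Bool) : bandv x y = bandv y x := by
  funext k; simp [bandv, Bool.and_comm]

theorem wt_eq (x y : Fin n → Bool) (h : wt x ≤ wt (bandv x y)) (k : Fin n) (hk : x k = true) : y k = true := by
  have hs : Finset.univ.filter (fun k => bandv x y k = true) ⊆ Finset.univ.filter (fun k => x k = true) := by
    intro k; simp [bandv]; tauto
  have := Finset.eq_of_subset_of_card_le hs h
  have hm : k ∈ Finset.univ.filter (fun k => x k = true) := by simpa using hk
  rw [← this] at hm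
  simp [bandv] at hm
  exact hm.2

theorem spt_band (x y : Bool) : spt (x, y, x && y) := by revert x y; unfold spt; decide
theorem spt_band2 (x y : Bool) : spt (x, x && y, y) := by revert x y; unfold spt; decide
theorem spt_band3 (x y : Bool) : spt (x && y, x, y) := by revert x y; unfold spt; decide

theorem exact_poly (F G H : (Fin n → Bool) → Prop)
    (hp : ∀ x y z : Fin n → Bool, (∀ k, spt (x k, y k, z k)) →
      (F x → G y → H z) ∧ (F x → H z → G y) ∧ (G y → H z → F x))
    (hF : ∃ x, F x) (hG : ∃ x, G x) (hH : ∃ x, H x) :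
    ∃ S : Finset (Fin n), ∀ x, (F x ↔ ∀ s ∈ S, x s = true) ∧ (G x ↔ ∀ s ∈ S, x s = true) ∧
      (H x ↔ ∀ s ∈ S, x s = true) := by
  have mn : ∀ F : (Fin n → Bool) → Prop, (∃ x, F x) → ∃ x, F x ∧ ∀ y, F y → wt x ≤ wt y := by
    intro F hF
    obtain ⟨x, hx, hm⟩ := Set.exists_min_image {x | F x} wt (Set.toFinite _) hF
    exact ⟨x, hx, hm⟩
  have h12 : ∀ x y, F x → G y → H (bandv x y) := fun x y hx hy =>
    (hp x y _ (fun k => spt_band _ _)).1 hx hy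
  have h13 : ∀ x y, F x → H y → G (bandv x y) := fun x y hx hy =>
    (hp x _ y (fun k => spt_band2 _ _)).2.1 hx hy
  have h23 : ∀ x y, G x → H y → F (bandv x y) := fun x y hx hy =>
    (hp _ x y (fun k => spt_band3 _ _)).2.2 hx hy
  obtain ⟨x, hx, mx⟩ := mn F hF
  obtain ⟨y, hy, my⟩ := mn G hG
  obtain ⟨z, hz, mz⟩ := mn H hH
  have a1 := mz _ (h12 x y hx hy)
  have a2 := my _ (h13 x z hx hz)
  have a3 := mx _ (h23 y z hy hz)
  have b1 := wt_le x y
  have b2 := wt_le x z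
  have b3 := wt_le y z
  have b1' := wt_le y x
  have b2' := wt_le z x
  have b3' := wt_le z y
  rw [bandv_comm] at b1' b2' b3'
  have exy : x = y := by
    funext k
    rw [Bool.eq_iff_iff]
    exact ⟨wt_eq x y (by omega) k, wt_eq y x (by rw [bandv_comm]; omega) k⟩
  have exz : x = z := by
    funext k
    rw [Bool.eq_iff_iff]
    exact ⟨wt_eq x z (by omega) k, wt_eq z x (by rw [bandv_comm]; omega) k⟩
  subst exy
  subst exz
  refine ⟨Finset.univ.filter (fun k => x k = true), fun w => ⟨⟨fun hw => ?_, fun hw => ?_⟩,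
    ⟨fun hw => ?_, fun hw => ?_⟩, ⟨fun hw => ?_, fun hw => ?_⟩⟩⟩
  · have := mz _ (h12 w x hw hy)
    rw [bandv_comm] at this
    intro s hs
    exact wt_eq x w this s (by simpa using hs)
  · refine (hp w x x fun k => ?_).2.2 hy hz
    have := hw k
    simp at this
    unfold spt; simp; tauto
  · have := mz _ (h12 x w hx hw)
    intro s hs
    exact wt_eq x w this s (by simpa using hs)
  · refine (hp x w x fun k => ?_).2.1 hx hz
    have := hw k
    simp at this
    unfold spt; simp; tauto
  · have := my _ (h13 x w hx hw)
    intro s hs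
    exact wt_eq x w this s (by simpa using hs)
  · refine (hp x x w fun k => ?_).1 hx hy
    have := hw k
    simp at this
    unfold spt; simp; tauto

open scoped Classical in
noncomputable def andS (S : Finset (Fin n)) (x : Fin n → Bool) : ℝ := if ∀ s ∈ S, x s = true then 1 else 0

noncomputable def dis (f : (Fin n → Bool) → ℝ) (S : Finset (Fin n)) (x : Fin n → Bool) : ℝ := |f x - andS S x|

variable {a b c t θ : ℝ}

theorem close_of (P : Par a b c t θ) (ζ : ℝ) (J S : Finset (Fin n)) (f : (Fin n → Bool) → ℝ) (hf : Ind f)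
    (hd : ∀ α, m1 (b+c) (ov J α f) ≤ ζ ∨ 1 - ζ ≤ m1 (b+c) (ov J α f)) (hζ : ζ < 1/2)
    (hS : ∀ α, 1/2 ≤ m1 (b+c) (ov J α f) ↔ ∀ s ∈ S, α s = true) : m1 (b+c) (dis f S) ≤ ζ := by
  have e : m1 (b+c) (dis f S) = Ex (fun _ => bw (b+c)) (fun u => Ex (fun _ => bw (b+c))
      (fun v => dis f S (J.piecewise u v))) := by
    rw [← Ex_piecewise J _ _ (fun _ => bw_sum _) (fun _ => bw_sum _)]
    unfold m1
    congr 1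
    funext k
    by_cases hk : k ∈ J <;> simp [hk]
  rw [e]
  have e2 : ∀ u v, andS S (J.piecewise u v) = andS S u := by
    intro u v
    have hov : ov J (J.piecewise u v) f = ov J u f := by
      funext w
      unfold ov
      congr 1
      funext k
      by_cases hk : k ∈ J <;> simp [hk]
    have hi : (∀ s ∈ S, J.piecewise u v s = true) ↔ (∀ s ∈ S, u s = true) := by
      rw [← hS, ← hS, hov]
    unfold andS
    by_cases hc : ∀ s ∈ S, u s = true
    · rw [if_pos hc, if_pos (hi.2 hc)]
    · rw [if_neg hc, if_neg (fun h => hc (hi.1 h))]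
  refine le_trans (Ex_mono (G := fun _ => ζ) _ (fun _ x => (bw_pos P x).le) fun u => ?_)
    (Ex_const _ (fun _ => bw_sum _) ζ).le
  unfold dis
  simp only [e2]
  by_cases hu : 1/2 ≤ m1 (b+c) (ov J u f)
  · have : andS S u = 1 := by unfold andS; rw [if_pos ((hS u).1 hu)]
    rw [this]
    have e3 : (fun v => |f (J.piecewise u v) - 1|) = fun v => 1 - ov J u f v := by
      funext v
      rw [abs_of_nonpos (by linarith [hf.le (J.piecewise u v)])]
      unfold ov; ring
    rw [e3, Ex_compl _ (fun _ => bw_sum _)]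
    have := hd u
    unfold m1 at this hu
    rcases this with h | h <;> linarith
  · have : andS S u = 0 := by unfold andS; rw [if_neg (fun h => hu ((hS u).2 h))]
    rw [this]
    have e3 : (fun v => |f (J.piecewise u v) - 0|) = ov J u f := by
      funext v
      rw [sub_zero, abs_of_nonneg (hf.nn _)]
      rfl
    rw [e3]
    rcases hd u with h | h
    · exact h
    · exfalso; apply hu; linarith

theorem T3_nn {f g h : (Fin n → Bool) → ℝ} (hf : Ind f) (hg : Ind g) (hh : Ind h) (x) : 0 ≤ T3 f g h x := by
  rcases T3_ind hf hg hh x with h | h <;> rw [h]; norm_num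

theorem L3_nn (P : Par a b c t θ) {f g h : (Fin n → Bool) → ℝ} (hf : Ind f) (hg : Ind g) (hh : Ind h) :
    0 ≤ L3 a b c 0 f g h :=
  Ex_nonneg _ (fun _ i => law_nn P 0 le_rfl P.hθ.le i) fun x => T3_nn hf hg hh x

theorem mu3_low (i : Bool × Bool × Bool) (h : spt i) : min a (min b c) ≤ mu3 a b c i := by
  obtain ⟨x, y, z⟩ := i
  unfold spt at h
  cases x <;> cases y <;> cases z <;> simp [mu3] at h ⊢

theorem spt_of (i : Bool × Bool × Bool) (h : 0 < mu3 a b c i) : spt i := by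
  obtain ⟨x, y, z⟩ := i
  unfold spt
  cases x <;> cases y <;> cases z <;> simp [mu3] at h ⊢

theorem L3_ov (P : Par a b c t θ) {f g h : (Fin n → Bool) → ℝ} (hf : Ind f) (hg : Ind g) (hh : Ind h)
    (J : Finset (Fin n)) (N : ℕ) (hN : J.card ≤ N) (x y z : Fin n → Bool) (hs : ∀ k, spt (x k, y k, z k)) :
    (min a (min b c)) ^ N * L3 a b c 0 (ov J x f) (ov J y g) (ov J z h) ≤ L3 a b c 0 f g h := by
  have m0 : 0 < min a (min b c) := lt_min P.ha (lt_min P.hb P.hc)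
  have m1' : min a (min b c) ≤ 1 := (min_le_left _ _).trans (by have := P.sum; have := P.hb; have := P.hc; linarith)
  have h1 := Ex_pattern J (fun _ => law a b c 0) (fun _ i => law_nn P 0 le_rfl P.hθ.le i) (fun _ => law_sum P 0)
    (fun k => (x k, y k, z k)) (min a (min b c)) m0.le (fun k _ => by rw [law0]; exact mu3_low _ (hs k))
    (T3 f g h) (T3_nn hf hg hh)
  simp only [T3_ov] at h1
  refine le_trans (mul_le_mul_of_nonneg_right (pow_le_pow_of_le_one m0.le m1' hN) ?_) h1
  exact L3_nn P (hf.ov _ _) (hg.ov _ _) (hh.ov _ _)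

theorem Bad_ov (P : Par a b c t θ) {f g h : (Fin n → Bool) → ℝ} (hf : Ind f) (hg : Ind g) (hh : Ind h)
    (J : Finset (Fin n)) (N : ℕ) (hN : J.card ≤ N) (x y z : Fin n → Bool) (hs : ∀ k, spt (x k, y k, z k)) :
    (min a (min b c)) ^ N * Bad a b c (ov J x f) (ov J y g) (ov J z h) ≤ Bad a b c f g h := by
  have h1 := L3_ov P hf hg hh.compl J N hN x y z hs
  have h2 := L3_ov P hf hg.compl hh J N hN x y z hs
  have h3 := L3_ov P hf.compl hg hh J N hN x y z hs
  unfold Bad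
  rw [mul_add, mul_add]
  exact add_le_add (add_le_add h1 h2) h3

theorem L3_le_Bad (P : Par a b c t θ) {f g h : (Fin n → Bool) → ℝ} (hf : Ind f) (hg : Ind g) (hh : Ind h) :
    L3 a b c 0 f g (fun x => 1 - h x) ≤ Bad a b c f g h ∧ L3 a b c 0 f (fun x => 1 - g x) h ≤ Bad a b c f g h
    ∧ L3 a b c 0 (fun x => 1 - f x) g h ≤ Bad a b c f g h := by
  have h1 := L3_nn P hf hg hh.compl
  have h2 := L3_nn P hf hg.compl hh
  have h3 := L3_nn P hf.compl hg hh
  unfold Bad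
  refine ⟨?_, ?_, ?_⟩ <;> linarith

/-- L3 with one factor nearly one -/
theorem L3_drop2 (P : Par a b c t θ) {f g h : (Fin n → Bool) → ℝ} (hf : Ind f) (hg : Ind g) (hh : Ind h) :
    PK a b c f h ≤ L3 a b c 0 f g h + (1 - m1 (b+c) g) := by
  rw [← l_m13 P (fun _ => 0), ← m1_compl, ← l_m2 P (fun _ => 0)]
  unfold L3
  rw [T3_def, ← Ex_add]
  refine Ex_mono _ (fun _ i => law_nn P 0 le_rfl P.hθ.le i) fun x => ?_
  rcases hf (fun k => (x k).1) with h1 | h1 <;> rcases hg (fun k => (x k).2.1) with h2 | h2 <;>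
    rcases hh (fun k => (x k).2.2) with h3 | h3 <;> simp [h1, h2, h3]

theorem L3_drop1 (P : Par a b c t θ) {f g h : (Fin n → Bool) → ℝ} (hf : Ind f) (hg : Ind g) (hh : Ind h) :
    PK a b c g h ≤ L3 a b c 0 f g h + (1 - m1 (b+c) f) := by
  rw [← l_m23 P (fun _ => 0), ← m1_compl, ← l_m1 P (fun _ => 0)]
  unfold L3
  rw [T3_def, ← Ex_add]
  refine Ex_mono _ (fun _ i => law_nn P 0 le_rfl P.hθ.le i) fun x => ?_
  rcases hf (fun k => (x k).1) with h1 | h1 <;> rcases hg (fun k => (x k).2.1) with h2 | h2 <;>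
    rcases hh (fun k => (x k).2.2) with h3 | h3 <;> simp [h1, h2, h3]

theorem L3_union (P : Par a b c t θ) {f g h : (Fin n → Bool) → ℝ} (hf : Ind f) (hg : Ind g) (hh : Ind h) :
    1 ≤ L3 a b c 0 f g h + (1 - m1 (b+c) f) + (1 - m1 (b+c) g) + (1 - m1 (b+c) h) := by
  rw [← m1_compl, ← m1_compl, ← m1_compl, ← l_m1 P (fun _ => 0), ← l_m2 P (fun _ => 0), ← l_m3 P (fun _ => 0)]
  unfold L3
  rw [T3_def, ← Ex_add, ← Ex_add, ← Ex_add]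
  refine (Ex_const (fun _ : Fin n => law a b c 0) (fun _ => law_sum P 0) 1).symm.le.trans ?_
  refine Ex_mono _ (fun _ i => law_nn P 0 le_rfl P.hθ.le i) fun x => ?_
  rcases hf (fun k => (x k).1) with h1 | h1 <;> rcases hg (fun k => (x k).2.1) with h2 | h2 <;>
    rcases hh (fun k => (x k).2.2) with h3 | h3 <;> simp [h1, h2, h3] <;> norm_num

theorem boot (P : Par a b c t θ) : ∃ e1 : ℝ, 0 < e1 ∧ e1 ≤ 1/2 ∧ ∀ (n : ℕ) (f g h : (Fin n → Bool) → ℝ),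
    Ind f → Ind g → Ind h → 1 - e1 ≤ m1 (b+c) f → 1 - e1 ≤ m1 (b+c) g → 1 - e1 ≤ m1 (b+c) h →
    1 - m1 (b+c) f ≤ 2 * Bad a b c f g h ∧ 1 - m1 (b+c) g ≤ 2 * Bad a b c f g h ∧
      1 - m1 (b+c) h ≤ 2 * Bad a b c f g h := by
  obtain ⟨η, hη, hp⟩ := SSE_pair (rev_KB P) (SSE_KB P) (1/8) (by norm_num)
  refine ⟨min η (1/2), lt_min hη (by norm_num), min_le_right _ _, fun n f g h hf hg hh xf xg xh => ?_⟩
  have hm := min_le_left η (1/2)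
  have nn := fun i => law_nn P 0 le_rfl P.hθ.le i
  have p : ∀ f g : (Fin n → Bool) → ℝ, Ind f → Ind g → 1 - min η (1/2) ≤ m1 (b+c) g →
      PK a b c (fun x => 1 - f x) (fun x => 1 - g x) ≤ 1/8 * ((1 - m1 (b+c) f) + (1 - m1 (b+c) g)) := by
    intro f g hf hg h
    have e1 := m1_compl (b+c) f
    have e2 := m1_compl (b+c) g
    rw [← e1, ← e2]
    refine hp n _ _ hf.compl hg.compl ?_
    change m1 (b+c) _ ≤ η
    linarith
  have p12 := p f g hf hg xg
  have p13 := p f h hf hh xh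
  have p23 := p g h hg hh xh
  have k3 : 1 - m1 (b+c) h ≤ L3 a b c 0 f g (fun x => 1 - h x) + PK a b c (fun x => 1 - f x) (fun x => 1 - h x)
      + PK a b c (fun x => 1 - g x) (fun x => 1 - h x) := by
    rw [← m1_compl, ← l_m3 P (fun _ => 0), ← l_m13 P (fun _ => 0), ← l_m23 P (fun _ => 0)]
    unfold L3
    rw [T3_def, ← Ex_add, ← Ex_add]
    refine Ex_mono _ (fun _ i => nn i) fun x => ?_
    rcases hf (fun k => (x k).1) with h1 | h1 <;> rcases hg (fun k => (x k).2.1) with h2 | h2 <;>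
      rcases hh (fun k => (x k).2.2) with h3 | h3 <;> simp [h1, h2, h3]
  have k2 : 1 - m1 (b+c) g ≤ L3 a b c 0 f (fun x => 1 - g x) h + PK a b c (fun x => 1 - f x) (fun x => 1 - g x)
      + PK a b c (fun x => 1 - g x) (fun x => 1 - h x) := by
    rw [← m1_compl, ← l_m2 P (fun _ => 0), ← l_m12 P (fun _ => 0), ← l_m23 P (fun _ => 0)]
    unfold L3
    rw [T3_def, ← Ex_add, ← Ex_add]
    refine Ex_mono _ (fun _ i => nn i) fun x => ?_
    rcases hf (fun k => (x k).1) with h1 | h1 <;> rcases hg (fun k => (x k).2.1) with h2 | h2 <;>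
      rcases hh (fun k => (x k).2.2) with h3 | h3 <;> simp [h1, h2, h3]
  have k1 : 1 - m1 (b+c) f ≤ L3 a b c 0 (fun x => 1 - f x) g h + PK a b c (fun x => 1 - f x) (fun x => 1 - g x)
      + PK a b c (fun x => 1 - f x) (fun x => 1 - h x) := by
    rw [← m1_compl, ← l_m1 P (fun _ => 0), ← l_m12 P (fun _ => 0), ← l_m13 P (fun _ => 0)]
    unfold L3
    rw [T3_def, ← Ex_add, ← Ex_add]
    refine Ex_mono _ (fun _ i => nn i) fun x => ?_
    rcases hf (fun k => (x k).1) with h1 | h1 <;> rcases hg (fun k => (x k).2.1) with h2 | h2 <;>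
      rcases hh (fun k => (x k).2.2) with h3 | h3 <;> simp [h1, h2, h3]
  have u1 := m1_le P hf.le
  have u2 := m1_le P hg.le
  have u3 := m1_le P hh.le
  unfold Bad
  refine ⟨?_, ?_, ?_⟩ <;> linarith

theorem dich (P : Par a b c t θ) {A : ℕ} (hA : RevA a b c θ A) (ζ : ℝ) (hζ : 0 < ζ) {f h : (Fin n → Bool) → ℝ}
    (hf : Ind f) (hh : Ind h) (h1 : PK a b c f (fun x => 1 - h x) ≤ ζ ^ A) (h2 : PK a b c (fun x => 1 - f x) h ≤ ζ ^ A) :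
    (m1 (b+c) f ≤ 2*ζ ∨ 1 - 2*ζ ≤ m1 (b+c) f) ∧ (m1 (b+c) h ≤ 2*ζ ∨ 1 - 2*ζ ≤ m1 (b+c) h) := by
  have r1 := (hA.pair P hf hh.compl).trans h1
  have r2 := (hA.pair P hf.compl hh).trans h2
  rw [m1_compl] at r1 r2
  have A0 : A ≠ 0 := by have := hA.1; omega
  have q1 := le_of_pow_le_pow_left₀ A0 hζ.le r1
  have q2 := le_of_pow_le_pow_left₀ A0 hζ.le r2
  have u1 := m1_le P hf.le
  have u3 := m1_le P hh.le
  have v1 := m1_nn P hf.nn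
  have v3 := m1_nn P hh.nn
  generalize m1 (b+c) f = X at *
  generalize m1 (b+c) h = Z at *
  constructor
  · rcases le_total Z (1/2) with h | h
    · left; nlinarith
    · right; nlinarith
  · rcases le_total X (1/2) with h | h
    · left; nlinarith
    · right; nlinarith

theorem main3 (P : Par a b c t θ) (ε η : ℝ) (hε : 0 < ε) (hη : 0 < η) : ∃ δ : ℝ, 0 < δ ∧
    ∀ (n : ℕ) (f g h : (Fin n → Bool) → ℝ), Ind f → Ind g → Ind h → Bad a b c f g h ≤ δ →
      ε ≤ m1 (b+c) f → ε ≤ m1 (b+c) g → ∃ S : Finset (Fin n),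
      m1 (b+c) (dis f S) ≤ η ∧ m1 (b+c) (dis g S) ≤ η ∧ m1 (b+c) (dis h S) ≤ η := by
  obtain ⟨A, hA⟩ := revA P
  obtain ⟨e1, e1p, e1h, hboot⟩ := boot P
  obtain ⟨N, δ0, δ0p, hpat⟩ := pat P ε e1 hε e1p e1h
  set ζ : ℝ := min (η/2) (1/20) with hζ
  have ζp : 0 < ζ := lt_min (by linarith) (by norm_num)
  have ζ1 : ζ ≤ 1/20 := min_le_right _ _
  have ζ2 : ζ ≤ η/2 := min_le_left _ _
  set δ1 : ℝ := ζ ^ A * ζ / 3 with hδ1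
  have δ1p : 0 < δ1 := by positivity
  have pA : ζ ^ A ≤ 1 := pow_le_one₀ ζp.le (by linarith)
  have pA0 : 0 < ζ ^ A := by positivity
  have d1 : 3 * δ1 ≤ ζ ^ A := by rw [hδ1]; nlinarith
  have d2 : 3 * δ1 ≤ ζ := by rw [hδ1]; nlinarith
  have m0 : 0 < min a (min b c) := lt_min P.ha (lt_min P.hb P.hc)
  refine ⟨min δ0 ((min a (min b c)) ^ N * δ1), lt_min δ0p (by positivity), fun n f g h hf hg hh hB hmf hmg => ?_⟩
  obtain ⟨J, hJ, u, hu, uf, ug, uh⟩ := hpat n f g h hf hg hh (hB.trans (min_le_left _ _)) hmf hmg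
  have bad : ∀ x y z : Fin n → Bool, (∀ k, spt (x k, y k, z k)) →
      Bad a b c (ov J x f) (ov J y g) (ov J z h) ≤ δ1 := by
    intro x y z hs
    have h1 := (Bad_ov P hf hg hh J N hJ x y z hs).trans (hB.trans (min_le_right _ _))
    exact le_of_mul_le_mul_left h1 (by positivity)
  set α := fun k => (u k).1 with hα
  set β := fun k => (u k).2.1 with hβ
  set γ := fun k => (u k).2.2 with hγ
  have hs0 : ∀ k, spt (α k, β k, γ k) := fun k => spt_of _ (hu k)
  have If : ∀ x, Ind (ov J x f) := fun x => hf.ov _ _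
  have Ig : ∀ x, Ind (ov J x g) := fun x => hg.ov _ _
  have Ih : ∀ x, Ind (ov J x h) := fun x => hh.ov _ _
  obtain ⟨bf, bg, bh⟩ := hboot n _ _ _ (If α) (Ig β) (Ih γ) uf ug uh
  have b0 := bad _ _ _ hs0
  have dfh : ∀ x z : Fin n → Bool, (∀ k, spt (x k, β k, z k)) →
      (m1 (b+c) (ov J x f) ≤ 2*ζ ∨ 1 - 2*ζ ≤ m1 (b+c) (ov J x f)) ∧
      (m1 (b+c) (ov J z h) ≤ 2*ζ ∨ 1 - 2*ζ ≤ m1 (b+c) (ov J z h)) := by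
    intro x z hs
    have hb := bad x β z hs
    obtain ⟨t1, t2, t3⟩ := L3_le_Bad P (If x) (Ig β) (Ih z)
    refine dich P hA ζ ζp (If x) (Ih z) ?_ ?_
    · refine (L3_drop2 P (If x) (Ig β) (Ih z).compl).trans ?_
      linarith
    · refine (L3_drop2 P (If x).compl (Ig β) (Ih z)).trans ?_
      linarith
  have dgh : ∀ y z : Fin n → Bool, (∀ k, spt (α k, y k, z k)) →
      (m1 (b+c) (ov J y g) ≤ 2*ζ ∨ 1 - 2*ζ ≤ m1 (b+c) (ov J y g)) := by
    intro y z hs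
    have hb := bad α y z hs
    obtain ⟨t1, t2, t3⟩ := L3_le_Bad P (If α) (Ig y) (Ih z)
    refine (dich P hA ζ ζp (Ig y) (Ih z) ?_ ?_).1
    · refine (L3_drop1 P (If α) (Ig y) (Ih z).compl).trans ?_
      linarith
    · refine (L3_drop1 P (If α) (Ig y).compl (Ih z)).trans ?_
      linarith
  have Df : ∀ x, m1 (b+c) (ov J x f) ≤ 2*ζ ∨ 1 - 2*ζ ≤ m1 (b+c) (ov J x f) := fun x =>
    (dfh x (bandv x β) fun k => spt_band _ _).1
  have Dg : ∀ x, m1 (b+c) (ov J x g) ≤ 2*ζ ∨ 1 - 2*ζ ≤ m1 (b+c) (ov J x g) := fun x =>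
    (dgh x (bandv α x) fun k => spt_band _ _)
  have Dh : ∀ x, m1 (b+c) (ov J x h) ≤ 2*ζ ∨ 1 - 2*ζ ≤ m1 (b+c) (ov J x h) := fun x =>
    (dfh (bandv β x) x fun k => spt_band3 _ _).2
  have up : ∀ v : ℝ, v ≤ 2*ζ ∨ 1 - 2*ζ ≤ v → 1/2 ≤ v → 1 - 2*ζ ≤ v := by
    intro v h h2; rcases h with h | h <;> linarith
  have dn : ∀ v : ℝ, v ≤ 2*ζ ∨ 1 - 2*ζ ≤ v → ¬ (1/2 ≤ v) → v ≤ 2*ζ := by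
    intro v h h2; rcases h with h | h <;> linarith
  obtain ⟨S, hS⟩ := exact_poly (fun x => 1/2 ≤ m1 (b+c) (ov J x f)) (fun x => 1/2 ≤ m1 (b+c) (ov J x g))
    (fun x => 1/2 ≤ m1 (b+c) (ov J x h)) (by
      intro x y z hs
      have hb := bad x y z hs
      obtain ⟨t1, t2, t3⟩ := L3_le_Bad P (If x) (Ig y) (Ih z)
      have ef := m1_compl (b+c) (ov J x f)
      have eg := m1_compl (b+c) (ov J y g)
      have eh := m1_compl (b+c) (ov J z h)
      refine ⟨fun h1 h2 => ?_, fun h1 h2 => ?_, fun h1 h2 => ?_⟩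
      · by_contra h3
        have h1 := up _ (Df x) h1
        have h2 := up _ (Dg y) h2
        have h3 := dn _ (Dh z) h3
        have := L3_union P (If x) (Ig y) (Ih z).compl
        linarith
      · by_contra h3
        have h1 := up _ (Df x) h1
        have h2 := up _ (Dh z) h2
        have h3 := dn _ (Dg y) h3
        have := L3_union P (If x) (Ig y).compl (Ih z)
        linarith
      · by_contra h3
        have h1 := up _ (Dg y) h1
        have h2 := up _ (Dh z) h2
        have h3 := dn _ (Df x) h3
        have := L3_union P (If x).compl (Ig y) (Ih z)
        linarith)
    ⟨α, by linarith⟩ ⟨β, by linarith⟩ ⟨γ, by linarith⟩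
  refine ⟨S, ?_, ?_, ?_⟩
  · exact (close_of P (2*ζ) J S f hf Df (by linarith) fun x => (hS x).1).trans (by linarith)
  · exact (close_of P (2*ζ) J S g hg Dg (by linarith) fun x => (hS x).2.1).trans (by linarith)
  · exact (close_of P (2*ζ) J S h hh Dh (by linarith) fun x => (hS x).2.2).trans (by linarith)

end

noncomputable def fR {p : ℕ} (f : (Fin p → Bool) → Bool) (y : Fin p → Bool) : ℝ := if f y = true then 1 else 0

theorem fR_ind {p : ℕ} (f : (Fin p → Bool) → Bool) : Ind (fR f) := by
  intro x; unfold fR; by_cases h : f x = true <;> simp [h]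

theorem nuPr_eq (q : ℝ) (p : ℕ) (Q : (Fin p → Bool) → Prop) [DecidablePred Q] :
    nuPr q p Q = m1 q (fun y => if Q y then 1 else 0) := by
  unfold nuPr m1 Ex
  refine Finset.sum_congr rfl fun y _ => ?_
  by_cases h : Q y <;> simp [h, bw]

theorem prodPr_eq {α : Type} [Fintype α] (μ : α → ℝ) (p : ℕ) (Q : (Fin p → α) → Prop) [DecidablePred Q] :
    prodPr μ p Q = Ex (fun _ => μ) (fun y => if Q y then 1 else 0) := by
  unfold prodPr Ex
  refine Finset.sum_congr rfl fun y _ => ?_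
  by_cases h : Q y <;> simp [h]

theorem nuPr_zero (q : ℝ) (p : ℕ) (f : (Fin p → Bool) → Bool) :
    nuPr q p (fun y => f y = false) = 1 - m1 q (fR f) := by
  rw [nuPr_eq, ← m1_compl]
  congr 1
  funext y
  unfold fR
  cases f y <;> simp

theorem nuPr_and (q : ℝ) (p : ℕ) (f : (Fin p → Bool) → Bool) (S : Finset (Fin p)) :
    nuPr q p (fun y => f y = decide (∀ s ∈ S, y s = true)) = 1 - m1 q (dis (fR f) S) := by
  rw [nuPr_eq, ← m1_compl]
  congr 1
  funext y
  unfold fR dis andS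
  by_cases h : ∀ s ∈ S, y s = true
  · simp only [if_pos h, decide_eq_true h]
    cases f y <;> simp
  · simp only [if_neg h, decide_eq_false h]
    cases f y <;> simp

theorem uniq1 {q : ℝ} (q0 : 0 < q) (q1 : q < 1) {p : ℕ} (f : (Fin p → Bool) → ℝ) (ε η : ℝ) (hε : 0 < ε)
    (hη : η = ε * (1 - q) / 8) (hf : ε ≤ m1 q f) (S T : Finset (Fin p))
    (hS : m1 q (dis f S) ≤ η) (hT : m1 q (dis f T) ≤ η) : T ⊆ S := by
  by_contra hc
  obtain ⟨t, htT, htS⟩ := Finset.not_subset.1 hc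
  have nn : ∀ (_ : Fin p) x, 0 ≤ bw q x := by
    intro _ x; cases x <;> simp [bw] <;> linarith
  have e1 : m1 q (fun x => andS S x * (if x t = true then 0 else 1)) = (1 - q) * m1 q (andS S) := by
    unfold m1
    have hu : (fun _ : Fin p => bw q) = Function.update (fun _ => bw q) t (bw q) := by simp
    conv_lhs => rw [hu]
    rw [Ex_update _ _ (bw_sum q)]
    simp only [Fintype.sum_bool, Function.update_self]
    have hz : ∀ x : Fin p → Bool, andS S (Function.update x t false) = andS S x := by
      intro x
      have : (∀ s ∈ S, Function.update x t false s = true) ↔ ∀ s ∈ S, x s = true := by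
        refine forall₂_congr fun s hs => ?_
        rw [Function.update_of_ne]
        rintro rfl; exact htS hs
      unfold andS
      by_cases hc : ∀ s ∈ S, x s = true
      · rw [if_pos hc, if_pos (this.2 hc)]
      · rw [if_neg hc, if_neg (fun h => hc (this.1 h))]
    simp only [hz, if_true, mul_zero, Bool.false_eq_true, if_false, mul_one]
    rw [Ex_const _ (fun _ => bw_sum q)]
    simp [bw]
  have e2 : m1 q (fun x => andS S x * (if x t = true then 0 else 1)) ≤ m1 q (dis f S) + m1 q (dis f T) := by
    unfold m1
    rw [← Ex_add]
    refine Ex_mono _ nn fun x => ?_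
    have a1 : 0 ≤ dis f S x := abs_nonneg _
    have a2 : 0 ≤ dis f T x := abs_nonneg _
    by_cases h1 : x t = true
    · simp [h1]; linarith
    · by_cases h2 : ∀ s ∈ S, x s = true
      · have c1 : andS S x = 1 := by unfold andS; rw [if_pos h2]
        have c2 : andS T x = 0 := by unfold andS; rw [if_neg (fun h => h1 (h t htT))]
        unfold dis
        rw [c1, c2, if_neg h1]
        have := neg_abs_le (f x - 1)
        have := le_abs_self (f x - 0)
        linarith
      · have c1 : andS S x = 0 := by unfold andS; rw [if_neg h2]
        rw [c1]; linarith
  have e3 : m1 q f ≤ m1 q (andS S) + m1 q (dis f S) := by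
    unfold m1
    rw [← Ex_add]
    refine Ex_mono _ nn fun x => ?_
    have := le_abs_self (f x - andS S x)
    unfold dis
    linarith
  have : ε - η ≤ m1 q (andS S) := by linarith
  have : (1 - q) * (ε - η) ≤ 2 * η := by nlinarith
  have h4 : 0 < ε * (1 - q) := mul_pos hε (by linarith)
  rw [hη] at this
  nlinarith

theorem uniq {q : ℝ} (q0 : 0 < q) (q1 : q < 1) {p : ℕ} (f : (Fin p → Bool) → ℝ) (ε η : ℝ) (hε : 0 < ε)
    (hη : η = ε * (1 - q) / 8) (hf : ε ≤ m1 q f) (S T : Finset (Fin p))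
    (hS : m1 q (dis f S) ≤ η) (hT : m1 q (dis f T) ≤ η) : S = T :=
  Finset.Subset.antisymm (uniq1 q0 q1 f ε η hε hη hf T S hT hS) (uniq1 q0 q1 f ε η hε hη hf S T hS hT)

section
variable {m : ℕ} (μ : (PairIdx m → Bool) → ℝ)

def tp (i j k : Fin m) (hij : i < j) (hjk : j < k) (x : PairIdx m → Bool) : Bool × Bool × Bool :=
  (x ⟨(i, j), hij⟩, x ⟨(j, k), hjk⟩, x ⟨(i, k), hij.trans hjk⟩)

theorem spt_tp (i j k : Fin m) (hij : i < j) (hjk : j < k) (x : PairIdx m → Bool) (hx : IsEquivVec x) :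
    spt (tp i j k hij hjk x) := by
  have hik := hij.trans hjk
  have p1 : pget x i j = x ⟨(i, j), hij⟩ := by unfold pget; rw [dif_pos hij]
  have p2 : pget x j k = x ⟨(j, k), hjk⟩ := by unfold pget; rw [dif_pos hjk]
  have p3 : pget x i k = x ⟨(i, k), hik⟩ := by unfold pget; rw [dif_pos hik]
  have p1' : pget x j i = x ⟨(i, j), hij⟩ := by unfold pget; rw [dif_neg hij.asymm, dif_pos hij]
  have p2' : pget x k j = x ⟨(j, k), hjk⟩ := by unfold pget; rw [dif_neg hjk.asymm, dif_pos hjk]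
  have h1 := hx i j k hij.ne hjk.ne hik.ne
  have h2 := hx j i k hij.ne' hik.ne hjk.ne
  have h3 := hx i k j hik.ne hjk.ne' hij.ne
  rw [p1, p2, p3] at h1
  rw [p1', p3, p2] at h2
  rw [p3, p2', p1] at h3
  unfold spt tp
  exact ⟨h1, h2, fun a b => h3 b a⟩

theorem eqv_const (v : Bool) : IsEquivVec (fun _ : PairIdx m => v) := by
  intro i j k hij hjk hik h1 h2
  unfold pget at *
  rcases lt_trichotomy i k with h | h | h
  · rcases lt_trichotomy i j with h' | h' | h'
    · simp_all
    · exact absurd h' hij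
    · simp_all [h'.asymm]
  · exact absurd h hik
  · rcases lt_trichotomy i j with h' | h' | h'
    · simp_all [h.asymm]
    · exact absurd h' hij
    · simp_all [h'.asymm, h.asymm]

theorem eqv_single (e : PairIdx m) : IsEquivVec (fun e' : PairIdx m => decide (e' = e)) := by
  obtain ⟨⟨u, v⟩, he⟩ := e
  have key : ∀ i j, pget (fun e' : PairIdx m => decide (e' = ⟨(u, v), he⟩)) i j = true →
      (i = u ∧ j = v) ∨ (i = v ∧ j = u) := by
    intro i j h
    unfold pget at h
    split_ifs at h with h1 h2
    · simp at h; tauto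
    · simp at h; tauto
  intro i j k hij hjk hik h1 h2
  have a := key _ _ h1
  have b := key _ _ h2
  exfalso
  rcases a with ⟨rfl, rfl⟩ | ⟨rfl, rfl⟩ <;> rcases b with ⟨h, h'⟩ | ⟨h, h'⟩ <;> simp_all

theorem mul_ite_bool (a : ℝ) (v : Bool) :
    a * (if v = true then 1 else 0) = if v = true then a else 0 := by
  cases v <;> simp

theorem bad_pt (u v w : Bool) (E : Prop) [Decidable E] (h : E → spt (u, v, w)) :
    (if u = true then (1:ℝ) else 0) * (if v = true then (1:ℝ) else 0) * (1 - if w = true then (1:ℝ) else 0) +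
    (if u = true then (1:ℝ) else 0) * (1 - if v = true then (1:ℝ) else 0) * (if w = true then (1:ℝ) else 0) +
    (1 - if u = true then (1:ℝ) else 0) * (if v = true then (1:ℝ) else 0) * (if w = true then (1:ℝ) else 0)
    ≤ 1 - (if E then (1:ℝ) else 0) := by
  by_cases hE : E
  · have := h hE
    unfold spt at this
    rw [if_pos hE]
    cases u <;> cases v <;> cases w <;> simp at this ⊢
  · rw [if_neg hE]
    cases u <;> cases v <;> cases w <;> simp

theorem triple_law (hnonneg : ∀ x, 0 ≤ μ x) (hsum : ∑ x : PairIdx m → Bool, μ x = 1)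
    (hsupp : ∀ x : PairIdx m → Bool, 0 < μ x ↔ IsEquivVec x) (q : ℝ)
    (hq : ∀ e : PairIdx m, (∑ x : PairIdx m → Bool, if x e = true then μ x else 0) = q)
    (i j k : Fin m) (hij : i < j) (hjk : j < k) :
    ∃ a b c t θ : ℝ, Par a b c t θ ∧ b + c = q ∧
      ∀ y, (∑ x : PairIdx m → Bool, if tp i j k hij hjk x = y then μ x else 0) = law a b c 0 y := by
  classical
  set l : Bool × Bool × Bool → ℝ := fun y => ∑ x : PairIdx m → Bool, if tp i j k hij hjk x = y then μ x else 0 with hl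
  have nn : ∀ y (x : PairIdx m → Bool), 0 ≤ if tp i j k hij hjk x = y then μ x else 0 := by
    intro y x; split_ifs; exacts [hnonneg x, le_rfl]
  have pos : ∀ x, IsEquivVec x → 0 < l (tp i j k hij hjk x) := by
    intro x hx
    refine Finset.sum_pos' (fun x _ => nn _ x) ⟨x, Finset.mem_univ _, ?_⟩
    rw [if_pos rfl]
    exact (hsupp x).2 hx
  have zero : ∀ y, ¬ spt y → l y = 0 := by
    intro y hy
    refine Finset.sum_eq_zero fun x _ => ?_
    split_ifs with h
    · by_contra hne
      exact hy (h ▸ spt_tp i j k hij hjk x ((hsupp x).1 (lt_of_le_of_ne (hnonneg x) (Ne.symm hne))))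
    · rfl
  have marg : ∀ F : Bool × Bool × Bool → ℝ, ∑ x, μ x * F (tp i j k hij hjk x) = ∑ y, l y * F y := by
    intro F
    simp only [hl, Finset.sum_mul]
    rw [Finset.sum_comm]
    refine Finset.sum_congr rfl fun x _ => ?_
    simp [ite_mul]
  have z1 := zero (true, true, false) (by unfold spt; simp)
  have z2 := zero (true, false, true) (by unfold spt; simp)
  have z3 := zero (false, true, true) (by unfold spt; simp)
  have s0 : ∑ y, l y = 1 := by
    have := marg (fun _ => 1)
    simp only [mul_one] at this
    rw [← this, hsum]
  have s1 : ∑ y, l y * (if y.1 = true then 1 else 0) = q := by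
    rw [← marg, ← hq ⟨(i, j), hij⟩]
    refine Finset.sum_congr rfl fun x _ => ?_
    exact mul_ite_bool _ _
  have s2 : ∑ y, l y * (if y.2.1 = true then 1 else 0) = q := by
    rw [← marg, ← hq ⟨(j, k), hjk⟩]
    refine Finset.sum_congr rfl fun x _ => ?_
    exact mul_ite_bool _ _
  have s3 : ∑ y, l y * (if y.2.2 = true then 1 else 0) = q := by
    rw [← marg, ← hq ⟨(i, k), hij.trans hjk⟩]
    refine Finset.sum_congr rfl fun x _ => ?_
    exact mul_ite_bool _ _
  simp only [Fintype.sum_prod_type, Fintype.sum_bool, Bool.false_eq_true, if_true, if_false, mul_zero, mul_one,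
    add_zero, zero_add, z1, z2, z3] at s0 s1 s2 s3
  have pa : 0 < l (false, false, false) := pos _ (eqv_const false)
  have pc : 0 < l (true, true, true) := pos _ (eqv_const true)
  have pb : 0 < l (true, false, false) := by
    have := pos _ (eqv_single ⟨(i, j), hij⟩)
    have e : tp i j k hij hjk (fun e' : PairIdx m => decide (e' = ⟨(i, j), hij⟩)) = (true, false, false) := by
      simp [tp, hij.ne', hjk.ne']
    rwa [e] at this
  set a := l (false, false, false) with ha
  set b := l (true, false, false) with hb
  set c := l (true, true, true) with hc
  refine ⟨a, b, c, min a b / 2, min b c / 2, ⟨pa, pb, pc, ?_, ?_, ?_, ?_, ?_, ?_, ?_⟩, ?_, ?_⟩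
  · have := lt_min pa pb; linarith
  · have := lt_min pb pc; linarith
  · linarith
  · have := min_le_left a b; linarith
  · have := min_le_right a b; linarith
  · have := min_le_left b c; linarith
  · have := min_le_right b c; linarith
  · linarith
  · intro y
    rw [law0]
    change l y = _
    obtain ⟨y1, y2, y3⟩ := y
    cases y1 <;> cases y2 <;> cases y3 <;> simp only [mu3] <;> linarith

theorem triple_main (hnonneg : ∀ x, 0 ≤ μ x) (hsum : ∑ x : PairIdx m → Bool, μ x = 1)
    (hsupp : ∀ x : PairIdx m → Bool, 0 < μ x ↔ IsEquivVec x) (q : ℝ)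
    (hq : ∀ e : PairIdx m, (∑ x : PairIdx m → Bool, if x e = true then μ x else 0) = q)
    (i j k : Fin m) (hij : i < j) (hjk : j < k) (ε η : ℝ) (hε : 0 < ε) (hη : 0 < η) :
    ∃ δ > (0 : ℝ), ∀ p : ℕ, ∀ f : PairIdx m → (Fin p → Bool) → Bool,
      prodPr μ p (fun xs => IsEquivVec (fun e => f e (fun k => xs k e))) ≥ 1 - δ →
      (∀ e, ε ≤ m1 q (fR (f e))) → ∃ S : Finset (Fin p),
      m1 q (dis (fR (f ⟨(i, j), hij⟩)) S) ≤ η ∧ m1 q (dis (fR (f ⟨(j, k), hjk⟩)) S) ≤ η ∧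
      m1 q (dis (fR (f ⟨(i, k), hij.trans hjk⟩)) S) ≤ η := by
  classical
  obtain ⟨a, b, c, t, θ, P, hbc, hlaw⟩ := triple_law μ hnonneg hsum hsupp q hq i j k hij hjk
  obtain ⟨δ, δp, hm⟩ := main3 P ε η hε hη
  refine ⟨δ, δp, fun p f hpr hf => ?_⟩
  subst hbc
  refine hm p _ _ _ (fR_ind _) (fR_ind _) (fR_ind _) ?_ (hf _) (hf _)
  have push : ∀ F : (Fin p → Bool × Bool × Bool) → ℝ, Ex (fun _ => law a b c 0) F =
      Ex (fun _ => μ) (fun X => F (fun k' => tp i j k hij hjk (X k'))) := by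
    intro F
    rw [Ex_push (tp i j k hij hjk)]
    congr 1
    funext _ y
    exact (hlaw y).symm
  rw [prodPr_eq] at hpr
  have h1 := Ex_compl (fun _ : Fin p => μ) (fun _ => hsum)
    (fun y => if IsEquivVec (fun e => f e (fun k => y k e)) then 1 else 0)
  refine le_trans ?_ (show _ ≤ δ from (by linarith : Ex (fun _ : Fin p => μ) (fun y => 1 - (if IsEquivVec (fun e => f e (fun k => y k e)) then (1:ℝ) else 0)) ≤ δ))
  unfold Bad L3
  rw [push, push, push, ← Ex_add, ← Ex_add]
  refine Ex_mono _ (fun _ x => hnonneg x) fun X => ?_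
  exact bad_pt _ _ _ _ (fun hE => spt_tp i j k hij hjk _ hE)

end

/-- approximate aggregation of equivalence relations: approximate
polymorphisms of `Equiv_m` which are far from constant `0` are close to a common
oligarchy (AND over a set `S` of voters). -/
theorem stmt17 (m : ℕ) (hm : 3 ≤ m)
    (μ : (PairIdx m → Bool) → ℝ)
    (hnonneg : ∀ x, 0 ≤ μ x)
    (hsum : ∑ x : PairIdx m → Bool, μ x = 1)
    (hsupp : ∀ x : PairIdx m → Bool, 0 < μ x ↔ IsEquivVec x)
    (hinv : ∀ σ : Equiv.Perm (Fin m), ∀ x : PairIdx m → Bool,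
      μ (fun e => pget x (σ⁻¹ e.val.1) (σ⁻¹ e.val.2)) = μ x)
    (q : ℝ)
    (hq : ∀ e : PairIdx m,
      (∑ x : PairIdx m → Bool, if x e = true then μ x else 0) = q) :
    ∃ ε₀ > (0 : ℝ), ∀ ε : ℝ, 0 < ε → ε < ε₀ → ∃ δ > (0 : ℝ), ∀ p : ℕ,
      ∀ f : PairIdx m → (Fin p → Bool) → Bool,
        prodPr μ p (fun xs => IsEquivVec (fun e => f e (fun k => xs k e))) ≥ 1 - δ →
        (∀ e : PairIdx m, nuPr q p (fun y => f e y = false) < 1 - ε) →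
        ∃ S : Finset (Fin p), ∀ e : PairIdx m,
          nuPr q p (fun y => f e y = decide (∀ s ∈ S, y s = true)) ≥ 1 - ε := by
  have hq01 : 0 < q ∧ q < 1 := by
    obtain ⟨a, b, c, t, θ, P, hbc, -⟩ := triple_law μ hnonneg hsum hsupp q hq ⟨0, by omega⟩ ⟨1, by omega⟩
      ⟨2, by omega⟩ (by simp [Fin.lt_def]) (by simp [Fin.lt_def])
    subst hbc
    exact ⟨P.q0, by linarith [P.q1]⟩
  obtain ⟨q0, q1⟩ := hq01
  refine ⟨1, one_pos, fun ε hε _ => ?_⟩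
  set η : ℝ := ε * (1 - q) / 8 with hη
  have q1' : 0 < 1 - q := by linarith
  have ηp : 0 < η := by positivity
  have ηε : η ≤ ε := by rw [hη]; nlinarith
  have ht : ∀ τ : Fin m × Fin m × Fin m, ∃ δ > (0:ℝ), ∀ (hij : τ.1 < τ.2.1) (hjk : τ.2.1 < τ.2.2),
      ∀ p : ℕ, ∀ f : PairIdx m → (Fin p → Bool) → Bool,
      prodPr μ p (fun xs => IsEquivVec (fun e => f e (fun k => xs k e))) ≥ 1 - δ →
      (∀ e, ε ≤ m1 q (fR (f e))) → ∃ S : Finset (Fin p),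
      m1 q (dis (fR (f ⟨(τ.1, τ.2.1), hij⟩)) S) ≤ η ∧ m1 q (dis (fR (f ⟨(τ.2.1, τ.2.2), hjk⟩)) S) ≤ η ∧
      m1 q (dis (fR (f ⟨(τ.1, τ.2.2), hij.trans hjk⟩)) S) ≤ η := by
    rintro ⟨i, j, k⟩
    by_cases h : i < j ∧ j < k
    · obtain ⟨δ, δp, hd⟩ := triple_main μ hnonneg hsum hsupp q hq i j k h.1 h.2 ε η hε ηp
      exact ⟨δ, δp, fun _ _ => hd⟩
    · exact ⟨1, one_pos, fun h1 h2 => absurd ⟨h1, h2⟩ h⟩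
  choose δ δp hδ using ht
  haveI : Nonempty (Fin m) := ⟨⟨0, by omega⟩⟩
  obtain ⟨τ0, hτ0⟩ := Finite.exists_min δ
  refine ⟨δ τ0, δp τ0, fun p f hpr hf => ?_⟩
  have hf' : ∀ e, ε ≤ m1 q (fR (f e)) := by
    intro e
    have := hf e
    rw [nuPr_zero] at this
    linarith
  let D : Fin m → Fin m → Finset (Fin p) → Prop := fun i j S => ∀ e : PairIdx m,
    (e.1.1 = i ∧ e.1.2 = j) ∨ (e.1.1 = j ∧ e.1.2 = i) → m1 q (dis (fR (f e)) S) ≤ η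
  have Dsymm : ∀ i j S, D i j S → D j i S := fun i j S h e he => h e he.symm
  have Dmk : ∀ i j S (h : i < j), m1 q (dis (fR (f ⟨(i, j), h⟩)) S) ≤ η → D i j S := by
    rintro i j S h hd ⟨⟨u, v⟩, he⟩ (⟨h1, h2⟩ | ⟨h1, h2⟩)
    · simp only at h1 h2
      subst h1; subst h2; exact hd
    · simp only at h1 h2 he
      subst h1; subst h2; exact absurd h he.asymm
  have Duniq : ∀ i j S T, i ≠ j → D i j S → D i j T → S = T := by
    intro i j S T hij hS hT
    rcases lt_or_gt_of_ne hij with h | h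
    · exact uniq q0 q1 (fR (f ⟨(i, j), h⟩)) ε η hε hη (hf' _) S T (hS _ (Or.inl ⟨rfl, rfl⟩)) (hT _ (Or.inl ⟨rfl, rfl⟩))
    · exact uniq q0 q1 (fR (f ⟨(j, i), h⟩)) ε η hε hη (hf' _) S T (hS _ (Or.inr ⟨rfl, rfl⟩)) (hT _ (Or.inr ⟨rfl, rfl⟩))
  have tri0 : ∀ i j k : Fin m, i < j → j < k → ∃ S, D i j S ∧ D j k S ∧ D i k S := by
    intro i j k hij hjk
    obtain ⟨S, h1, h2, h3⟩ := hδ (i, j, k) hij hjk p f (by linarith [hτ0 (i, j, k)]) hf'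
    exact ⟨S, Dmk _ _ _ _ h1, Dmk _ _ _ _ h2, Dmk _ _ _ _ h3⟩
  have tri : ∀ i j k : Fin m, i ≠ j → j ≠ k → i ≠ k → ∃ S, D i j S ∧ D j k S ∧ D i k S := by
    intro i j k hij hjk hik
    rcases lt_or_gt_of_ne hij with h1 | h1 <;> rcases lt_or_gt_of_ne hjk with h2 | h2 <;>
      rcases lt_or_gt_of_ne hik with h3 | h3
    · exact tri0 i j k h1 h2
    · exact absurd (h1.trans h2) h3.asymm
    · obtain ⟨S, a, b, c⟩ := tri0 i k j h3 h2
      exact ⟨S, c, Dsymm _ _ _ b, a⟩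
    · obtain ⟨S, a, b, c⟩ := tri0 k i j h3 h1
      exact ⟨S, b, Dsymm _ _ _ c, Dsymm _ _ _ a⟩
    · obtain ⟨S, a, b, c⟩ := tri0 j i k h1 h3
      exact ⟨S, Dsymm _ _ _ a, c, b⟩
    · obtain ⟨S, a, b, c⟩ := tri0 j k i h2 h3
      exact ⟨S, Dsymm _ _ _ c, a, Dsymm _ _ _ b⟩
    · exact absurd (h2.trans h1) h3.asymm
    · obtain ⟨S, a, b, c⟩ := tri0 k j i h2 h1
      exact ⟨S, Dsymm _ _ _ b, Dsymm _ _ _ a, Dsymm _ _ _ c⟩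
  set z0 : Fin m := ⟨0, by omega⟩ with hz0
  set z1 : Fin m := ⟨1, by omega⟩ with hz1
  set z2 : Fin m := ⟨2, by omega⟩ with hz2
  have n01 : z0 ≠ z1 := by simp [hz0, hz1]
  obtain ⟨S, S01, -, -⟩ := tri z0 z1 z2 n01 (by simp [hz1, hz2]) (by simp [hz0, hz2])
  have S0 : ∀ k, z0 ≠ k → D z0 k S := by
    intro k hk
    by_cases h1 : z1 = k
    · subst h1; exact S01
    · obtain ⟨S', a, _, c⟩ := tri z0 z1 k n01 h1 hk
      rw [Duniq _ _ _ _ n01 S01 a]; exact c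
  have SS : ∀ i j, i ≠ j → D i j S := by
    intro i j hij
    by_cases h1 : z0 = i
    · subst h1; exact S0 j hij
    by_cases h2 : z0 = j
    · subst h2; exact Dsymm _ _ _ (S0 i h1)
    obtain ⟨S', a, b, _⟩ := tri z0 i j h1 hij h2
    rw [Duniq _ _ _ _ h1 (S0 i h1) a]; exact b
  refine ⟨S, fun e => ?_⟩
  rw [nuPr_and]
  have := SS e.1.1 e.1.2 e.2.ne e (Or.inl ⟨rfl, rfl⟩)
  linarith
end

section
/- Let Σ be a finite alphabet, let P ⊆ Σ^m be non-degenerate, and let Φ ⊆ {(φ,…,φ) : φ ∈ Sym(Σ)} be a set of diagonal tuples of permutations of Σ. If P is (1,Φ)-trivial but not Φ-trivial, then one of the following holds: (i) P is vulnerable; or (ii) |Σ| = 2 and there is a polymorphism f_1,…,f_m : Σ² → Σ of P in which every f_i is unanimous and non-dictatorial. -/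
/-- `f₁,…,f_m : Σ^p → Σ` constitute a polymorphism of the predicate `P ⊆ Σ^m`. -/
def IsPolymorphismOf {α : Type*} {m p : ℕ} (P : Set (Fin m → α))
    (f : Fin m → (Fin p → α) → α) : Prop :=
  ∀ xs : Fin p → Fin m → α, (∀ k, xs k ∈ P) →
    (fun i => f i (fun k => xs k i)) ∈ P

/-- A certificate for `P`: a partial mapping (encoded via `Option`) forcing membership. -/
def IsCert {α : Type*} {m : ℕ} (P : Set (Fin m → α)) (ρ : Fin m → Option α) : Prop :=
  ∀ x : Fin m → α, (∀ i σ, ρ i = some σ → x i = σ) → x ∈ P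

/-- The functions `f₁,…,f_m` conform to the partial mapping `ρ`. -/
def Conforms {α : Type*} {m p : ℕ} (f : Fin m → (Fin p → α) → α)
    (ρ : Fin m → Option α) : Prop :=
  ∀ i σ, ρ i = some σ → ∀ x, f i x = σ

/-- The functions `f₁,…,f_m` are dictatorial with respect to `Φ`. -/
def IsDictatorial {α : Type*} {m p : ℕ} (Φ : Set (Fin m → Equiv.Perm α))
    (f : Fin m → (Fin p → α) → α) : Prop :=
  ∃ k : Fin p, ∃ φ ∈ Φ, ∀ i x, f i x = φ i (x k)

/-- `P` is `(p,Φ)`-trivial. -/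
def TrivialAt {α : Type*} {m : ℕ} (P : Set (Fin m → α))
    (Φ : Set (Fin m → Equiv.Perm α)) (p : ℕ) : Prop :=
  ∀ f : Fin m → (Fin p → α) → α, IsPolymorphismOf P f →
    IsDictatorial Φ f ∨ ∃ ρ, IsCert P ρ ∧ Conforms f ρ

/-- `P` is `Φ`-trivial: `(p,Φ)`-trivial for every `p ≥ 1`. -/
def PhiTrivial {α : Type*} {m : ℕ} (P : Set (Fin m → α))
    (Φ : Set (Fin m → Equiv.Perm α)) : Prop :=
  ∀ p : ℕ, 1 ≤ p → TrivialAt P Φ p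

/-- `P` is non-degenerate: full projections, and `P` depends on all coordinates. -/
def NonDegenerate {α : Type*} {m : ℕ} (P : Set (Fin m → α)) : Prop :=
  (∀ i : Fin m, ∀ σ : α, ∃ x ∈ P, x i = σ) ∧
  (∀ i : Fin m, ∃ x ∈ P, ∃ y ∉ P, ∀ j, j ≠ i → x j = y j)

/-- `P` is vulnerable: some value of some coordinate forces membership in `P`. -/
def Vulnerable {α : Type*} {m : ℕ} (P : Set (Fin m → α)) : Prop :=
  ∃ i : Fin m, ∃ σ : α, ∀ x : Fin m → α, x i = σ → x ∈ P

/-- A binary function is unanimous. -/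
def Unanimous {α : Type*} (g : (Fin 2 → α) → α) : Prop :=
  ∀ σ : α, g (fun _ => σ) = σ

/-- A binary function is dictatorial: it is a function of a single one of its
two coordinates. -/
def IsDictFn {α : Type*} (g : (Fin 2 → α) → α) : Prop :=
  ∃ k : Fin 2, ∃ u : α → α, ∀ x, g x = u (x k)

section Helpers

theorem aux_vul {α : Type*} [Nonempty α] {m : ℕ} {P : Set (Fin m → α)} {ρ : Fin m → Option α}
    (hρ : IsCert P ρ) (i : Fin m) (h : ∀ j, j ≠ i → ρ j = none) : Vulnerable P := by
  classical
  cases hi : ρ i with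
  | none =>
    refine ⟨i, Classical.arbitrary α, fun x _ => hρ x ?_⟩
    intro j σ hj
    by_cases hji : j = i
    · subst hji; simp [hi] at hj
    · simp [h j hji] at hj
  | some s =>
    refine ⟨i, s, fun x hx => hρ x ?_⟩
    intro j σ hj
    by_cases hji : j = i
    · subst hji; rw [hi] at hj; rw [hx]; exact Option.some.inj hj
    · simp [h j hji] at hj

theorem aux_cert {α : Type*} {m : ℕ} {P : Set (Fin m → α)} {ρ : Fin m → Option α}
    (hnd : NonDegenerate P) (i0 : Fin m) (hρ : IsCert P ρ) : ∃ i σ, ρ i = some σ := by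
  by_contra hc
  push Not at hc
  obtain ⟨x, _, y, hy, _⟩ := hnd.2 i0
  exact hy (hρ y fun i σ h => absurd h (hc i σ))

theorem aux_two {α : Type*} {m : ℕ} {P : Set (Fin m → α)}
    (hnd : NonDegenerate P) (i : Fin m) : ∃ j, j ≠ i := by
  by_contra hc
  push Not at hc
  obtain ⟨x, _, y, hy, _⟩ := hnd.2 i
  obtain ⟨z, hz, hzi⟩ := hnd.1 i (y i)
  apply hy
  have : z = y := by
    funext j; rw [hc j]; exact hzi
  rwa [← this]

theorem aux_nontrivial {α : Type*} {m : ℕ} {P : Set (Fin m → α)}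
    (hnd : NonDegenerate P) (i : Fin m) : Nontrivial α := by
  obtain ⟨x, hx, y, hy, _⟩ := hnd.2 i
  by_contra hc
  rw [not_nontrivial_iff_subsingleton] at hc
  exact hy (Subsingleton.elim x y ▸ hx)

/-- unary triviality, weakened -/
theorem aux_unary {α : Type*} {m : ℕ} {P : Set (Fin m → α)} {Φ : Set (Fin m → Equiv.Perm α)}
    (hΦ : ∀ φ ∈ Φ, ∀ i j : Fin m, φ i = φ j) (h1 : TrivialAt P Φ 1) (i0 : Fin m)
    (u : Fin m → α → α) (hu : ∀ x ∈ P, (fun i => u i (x i)) ∈ P) :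
    (∃ φ : Equiv.Perm α, ∀ i a, u i a = φ a) ∨
    ∃ ρ, IsCert P ρ ∧ ∀ i σ, ρ i = some σ → ∀ a, u i a = σ := by
  rcases h1 (fun i v => u i (v 0)) (fun xs hxs => hu _ (hxs 0)) with ⟨k, φ, hφ, h⟩ | ⟨ρ, hρ, h⟩
  · left
    refine ⟨φ i0, fun i a => ?_⟩
    rw [hΦ φ hφ i0 i]
    exact h i (fun _ => a)
  · right
    exact ⟨ρ, hρ, fun i σ hi a => h i σ hi (fun _ => a)⟩

theorem aux_caseB {α : Type*} {m : ℕ} {P : Set (Fin m → α)} {Φ : Set (Fin m → Equiv.Perm α)}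
    (hΦ : ∀ φ ∈ Φ, ∀ i j : Fin m, φ i = φ j) (hnd : NonDegenerate P)
    (h1 : TrivialAt P Φ 1) (i0 : Fin m) {n : ℕ} (hn : 1 ≤ n) (hT : TrivialAt P Φ n)
    (f : Fin m → (Fin (n + 1) → α) → α) (hf : IsPolymorphismOf P f)
    (hfd : ¬ IsDictatorial Φ f) (hfc : ¬ ∃ ρ, IsCert P ρ ∧ Conforms f ρ)
    (hv : ¬ Vulnerable P) (k : Fin (n + 1)) :
    ∃ ys : Fin n → Fin m → α, (∀ l, ys l ∈ P) ∧ ∃ φ : Equiv.Perm α, ∀ i a,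
      f i (k.insertNth a (fun l => ys l i)) = φ a := by
  classical
  by_contra hno
  push Not at hno
  haveI := aux_nontrivial hnd i0
  -- polymorphisms from choices
  have key : ∀ g : Fin m → (Fin n → α) → α,
      (∀ i v c, (∀ a, f i (k.insertNth a v) = c) → g i v = c) → IsPolymorphismOf P g := by
    intro g hg ys hys
    rcases aux_unary hΦ h1 i0 (fun i a => f i (k.insertNth a (fun l => ys l i))) (by
      intro x hx
      have := hf (k.insertNth (α := fun _ => Fin m → α) x ys) (by
        intro q
        refine Fin.succAboveCases k ?_ ?_ q
        · simpa using hx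
        · intro l; simpa using hys l)
      convert this using 3 with i
      funext q
      refine Fin.succAboveCases k ?_ ?_ q
      · simp
      · intro l; simp) with ⟨φ, h⟩ | ⟨ρ, hρ, h⟩
    · obtain ⟨i, a, h'⟩ := hno ys hys φ
      exact absurd (h i a) h'
    · exact hρ _ fun i σ hi => hg i _ σ (h i σ hi)
  have ex : ∀ i, ∃ g : (Fin n → α) → α,
      (∀ v c, (∀ a, f i (k.insertNth a v) = c) → g v = c) ∧
      ((∃ v, ¬ ∃ c, ∀ a, f i (k.insertNth a v) = c) → ¬ ∃ c, ∀ v, g v = c) := by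
    intro i
    obtain ⟨a0⟩ : Nonempty α := inferInstance
    let g0 : (Fin n → α) → α := fun v => f i (k.insertNth a0 v)
    have hg0 : ∀ v c, (∀ a, f i (k.insertNth a v) = c) → g0 v = c := fun v c h => h a0
    by_cases hc : ∃ c, ∀ v, g0 v = c
    · obtain ⟨d, hd⟩ := hc
      by_cases hS : ∃ v, ¬ ∃ c, ∀ a, f i (k.insertNth a v) = c
      · obtain ⟨v0, hv0⟩ := hS
        obtain ⟨b, hb⟩ := exists_ne d
        refine ⟨Function.update g0 v0 b, ?_, ?_⟩
        · intro v c h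
          by_cases hvv : v = v0
          · subst hvv; exact absurd ⟨c, h⟩ hv0
          · rw [Function.update_of_ne hvv]; exact hg0 v c h
        · rintro - ⟨c, hc⟩
          haveI : Nonempty (Fin n) := ⟨⟨0, hn⟩⟩
          obtain ⟨v1, hv1⟩ := exists_ne v0
          have e1 := hc v0
          have e2 := hc v1
          rw [Function.update_self] at e1
          rw [Function.update_of_ne hv1, hd] at e2
          exact hb (e1.trans e2.symm)
      · exact ⟨g0, hg0, fun h => absurd h hS⟩
    · exact ⟨g0, hg0, fun _ => hc⟩
  choose g hg1 hg2 using ex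
  rcases hT g (key g hg1) with ⟨l, φ, hφ, h⟩ | ⟨ρ, hρ, h⟩
  · by_cases hS : ∃ i v, ¬ ∃ c, ∀ a, f i (k.insertNth a v) = c
    · obtain ⟨i, v0, hv0⟩ := hS
      obtain ⟨b, hb⟩ := exists_ne (g i v0)
      obtain ⟨j, hj⟩ := aux_two hnd i
      let g' := Function.update g i (Function.update (g i) v0 b)
      have hg'j : ∀ j, j ≠ i → g' j = g j := fun j hj => Function.update_of_ne hj _ _
      have hg'i : g' i = Function.update (g i) v0 b := Function.update_self _ _ _
      have hg' : IsPolymorphismOf P g' := by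
        apply key
        intro q v c hc
        by_cases hq : q = i
        · subst hq
          rw [hg'i]
          by_cases hvv : v = v0
          · subst hvv; exact absurd ⟨c, hc⟩ hv0
          · rw [Function.update_of_ne hvv]; exact hg1 q v c hc
        · rw [hg'j q hq]; exact hg1 q v c hc
      rcases hT g' hg' with ⟨l', φ', hφ', h'⟩ | ⟨ρ, hρ, h'⟩
      · have e1 := h' i v0
        rw [hg'i, Function.update_self] at e1
        have e2 := h' j v0
        rw [hg'j j hj, h j v0] at e2
        apply hb
        rw [e1, h i v0, hΦ φ hφ i j, e2, hΦ φ' hφ' i j]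
      · apply hv
        refine aux_vul hρ i fun q hq => ?_
        cases hρq : ρ q with
        | none => rfl
        | some s =>
          exfalso
          have := h' q s hρq
          rw [hg'j q hq] at this
          obtain ⟨a, b, hab⟩ := exists_pair_ne α
          have e1 := this (fun _ => a)
          have e2 := this (fun _ => b)
          rw [h] at e1 e2
          exact hab ((φ q).injective (e1.trans e2.symm))
    · push Not at hS
      apply hfd
      refine ⟨k.succAbove l, φ, hφ, fun i x => ?_⟩
      obtain ⟨c, hc⟩ := hS i (k.removeNth x)
      have e1 := hc (x k)
      rw [Fin.insertNth_self_removeNth] at e1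
      rw [e1, ← hg1 i _ c hc, h]
      rfl
  · apply hfc
    refine ⟨ρ, hρ, fun i σ hi x => ?_⟩
    have hh : ∀ v, ∃ c, ∀ a, f i (k.insertNth a v) = c := by
      by_contra hS
      push Not at hS
      apply hg2 i
      · obtain ⟨v, hv⟩ := hS
        exact ⟨v, by push Not; exact hv⟩
      · exact ⟨σ, h i σ hi⟩
    obtain ⟨c, hc⟩ := hh (k.removeNth x)
    have e1 := hc (x k)
    rw [Fin.insertNth_self_removeNth] at e1
    rw [e1, ← hg1 i _ c hc, h i σ hi]

theorem aux_D {α : Type*} {m : ℕ} {P : Set (Fin m → α)} {Φ : Set (Fin m → Equiv.Perm α)}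
    (hnd : NonDegenerate P) (i0 : Fin m) {n : ℕ} (hT : TrivialAt P Φ n)
    (f : Fin m → (Fin (n + 1) → α) → α) (hf : IsPolymorphismOf P f) (k : Fin (n + 1))
    (H : ∃ ys : Fin n → Fin m → α, (∀ l, ys l ∈ P) ∧ ∃ φ : Equiv.Perm α, ∀ i a,
      f i (k.insertNth a (fun l => ys l i)) = φ a) (q : Fin (n + 1)) (hq : q ≠ k) :
    ∃ (s : Fin m → α) (φ : Fin m → Equiv.Perm α), ∀ i x, x q = s i → f i x = φ i (x k) := by
  classical
  haveI := aux_nontrivial hnd i0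
  obtain ⟨a0, b0, hab⟩ := exists_pair_ne α
  obtain ⟨ys, hys, φ, h⟩ := H
  obtain ⟨j, rfl⟩ := Fin.exists_succAbove_eq hq
  set q := k.succAbove j with hqd
  have hp : IsPolymorphismOf P (fun i (v : Fin n → α) => f i (q.insertNth (ys j i) v)) := by
    intro xs hxs
    have := hf (q.insertNth (α := fun _ => Fin m → α) (ys j) xs) (by
        intro r
        refine Fin.succAboveCases q ?_ ?_ r
        · simpa using hys j
        · intro l; simpa using hxs l)
    convert this using 3 with i
    funext r
    refine Fin.succAboveCases q ?_ ?_ r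
    · simp
    · intro l; simp
  have hw : ∀ i a, f i (q.insertNth (ys j i)
      (q.removeNth (k.insertNth (α := fun _ => α) a (fun l => ys l i)))) = φ a := by
    intro i a
    rw [← h i a]
    congr 1
    have e := Fin.insertNth_self_removeNth q (k.insertNth (α := fun _ => α) a (fun l => ys l i))
    rw [hqd, Fin.insertNth_apply_succAbove] at e
    exact e
  rcases hT _ hp with ⟨l, χ, hχ, hd⟩ | ⟨ρ, hρ, hc⟩
  · have hl : q.succAbove l = k := by
      by_contra hne
      obtain ⟨r, hr⟩ := Fin.exists_succAbove_eq hne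
      have e : ∀ a, φ a = χ i0 (ys r i0) := by
        intro a
        rw [← hw i0 a]
        refine (hd i0 _).trans ?_
        simp only [Fin.removeNth]
        rw [← hr, Fin.insertNth_apply_succAbove]
      exact hab (φ.injective ((e a0).trans (e b0).symm))
    refine ⟨ys j, χ, fun i x hx => ?_⟩
    have e := hd i (q.removeNth x)
    simp only [← hx] at e
    rw [Fin.insertNth_self_removeNth] at e
    rw [e]
    simp only [Fin.removeNth, hl]
  · exfalso
    obtain ⟨i, σ, hi⟩ := aux_cert hnd i0 hρ
    have e : ∀ a, φ a = σ := by
      intro a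
      rw [← hw i a]
      exact hc i σ hi _
    exact hab (φ.injective ((e a0).trans (e b0).symm))

theorem aux_inv {α : Type*} [Fintype α] {m : ℕ} {P : Set (Fin m → α)} (φ : Equiv.Perm α)
    (h : ∀ x ∈ P, (fun i => φ (x i)) ∈ P) : ∀ x ∈ P, (fun i => φ.symm (x i)) ∈ P := by
  classical
  intro x hx
  let F : P → P := fun x => ⟨fun i => φ (x.1 i), h x.1 x.2⟩
  have hF : Function.Injective F := by
    intro a b hab
    apply Subtype.ext
    funext i
    have := congrArg (fun z : P => z.1 i) hab
    exact φ.injective this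
  obtain ⟨⟨z, hz⟩, hzx⟩ := (Finite.injective_iff_surjective.mp hF) ⟨x, hx⟩
  have e : ∀ i, φ (z i) = x i := fun i => congrFun (congrArg Subtype.val hzx) i
  have : (fun i => φ.symm (x i)) = z := by
    funext i; rw [← e i]; simp
  rwa [this]

theorem aux_and {α : Type*} {m : ℕ} {P : Set (Fin m → α)} [Nontrivial α]
    (G : Fin m → α → α → α) (hG : ∀ x ∈ P, ∀ y ∈ P, (fun i => G i (x i) (y i)) ∈ P)
    (c : Fin m → α) (hcc : ∀ i s, G i s s = s) (hs : ∀ i s, s ≠ c i → G i (c i) s = s)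
    (hs' : ∀ i s, s ≠ c i → G i s (c i) = s) :
    ∃ f : Fin m → (Fin 2 → α) → α,
        IsPolymorphismOf P f ∧ ∀ i, Unanimous (f i) ∧ ¬ IsDictFn (f i) := by
  refine ⟨fun i v => G i (v 0) (v 1), fun xs hxs => hG _ (hxs 0) _ (hxs 1), fun i => ⟨fun s => hcc i s, ?_⟩⟩
  rintro ⟨k, u, hu⟩
  obtain ⟨s, hsc⟩ := exists_ne (c i)
  have e0 := hu ![c i, c i]
  have e1 := hu ![c i, s]
  have e2 := hu ![s, c i]
  simp [hs i s hsc, hs' i s hsc, hcc] at e0 e1 e2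
  fin_cases k
  · simp at e0 e1
    exact hsc (e1.trans e0.symm)
  · simp at e0 e2
    exact hsc (e2.trans e0.symm)

theorem aux_diag {α : Type*} [Fintype α] [Nontrivial α] {m : ℕ} {P : Set (Fin m → α)}
    (i0 : Fin m)
    (hU : ∀ u : Fin m → α → α, (∀ x ∈ P, (fun i => u i (x i)) ∈ P) →
      (∃ φ : Equiv.Perm α, ∀ i a, u i a = φ a) ∨ ∃ i σ, ∀ a, u i a = σ)
    (τ : α → Fin m → α) (hP : ∀ x, x ∈ P ↔ ∃ a, τ a = x)
    (hb : ∀ j, Function.Bijective (fun a => τ a j)) :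
    Fintype.card α = 2 ∧ ∃ f : Fin m → (Fin 2 → α) → α,
        IsPolymorphismOf P f ∧ ∀ i, Unanimous (f i) ∧ ¬ IsDictFn (f i) := by
  classical
  choose inv hinv using fun j => (hb j).2
  have hinv' : ∀ j a, inv j (τ a j) = a := fun j a => (hb j).1 (hinv j (τ a j))
  have hcard : Fintype.card α = 2 := by
    have h1 : 1 < Fintype.card α := Fintype.one_lt_card
    by_contra hne
    have h2 : 2 < Fintype.card α := by omega
    obtain ⟨a, b, c, hab, hac, hbc⟩ := Fintype.two_lt_card_iff.mp h2
    let e : α → α := fun s => if s = a then a else b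
    rcases hU (fun j s => τ (e (inv j s)) j) (by
      intro x hx
      obtain ⟨s, rfl⟩ := (hP x).1 hx
      simp only [hinv']
      exact (hP _).2 ⟨_, rfl⟩) with ⟨φ, h⟩ | ⟨i, σ, h⟩
    · have e1 := h i0 (τ b i0)
      have e2 := h i0 (τ c i0)
      simp only [hinv', e, if_neg hab.symm, if_neg hac.symm] at e1 e2
      exact hbc ((hb i0).1 (φ.injective (e1.symm.trans e2)))
    · have e1 := h (τ a i)
      have e2 := h (τ b i)
      simp only [hinv', e, if_neg hab.symm, if_true] at e1 e2
      exact hab ((hb i).1 (e1.trans e2.symm))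
  refine ⟨hcard, ?_⟩
  obtain ⟨c, d, hcd⟩ := exists_pair_ne α
  have htwo : ∀ s, s = c ∨ s = d := by
    intro s
    by_contra hh
    push Not at hh
    have : 2 < Fintype.card α := Fintype.two_lt_card_iff.mpr ⟨s, c, d, hh.1, hh.2, hcd⟩
    omega
  have hne : ∀ i, τ c i ≠ τ d i := fun i h => hcd ((hb i).1 h)
  have htwo' : ∀ i s, s ≠ τ c i → s = τ d i := by
    intro i s hs
    obtain ⟨a, rfl⟩ := (hb i).2 s
    rcases htwo a with rfl | rfl
    · exact absurd rfl hs
    · rfl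
  refine aux_and (fun i a b => if a = τ c i ∧ b = τ c i then τ c i else τ d i) ?_ (τ c) ?_ ?_ ?_
  · intro x hx y hy
    obtain ⟨a, rfl⟩ := (hP x).1 hx
    obtain ⟨b, rfl⟩ := (hP y).1 hy
    have hin : ∀ (s t : α) i, τ s i = τ t i ↔ s = t := fun s t i => (hb i).1.eq_iff
    simp only [hin]
    by_cases h : a = c ∧ b = c
    · simp only [h, and_self, if_true]; exact (hP _).2 ⟨_, rfl⟩
    · simp only [h, if_false]; exact (hP _).2 ⟨_, rfl⟩
  · intro i s
    by_cases h : s = τ c i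
    · simp [h]
    · simp [h, (htwo' i s h).symm]
  · intro i s h
    simp [h, (htwo' i s h).symm]
  · intro i s h
    simp [h, (htwo' i s h).symm]

theorem aux_binary {α : Type*} [Fintype α] {m : ℕ} {P : Set (Fin m → α)}
    (hnd : NonDegenerate P) (i0 : Fin m) (hv : ¬ Vulnerable P)
    (hU : ∀ u : Fin m → α → α, (∀ x ∈ P, (fun i => u i (x i)) ∈ P) →
      (∃ φ : Equiv.Perm α, ∀ i a, u i a = φ a) ∨
        ∃ ρ, IsCert P ρ ∧ ∀ i σ, ρ i = some σ → ∀ a, u i a = σ)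
    (F : Fin m → α → α → α) (hF : ∀ x ∈ P, ∀ y ∈ P, (fun i => F i (x i) (y i)) ∈ P)
    (x y : Fin m → α) (hx : x ∈ P) (hy : y ∈ P) (φ ψ : Equiv.Perm α)
    (hφ : ∀ i a, F i a (y i) = φ a) (hψ : ∀ i b, F i (x i) b = ψ b) :
    Fintype.card α = 2 ∧ ∃ f : Fin m → (Fin 2 → α) → α,
        IsPolymorphismOf P f ∧ ∀ i, Unanimous (f i) ∧ ¬ IsDictFn (f i) := by
  classical
  haveI := aux_nontrivial hnd i0
  have hU' : ∀ u : Fin m → α → α, (∀ x ∈ P, (fun i => u i (x i)) ∈ P) →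
      (∃ φ : Equiv.Perm α, ∀ i a, u i a = φ a) ∨ ∃ i σ, ∀ a, u i a = σ := by
    intro u hu
    rcases hU u hu with h | ⟨ρ, hρ, h⟩
    · exact Or.inl h
    · obtain ⟨i, σ, hi⟩ := aux_cert hnd i0 hρ
      exact Or.inr ⟨i, σ, h i σ hi⟩
  have hψP : ∀ z ∈ P, (fun i => ψ (z i)) ∈ P := by
    intro z hz
    simpa only [hψ] using hF x hx z hz
  have hφP : ∀ z ∈ P, (fun i => φ (z i)) ∈ P := by
    intro z hz
    simpa only [hφ] using hF z hz y hy
  let T : Set (Fin m → α) := {z | z ∈ P ∧ ∃ χ : Equiv.Perm α, ∀ i a, F i a (z i) = χ a}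
  let C : Fin m → α → Prop := fun i σ => ∀ a, F i a σ = ψ σ
  have hC : ∀ i σ c, (∀ a, F i a σ = c) → C i σ := by
    intro i σ c h a
    rw [h a, ← h (x i), hψ]
  have hyT : y ∈ T := ⟨hy, φ, hφ⟩
  have hTC : ∀ z ∈ T, ∀ i, ¬ C i (z i) := by
    rintro z ⟨_, χ, h⟩ i hc
    obtain ⟨a, b, hab⟩ := exists_pair_ne α
    apply hab
    apply χ.injective
    rw [← h i a, ← h i b, hc, hc]
  have hdist : ∀ z ∈ T, ∀ w ∈ T, ∀ i, z i = w i → z = w := by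
    rintro z ⟨_, χ, h⟩ w ⟨_, χ', h'⟩ i hi
    have e : ∀ a, χ a = χ' a := fun a => by rw [← h i a, ← h' i a, hi]
    funext j
    apply ψ.injective
    rw [← hψ j, ← hψ j, h, h', e]
  have key : ∀ g : Fin m → α → α, (∀ i σ, C i σ → g i σ = ψ σ) →
      (∀ z ∈ T, (fun i => g i (z i)) ∈ P) → ∀ z ∈ P, (fun i => g i (z i)) ∈ P := by
    intro g hg1 hg2 z hz
    rcases hU (fun i a => F i a (z i)) (fun w hw => hF w hw z hz) with ⟨χ, h⟩ | ⟨ρ, hρ, h⟩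
    · exact hg2 z ⟨hz, χ, h⟩
    · refine hρ _ fun i σ hi => ?_
      have hc := hC i (z i) σ (h i σ hi)
      rw [hg1 i _ hc, ← hc (x i)]
      exact h i σ hi _
  have hcover : ∀ i σ, C i σ ∨ ∃ z ∈ T, z i = σ := by
    intro i σ
    by_contra hcon
    push Not at hcon
    obtain ⟨hc, hz⟩ := hcon
    obtain ⟨b, hb⟩ := exists_ne (ψ σ)
    obtain ⟨j, hj⟩ := aux_two hnd i
    let g : Fin m → α → α := fun i' s => if i' = i ∧ s = σ then b else ψ s
    have hgj : ∀ j, j ≠ i → ∀ s, g j s = ψ s := fun j hj s => by simp [g, hj]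
    have hgs : g i σ = b := by simp [g]
    rcases hU g (key g (by
        intro i' s hs
        have : ¬ (i' = i ∧ s = σ) := by rintro ⟨rfl, rfl⟩; exact hc hs
        simp [g, this]) (by
        intro z hzT
        have : (fun i => g i (z i)) = fun i => ψ (z i) := by
          funext i'
          have : ¬ (i' = i ∧ z i' = σ) := by rintro ⟨rfl, h⟩; exact hz z hzT h
          simp only [g, this, if_false]
        rw [this]
        exact hψP z hzT.1)) with ⟨χ, h⟩ | ⟨ρ, hρ, h⟩
    · apply hb
      rw [← hgs, h i σ, ← h j σ, hgj j hj]
    · apply hv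
      refine aux_vul hρ i fun q hq => ?_
      cases hρq : ρ q with
      | none => rfl
      | some s =>
        exfalso
        have := h q s hρq
        obtain ⟨a, b, hab⟩ := exists_pair_ne α
        have e1 := this a
        have e2 := this b
        rw [hgj q hq] at e1 e2
        exact hab (ψ.injective (e1.trans e2.symm))
  by_cases hT1 : ∃ t ∈ T, t ≠ y
  · obtain ⟨t, htT, hty⟩ := hT1
    let g : Fin m → α → α := fun i s => if C i s then ψ s else ψ (y i)
    rcases hU' g (key g (by intro i s hs; simp only [g, hs, if_true]) (by
        intro z hzT
        have : (fun i => g i (z i)) = fun i => ψ (y i) := by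
          funext i
          simp only [g, hTC z hzT i, if_false]
        rw [this]
        exact hψP y hy)) with ⟨χ, h⟩ | ⟨i, σ0, h⟩
    · exfalso
      have e1 := h i0 (t i0)
      have e2 := h i0 (y i0)
      simp only [g, hTC t htT i0, hTC y hyT i0, if_false] at e1 e2
      exact hty (hdist t htT y hyT i0 (χ.injective (e1.symm.trans e2)))
    · have hnC : ∀ σ, ¬ C i σ := by
        intro σ hσ
        have e1 := h σ
        have e2 := h (y i)
        simp only [g, hTC y hyT i, if_false] at e2
        simp only [g, hσ, if_true] at e1
        have : σ = y i := ψ.injective (e1.trans e2.symm)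
        exact hTC y hyT i (this ▸ hσ)
      have hex : ∀ σ, ∃ z ∈ T, z i = σ := fun σ => (hcover i σ).resolve_left (hnC σ)
      choose τ hτT hτi using hex
      have hb : ∀ j, Function.Bijective (fun a => τ a j) := by
        intro j
        have hinj : Function.Injective (fun a => τ a j) := by
          intro a b hab
          have := hdist _ (hτT a) _ (hτT b) j hab
          rw [← hτi a, ← hτi b, this]
        exact ⟨hinj, Finite.injective_iff_surjective.mp hinj⟩
      refine aux_diag i0 hU' τ ?_ hb
      intro w
      constructor
      · intro hw
        have hwT : w ∈ T := by
          rcases hU' (fun i a => F i a (w i)) (fun z hz => hF z hz w hw) with ⟨χ, h⟩ | ⟨j, σ, h⟩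
          · exact ⟨hw, χ, h⟩
          · exfalso
            obtain ⟨a, ha⟩ := (hb j).2 (w j)
            have hc := hC j (w j) σ h
            apply hTC (τ a) (hτT a) j
            have ha' : τ a j = w j := ha
            rw [ha']; exact hc
        exact ⟨w i, hdist _ (hτT _) _ hwT i (hτi _)⟩
      · rintro ⟨a, rfl⟩
        exact (hτT a).1
  · push Not at hT1
    have hconst : ∀ i σ, σ ≠ y i → ∀ a, F i a σ = ψ σ := by
      intro i σ hσ
      rcases hcover i σ with h | ⟨z, hz, hzi⟩
      · exact h
      · rw [hT1 z hz] at hzi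
        exact absurd hzi.symm hσ
    have hxy : ∀ i, φ (x i) = ψ (y i) := fun i => by rw [← hφ i, hψ]
    refine ⟨?_, ?_⟩
    · have h1 : 1 < Fintype.card α := Fintype.one_lt_card
      by_contra hne
      have h2 : 2 < Fintype.card α := by omega
      obtain ⟨s, hs⟩ := exists_ne (x i0)
      obtain ⟨x', hx', hxs⟩ := hnd.1 i0 s
      rcases hU' (fun i b => F i (x' i) b) (fun z hz => hF x' hx' z hz) with ⟨χ, h⟩ | ⟨j, σ, h⟩
      · obtain ⟨σ', hσ'⟩ := ψ.surjective (φ (x' i0))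
        have hne' : σ' ≠ y i0 := by
          rintro rfl
          rw [← hxy] at hσ'
          exact hs (hxs ▸ (φ.injective hσ').symm)
        have e1 := h i0 (y i0)
        have e2 := h i0 σ'
        simp only [hφ, hconst i0 σ' hne'] at e1 e2
        exact hne' (χ.injective (by rw [← e1, ← e2, hσ']))
      · have : ∃ a b, a ≠ b ∧ a ≠ y j ∧ b ≠ y j := by
          obtain ⟨a, b, c, hab, hac, hbc⟩ := Fintype.two_lt_card_iff.mp h2
          by_cases ha : a = y j
          · exact ⟨b, c, hbc, ha ▸ hab.symm, ha ▸ hac.symm⟩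
          · by_cases hb : b = y j
            · exact ⟨a, c, hac, ha, hb ▸ hbc.symm⟩
            · exact ⟨a, b, hab, ha, hb⟩
        obtain ⟨a, b, hab, ha, hb⟩ := this
        have e1 := h a
        have e2 := h b
        simp only [hconst j a ha, hconst j b hb] at e1 e2
        exact hab (ψ.injective (e1.trans e2.symm))
    · have hφi := aux_inv φ hφP
      have hψi := aux_inv ψ hψP
      have hh : ∀ i s a, s ≠ ψ (y i) → F i a (ψ.symm s) = s := by
        intro i s a hs
        rw [hconst i _ (by rintro h; exact hs (by rw [← h]; simp))]
        simp
      refine aux_and (fun i a b => F i (φ.symm a) (ψ.symm b)) ?_ (fun i => ψ (y i)) ?_ ?_ ?_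
      · intro z hz w hw
        exact hF _ (hφi z hz) _ (hψi w hw)
      · intro i s
        by_cases hs : s = ψ (y i)
        · subst hs
          simp [hφ]
        · exact hh i s _ hs
      · intro i s hs
        exact hh i s _ hs
      · intro i s hs
        simp [hφ]

end Helpers

/-- if a non-degenerate `P` is `(1,Φ)`-trivial but not `Φ`-trivial, for a
diagonal `Φ`, then `P` is vulnerable or `|Σ| = 2` with an AND/OR-type polymorphism. -/
theorem stmt18 {α : Type*} [Fintype α] {m : ℕ}
    (P : Set (Fin m → α)) (Φ : Set (Fin m → Equiv.Perm α))
    (hΦ : ∀ φ ∈ Φ, ∀ i j : Fin m, φ i = φ j)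
    (hnd : NonDegenerate P)
    (h1 : TrivialAt P Φ 1)
    (hnt : ¬ PhiTrivial P Φ) :
    Vulnerable P ∨
      (Fintype.card α = 2 ∧ ∃ f : Fin m → (Fin 2 → α) → α,
        IsPolymorphismOf P f ∧ ∀ i, Unanimous (f i) ∧ ¬ IsDictFn (f i)) := by
  classical
  by_cases hv : Vulnerable P
  · exact Or.inl hv
  right
  rcases Nat.eq_zero_or_pos m with rfl | hm
  · exfalso
    apply hnt
    intro p hp f hf
    rcases h1 (fun i _ => i.elim0) (fun xs hxs => by
      convert hxs 0 using 1) with ⟨k, φ, hφ, h⟩ | ⟨ρ, hρ, h⟩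
    · exact Or.inl ⟨⟨0, hp⟩, φ, hφ, fun i => i.elim0⟩
    · exact Or.inr ⟨ρ, hρ, fun i => i.elim0⟩
  have i0 : Fin m := ⟨0, hm⟩
  haveI := aux_nontrivial hnd i0
  have hex : ∃ p, 1 ≤ p ∧ ¬ TrivialAt P Φ p := by
    unfold PhiTrivial at hnt
    push Not at hnt
    exact hnt
  obtain ⟨hp1, hpT⟩ := Nat.find_spec hex
  have hmin := fun q => @Nat.find_min _ _ hex q
  generalize Nat.find hex = p at hp1 hpT hmin
  obtain ⟨n, rfl⟩ : ∃ n, p = n + 1 := ⟨p - 1, by omega⟩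
  have hn : 1 ≤ n := by
    by_contra hc
    obtain rfl : n = 0 := by omega
    exact hpT h1
  have hT : TrivialAt P Φ n := by
    by_contra hc
    exact hmin n (by omega) ⟨hn, hc⟩
  unfold TrivialAt at hpT
  push Not at hpT
  obtain ⟨f, hf, hfd, hfc⟩ := hpT
  have H := aux_caseB hΦ hnd h1 i0 hn hT f hf hfd
    (by rintro ⟨ρ, h, h'⟩; exact hfc ρ h h') hv
  by_cases hn1 : n = 1
  · subst hn1
    obtain ⟨ys, hys, φ, hφ⟩ := H 0
    obtain ⟨xs, hxs, ψ, hψ⟩ := H 1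
    refine aux_binary hnd i0 hv (aux_unary hΦ h1 i0) (fun i a b => f i ![a, b]) ?_
      (xs 0) (ys 0) (hxs 0) (hys 0) φ ψ ?_ ?_
    · intro x hx y hy
      have := hf ![x, y] (by intro k; fin_cases k <;> simp [hx, hy])
      convert this using 3 with i
      funext k
      fin_cases k <;> rfl
    · intro i a
      rw [← hφ i a]
      congr 1
      funext k
      fin_cases k <;> rfl
    · intro i a
      rw [← hψ i a]
      congr 1
      funext k
      fin_cases k <;> rfl
  · exfalso
    obtain ⟨n, rfl⟩ : ∃ r, n = r + 2 := ⟨n - 2, by omega⟩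
    have h01 : (0 : Fin (n + 2 + 1)) ≠ 1 := by simp [Fin.ext_iff]
    have h02 : (0 : Fin (n + 2 + 1)) ≠ Fin.last _ := by simp [Fin.ext_iff]
    have h12 : (1 : Fin (n + 2 + 1)) ≠ Fin.last _ := by simp [Fin.ext_iff]
    obtain ⟨s, χ, hs⟩ := aux_D hnd i0 hT f hf 0 (H 0) (Fin.last _) h02.symm
    obtain ⟨t, θ, ht⟩ := aux_D hnd i0 hT f hf 1 (H 1) 0 h01
    have e : ∀ b, χ i0 (t i0) = θ i0 b := by
      intro b
      let v : Fin (n + 2 + 1) → α := fun k => if k = 0 then t i0 else if k = 1 then b else s i0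
      have v0 : v 0 = t i0 := by simp [v]
      have v1 : v 1 = b := by simp [v]
      have v2 : v (Fin.last _) = s i0 := by simp only [v, if_neg h02.symm, if_neg h12.symm]
      rw [← v0, ← hs i0 v v2, ht i0 v v0, v1]
    obtain ⟨a, b, hab⟩ := exists_pair_ne α
    exact hab ((θ i0).injective ((e a).symm.trans (e b)))
end
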